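/- arXiv:2206.02953 — 3 statements merged into one kernel-verified Lean document; each statement's English description precedes it below -/
import Mathlib

section
/- Let E be a real inner product space, n ≥ 2, and v₁, …, vₙ ∈ E with sample mean m = (1/n)·Σⱼ₌₁ⁿ vⱼ and sample variance σ² = (1/n)·Σⱼ₌₁ⁿ ‖vⱼ − m‖². For any i with 1 ≤ i ≤ n, averaging over all n! permutations τ of {1,…,n}: (1/n!)·Σ_τ (1/i)·Σⱼ₌₁ⁱ v_{τ(j)} = m, and (1/n!)·Σ_τ ‖(1/i)·Σⱼ₌₁ⁱ v_{τ(j)} − m‖² = ((n−i)/(n−1))·(σ²/i). -/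
/-- Summing `f (τ j)` over all permutations `τ` gives a multiple of `∑ k, f k`, independent of `j`. -/
theorem Equiv.Perm.card_smul_sum_apply {ι M : Type*} [Fintype ι] [DecidableEq ι]
    [AddCommMonoid M] (f : ι → M) (j : ι) :
    Fintype.card ι • ∑ τ : Equiv.Perm ι, f (τ j) = (Fintype.card ι).factorial • ∑ k, f k := by
  have hswap (k : ι) : ∑ τ : Equiv.Perm ι, f (τ k) = ∑ τ : Equiv.Perm ι, f (τ j) :=
    Fintype.sum_equiv (Equiv.mulRight (Equiv.swap j k)) _ _ fun τ => by simp
  calc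
    _ = ∑ k, ∑ τ : Equiv.Perm ι, f (τ k) := by simp [hswap]
    _ = ∑ τ : Equiv.Perm ι, ∑ k, f (τ k) := Finset.sum_comm
    _ = _ := by simp [Equiv.sum_comp, Fintype.card_perm]

section Centered

variable {ι E : Type*} [Fintype ι] [DecidableEq ι] [NormedAddCommGroup E] [InnerProductSpace ℝ E]

/-- The covariance, under a uniformly random permutation, of two distinct entries of a centered
family. -/
theorem card_sub_one_mul_sum_perm_inner {w : ι → E} (hw : ∑ k, w k = 0) {j k : ι} (hjk : k ≠ j) :
    ((Fintype.card ι : ℝ) - 1) * ∑ τ : Equiv.Perm ι, inner ℝ (w (τ j)) (w (τ k))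
      = -∑ τ : Equiv.Perm ι, ‖w (τ j)‖ ^ 2 := by
  have hswap (l : ι) (hl : l ∈ Finset.univ.erase j) :
      ∑ τ : Equiv.Perm ι, inner ℝ (w (τ j)) (w (τ l))
        = ∑ τ : Equiv.Perm ι, inner ℝ (w (τ j)) (w (τ k)) :=
    Fintype.sum_equiv (Equiv.mulRight (Equiv.swap k l)) _ _ fun τ => by
      simp [Equiv.swap_apply_of_ne_of_ne hjk.symm (Finset.ne_of_mem_erase hl).symm]
  have hzero : ∑ l, ∑ τ : Equiv.Perm ι, inner ℝ (w (τ j)) (w (τ l)) = 0 := by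
    rw [Finset.sum_comm]
    refine Finset.sum_eq_zero fun τ _ => ?_
    rw [← inner_sum, Equiv.sum_comp τ w, hw, inner_zero_right]
  rw [← Finset.add_sum_erase _ _ (Finset.mem_univ j), Finset.sum_congr rfl hswap,
    Finset.sum_const, Finset.card_erase_of_mem (Finset.mem_univ j), Finset.card_univ,
    nsmul_eq_mul, Nat.cast_sub (Fintype.card_pos_iff.2 ⟨j⟩)] at hzero
  simp only [real_inner_self_eq_norm_sq, Nat.cast_one] at hzero
  linarith

/-- The second moment of a partial sum of a randomly permuted centered family. -/
theorem card_mul_sum_perm_norm_sum_sq {w : ι → E} (hw : ∑ k, w k = 0) (s : Finset ι) :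
    (Fintype.card ι : ℝ) * ((Fintype.card ι : ℝ) - 1)
        * ∑ τ : Equiv.Perm ι, ‖∑ j ∈ s, w (τ j)‖ ^ 2
      = (Fintype.card ι).factorial * (s.card * ((Fintype.card ι : ℝ) - s.card))
        * ∑ k, ‖w k‖ ^ 2 := by
  have hsq (j : ι) : (Fintype.card ι : ℝ) * ∑ τ : Equiv.Perm ι, ‖w (τ j)‖ ^ 2
      = (Fintype.card ι).factorial * ∑ k, ‖w k‖ ^ 2 := by
    simpa only [nsmul_eq_mul] using Equiv.Perm.card_smul_sum_apply (fun k => ‖w k‖ ^ 2) j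
  have hrow (j : ι) (hj : j ∈ s) :
      (Fintype.card ι : ℝ) * ((Fintype.card ι : ℝ) - 1)
          * ∑ k ∈ s, ∑ τ : Equiv.Perm ι, inner ℝ (w (τ j)) (w (τ k))
        = ((Fintype.card ι : ℝ) - s.card)
          * ((Fintype.card ι).factorial * ∑ k, ‖w k‖ ^ 2) := by
    rw [← Finset.add_sum_erase _ _ hj, mul_add, mul_assoc _ _ (∑ k ∈ s.erase j, _),
      Finset.mul_sum (s.erase j),
      Finset.sum_congr rfl fun k hk =>
        card_sub_one_mul_sum_perm_inner hw (Finset.ne_of_mem_erase hk),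
      Finset.sum_const, Finset.card_erase_of_mem hj, nsmul_eq_mul,
      Nat.cast_sub (Finset.card_pos.2 ⟨j, hj⟩)]
    simp only [real_inner_self_eq_norm_sq, Nat.cast_one]
    rw [← hsq j]
    ring
  have hexpand : ∑ τ : Equiv.Perm ι, ‖∑ j ∈ s, w (τ j)‖ ^ 2
      = ∑ j ∈ s, ∑ k ∈ s, ∑ τ : Equiv.Perm ι, inner ℝ (w (τ j)) (w (τ k)) := by
    simp_rw [← real_inner_self_eq_norm_sq, sum_inner, inner_sum]
    rw [Finset.sum_comm]
    exact Finset.sum_congr rfl fun j _ => Finset.sum_comm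
  rw [hexpand, Finset.mul_sum, Finset.sum_congr rfl hrow, Finset.sum_const, nsmul_eq_mul]
  ring

end Centered

/-- Mean and variance of without-replacement sample averages: averaging over all `n!`
permutations `τ` of `{1,…,n}`, the average of the first `i` of the `v_{τ(j)}` has mean `m`
(the sample mean) and mean squared deviation `((n−i)/(n−1))·(σ²/i)`. -/
theorem stmt_4
    {E : Type*} [NormedAddCommGroup E] [InnerProductSpace ℝ E]
    (n : ℕ) (hn : 2 ≤ n) (v : Fin n → E) (i : ℕ) (hi1 : 1 ≤ i) (hin : i ≤ n)
    (m : E) (hm : m = (n : ℝ)⁻¹ • ∑ j, v j)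
    (σ2 : ℝ) (hσ2 : σ2 = (n : ℝ)⁻¹ * ∑ j, ‖v j - m‖ ^ 2) :
    ((n.factorial : ℝ)⁻¹ • ∑ τ : Equiv.Perm (Fin n),
        (i : ℝ)⁻¹ • ∑ j ∈ Finset.filter (fun j : Fin n => (j : ℕ) < i) Finset.univ, v (τ j)) = m
    ∧ (n.factorial : ℝ)⁻¹ * ∑ τ : Equiv.Perm (Fin n),
        ‖((i : ℝ)⁻¹ • ∑ j ∈ Finset.filter (fun j : Fin n => (j : ℕ) < i) Finset.univ, v (τ j)) - m‖ ^ 2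
      = ((n : ℝ) - i) / ((n : ℝ) - 1) * (σ2 / i) := by
  have hn0 : (n : ℝ) ≠ 0 := by positivity
  have hi0 : (i : ℝ) ≠ 0 := by positivity
  have hn1 : (n : ℝ) - 1 ≠ 0 := by
    have : (2 : ℝ) ≤ n := by exact_mod_cast hn
    linarith
  have hf0 : (n.factorial : ℝ) ≠ 0 := by positivity
  set s := Finset.filter (fun j : Fin n => (j : ℕ) < i) Finset.univ
  have hs : s.card = i := by
    simp [s, Fin.card_filter_val_lt, hin]
  have hmean (j : Fin n) : ∑ τ : Equiv.Perm (Fin n), v (τ j) = (n.factorial : ℝ) • m := by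
    have h := Equiv.Perm.card_smul_sum_apply v j
    simp only [Fintype.card_fin, ← Nat.cast_smul_eq_nsmul ℝ] at h
    rw [hm, smul_comm, ← h, inv_smul_smul₀ hn0]
  have hw : ∑ j, (v j - m) = 0 := by
    rw [Finset.sum_sub_distrib, Finset.sum_const, Finset.card_univ, Fintype.card_fin,
      ← Nat.cast_smul_eq_nsmul ℝ, hm, smul_inv_smul₀ hn0, sub_self]
  have hdev (τ : Equiv.Perm (Fin n)) :
      ‖(i : ℝ)⁻¹ • ∑ j ∈ s, v (τ j) - m‖ ^ 2
        = ((i : ℝ)⁻¹) ^ 2 * ‖∑ j ∈ s, (v (τ j) - m)‖ ^ 2 := by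
    have h : (i : ℝ)⁻¹ • ∑ j ∈ s, v (τ j) - m = (i : ℝ)⁻¹ • ∑ j ∈ s, (v (τ j) - m) := by
      rw [Finset.sum_sub_distrib, Finset.sum_const, hs, ← Nat.cast_smul_eq_nsmul ℝ, smul_sub,
        inv_smul_smul₀ hi0]
    rw [h, norm_smul, mul_pow, Real.norm_eq_abs, sq_abs]
  constructor
  · rw [← Finset.smul_sum, Finset.sum_comm, Finset.sum_congr rfl fun j _ => hmean j,
      Finset.sum_const, hs, ← Nat.cast_smul_eq_nsmul ℝ, inv_smul_smul₀ hi0, inv_smul_smul₀ hf0]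
  · have h := card_mul_sum_perm_norm_sum_sq hw s
    rw [Fintype.card_fin, hs] at h
    rw [Finset.sum_congr rfl fun τ _ => hdev τ, ← Finset.mul_sum, hσ2]
    field_simp
    linear_combination h
end

section
/- Let E be a finite-dimensional real inner product space, n ≥ 1, and ω₁, …, ωₙ : E → E l-Lipschitz maps whose average ν = (1/n)·Σᵢ ωᵢ is μ-strongly monotone with 0 < μ ≤ l; let z* be the unique root of ν and σ*² = (1/n)·Σᵢ ‖ωᵢ(z*)‖². Fix z₀ ∈ E, K ≥ 1, and 0 < α ≤ μ/(5nl²). For each K-tuple τ = (τ₁, …, τ_K) of permutations of {1,…,n}, the proximal-point-without-replacement iterates are well defined (each implicit update zᵏᵢ = zᵏᵢ₋₁ − α·ω_{τₖ(i)}(zᵏᵢ) has a unique solution since αl < 1), and, averaging over all (n!)^K tuples (Random Reshuffling), (1/(n!)^K)·Σ_τ ‖z^{K+1}₀(τ) − z*‖² ≤ 2·e^{−nαμK}·‖z₀ − z*‖² + l²σ*²α³n²K/μ. -/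
open scoped RealInnerProductSpace

/-- An affine contraction `x (1 + 7t/8) ≤ w + A` with small `t` yields a contraction of squares. -/
lemma sq_le_exp_neg_mul_sq_add {x w A t : ℝ} (hx : 0 ≤ x) (ht : 0 < t) (ht5 : t ≤ 1 / 5)
    (h : x * (1 + 7 / 8 * t) ≤ w + A) :
    x ^ 2 ≤ Real.exp (-t) * w ^ 2 + 2 / t * A ^ 2 := by
  have hexp : 1 - t ≤ Real.exp (-t) := by linarith [Real.add_one_le_exp (-t)]
  have hq : (0 : ℝ) < (1 + 7 / 8 * t) ^ 2 := by positivity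
  have h1 : x ^ 2 * (1 + 7 / 8 * t) ^ 2 ≤ (w + A) ^ 2 := by
    rw [← mul_pow]
    exact pow_le_pow_left₀ (by positivity) h 2
  have h2 : (w + A) ^ 2 ≤ (1 + t / 2) * w ^ 2 + (1 + 2 / t) * A ^ 2 := by
    have : (1 + t / 2) * w ^ 2 + (1 + 2 / t) * A ^ 2 - (w + A) ^ 2
        = (t * w - 2 * A) ^ 2 / (2 * t) := by
      field_simp
      ring
    have : 0 ≤ (t * w - 2 * A) ^ 2 / (2 * t) := by positivity
    linarith
  have h3 : 1 + t / 2 ≤ Real.exp (-t) * (1 + 7 / 8 * t) ^ 2 := by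
    have : 1 + t / 2 ≤ (1 - t) * (1 + 7 / 8 * t) ^ 2 := by
      nlinarith [mul_nonneg ht.le (sub_nonneg.2 ht5),
        mul_nonneg (mul_nonneg ht.le ht.le) (sub_nonneg.2 ht5)]
    exact this.trans (mul_le_mul_of_nonneg_right hexp hq.le)
  have h4 : 1 + 2 / t ≤ 2 / t * (1 + 7 / 8 * t) ^ 2 := by
    have : 2 / t * (1 + 7 / 8 * t) ^ 2 = 2 / t + 7 / 2 + 49 / 32 * t := by
      field_simp
      ring
    linarith
  refine le_of_mul_le_mul_right ?_ hq
  calc x ^ 2 * (1 + 7 / 8 * t) ^ 2 ≤ (1 + t / 2) * w ^ 2 + (1 + 2 / t) * A ^ 2 := h1.trans h2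
    _ ≤ (Real.exp (-t) * (1 + 7 / 8 * t) ^ 2) * w ^ 2
        + (2 / t * (1 + 7 / 8 * t) ^ 2) * A ^ 2 := by gcongr
    _ = _ := by ring

lemma sum_range_sub_succ_le (n : ℕ) :
    ∑ i ∈ Finset.range n, ((n - (i + 1) : ℕ) : ℝ) ≤ (n : ℝ) ^ 2 / 2 := by
  have hgauss : ∀ m : ℕ, ∑ i ∈ Finset.range m, (i : ℝ) ≤ (m : ℝ) ^ 2 / 2 := by
    intro m
    induction m with
    | zero => simp
    | succ m ih =>
      rw [Finset.sum_range_succ]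
      push_cast
      nlinarith
  refine le_of_eq_of_le ?_ (hgauss n)
  rw [← Finset.sum_range_reflect (fun i => (i : ℝ)) n]
  refine Finset.sum_congr rfl fun i _ => ?_
  congr 1
  omega

section Epoch

variable {E : Type*} [NormedAddCommGroup E] [InnerProductSpace ℝ E]

lemma eq_sub_smul_sum_range {n : ℕ} {g : ℕ → E → E} {α : ℝ} {y : ℕ → E}
    (hy : ∀ i < n, y (i + 1) = y i - α • g i (y (i + 1))) {i : ℕ} (hi : i ≤ n) :
    y i = y 0 - α • ∑ j ∈ Finset.range i, g j (y (j + 1)) := by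
  induction i with
  | zero => simp
  | succ i ih => rw [hy i hi, Finset.sum_range_succ, smul_add, ih (by omega), sub_sub]

/-- Summed distance of the iterates of one implicit pass to its endpoint. -/
lemma sum_norm_sub_endpoint_le {n : ℕ} {g : ℕ → E → E} {l α : ℝ} (hl : 0 ≤ l) (hα : 0 ≤ α)
    {zs : E} (hlip : ∀ j < n, ∀ z, ‖g j z - g j zs‖ ≤ l * ‖z - zs‖)
    (hroot : ∑ j ∈ Finset.range n, g j zs = 0)
    {y : ℕ → E} (hy : ∀ i < n, y (i + 1) = y i - α • g i (y (i + 1))) :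
    ∑ i ∈ Finset.range n, ‖y (i + 1) - y n‖ ≤
      α * ∑ i ∈ Finset.range n, ‖∑ j ∈ Finset.range (i + 1), g j zs‖
        + α * l * ((n : ℝ) ^ 2 / 2 * ‖y n - zs‖
          + n * ∑ i ∈ Finset.range n, ‖y (i + 1) - y n‖) := by
  set U := ∑ i ∈ Finset.range n, ‖y (i + 1) - y n‖ with hU
  have hterm : ∀ i ∈ Finset.range n, ‖y (i + 1) - y n‖ ≤
      α * ‖∑ j ∈ Finset.range (i + 1), g j zs‖
        + α * l * (((n - (i + 1) : ℕ) : ℝ) * ‖y n - zs‖ + U) := by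
    intro i hi
    have hi' : i + 1 ≤ n := Finset.mem_range.1 hi
    have heq : y (i + 1) - y n = -(α • ∑ j ∈ Finset.range (i + 1), g j zs)
        + α • ∑ j ∈ Finset.Ico (i + 1) n, (g j (y (j + 1)) - g j zs) := by
      rw [Finset.sum_sub_distrib, Finset.sum_Ico_eq_sub _ hi', Finset.sum_Ico_eq_sub _ hi', hroot,
        eq_sub_smul_sum_range hy hi',
        eq_sub_smul_sum_range hy le_rfl]
      module
    have hsum : ‖∑ j ∈ Finset.Ico (i + 1) n, (g j (y (j + 1)) - g j zs)‖
        ≤ l * (((n - (i + 1) : ℕ) : ℝ) * ‖y n - zs‖ + U) := by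
      calc _ ≤ ∑ j ∈ Finset.Ico (i + 1) n, ‖g j (y (j + 1)) - g j zs‖ := norm_sum_le _ _
        _ ≤ ∑ j ∈ Finset.Ico (i + 1) n, l * (‖y n - zs‖ + ‖y (j + 1) - y n‖) := by
          refine Finset.sum_le_sum fun j hj => ?_
          refine (hlip j (Finset.mem_Ico.1 hj).2 _).trans (mul_le_mul_of_nonneg_left ?_ hl)
          rw [add_comm ‖y n - zs‖]
          exact norm_sub_le_norm_sub_add_norm_sub _ _ _
        _ = l * (((n - (i + 1) : ℕ) : ℝ) * ‖y n - zs‖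
            + ∑ j ∈ Finset.Ico (i + 1) n, ‖y (j + 1) - y n‖) := by
          rw [← Finset.mul_sum, Finset.sum_add_distrib, Finset.sum_const, Nat.card_Ico,
            nsmul_eq_mul]
        _ ≤ _ := by
          gcongr
          refine Finset.sum_le_sum_of_subset_of_nonneg ?_ fun _ _ _ => norm_nonneg _
          intro j hj
          exact Finset.mem_range.2 (Finset.mem_Ico.1 hj).2
    calc ‖y (i + 1) - y n‖ ≤ ‖α • ∑ j ∈ Finset.range (i + 1), g j zs‖
        + ‖α • ∑ j ∈ Finset.Ico (i + 1) n, (g j (y (j + 1)) - g j zs)‖ := by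
          rw [heq]
          exact (norm_add_le _ _).trans_eq (by rw [norm_neg])
      _ ≤ _ := by
          rw [norm_smul, norm_smul, Real.norm_of_nonneg hα, mul_assoc α l]
          gcongr
  calc U ≤ _ := Finset.sum_le_sum hterm
    _ = α * ∑ i ∈ Finset.range n, ‖∑ j ∈ Finset.range (i + 1), g j zs‖
        + α * l * ((∑ i ∈ Finset.range n, ((n - (i + 1) : ℕ) : ℝ)) * ‖y n - zs‖ + n * U) := by
      rw [Finset.sum_add_distrib, ← Finset.mul_sum, ← Finset.mul_sum, Finset.sum_add_distrib,
        ← Finset.sum_mul, Finset.sum_const, Finset.card_range, nsmul_eq_mul]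
    _ ≤ _ := by
      gcongr
      exact sum_range_sub_succ_le n

/-- Progress of one pass of the incremental proximal point method. -/
lemma norm_sq_epoch_le {n : ℕ} (hn : 1 ≤ n) {g : ℕ → E → E} {l μ α : ℝ} (hμ : 0 < μ)
    (hμl : μ ≤ l) (hα0 : 0 < α) (hα : α ≤ μ / (5 * n * l ^ 2)) {zs : E}
    (hlip : ∀ j < n, ∀ z₁ z₂, ‖g j z₁ - g j z₂‖ ≤ l * ‖z₁ - z₂‖)
    (hroot : ∑ j ∈ Finset.range n, g j zs = 0)
    (hmono : ∀ z, n * μ * ‖z - zs‖ ^ 2 ≤ ⟪∑ j ∈ Finset.range n, g j z, z - zs⟫)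
    {y : ℕ → E} (hy : ∀ i < n, y (i + 1) = y i - α • g i (y (i + 1))) :
    ‖y n - zs‖ ^ 2 ≤ Real.exp (-(n * α * μ)) * ‖y 0 - zs‖ ^ 2
      + 25 / 8 * (α ^ 3 * l ^ 2 / μ) *
        ∑ i ∈ Finset.range n, ‖∑ j ∈ Finset.range (i + 1), g j zs‖ ^ 2 := by
  have hl : 0 < l := hμ.trans_le hμl
  have hn0 : (0 : ℝ) < n := by exact_mod_cast hn
  have hα' : 5 * n * l ^ 2 * α ≤ μ := by
    rw [le_div_iff₀ (by positivity)] at hα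
    linarith
  have hε : n * α * l ≤ 1 / 5 := by
    have : (n * α * l) * l ≤ 1 / 5 * l := by nlinarith
    exact le_of_mul_le_mul_right this hl
  have hε2 : (n * α * l) ^ 2 ≤ n * α * μ / 5 := by
    have := mul_le_mul_of_nonneg_left hα' (by positivity : 0 ≤ n * α / 5)
    linarith
  have ht5 : n * α * μ ≤ 1 / 5 := by
    have : n * α * μ ≤ n * α * l := by gcongr
    linarith
  have hU := sum_norm_sub_endpoint_le hl.le hα0.le (fun j hj z => hlip j hj z zs) hroot hy
  set U := ∑ i ∈ Finset.range n, ‖y (i + 1) - y n‖ with hUdef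
  set S := ∑ i ∈ Finset.range n, ‖∑ j ∈ Finset.range (i + 1), g j zs‖ with hS
  set d := ‖y n - zs‖ with hd
  have hU0 : 0 ≤ U := Finset.sum_nonneg fun _ _ => norm_nonneg _
  have hd0 : 0 ≤ d := norm_nonneg _
  have hU' : α * l * U ≤ 5 / 4 * (α ^ 2 * l * S) + n * α * μ / 8 * d := by
    have h1 : U * (4 / 5) ≤ α * S + α * l * (n ^ 2 / 2 * d) := by nlinarith
    have h2 := mul_le_mul_of_nonneg_left h1 (by positivity : 0 ≤ α * l * (5 / 4))
    have h3 := mul_le_mul_of_nonneg_right hε2 hd0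
    nlinarith
  set e := ∑ j ∈ Finset.range n, (g j (y (j + 1)) - g j (y n)) with he
  have heU : ‖e‖ ≤ l * U := by
    rw [hUdef, Finset.mul_sum]
    exact (norm_sum_le _ _).trans
      (Finset.sum_le_sum fun j hj => hlip j (Finset.mem_range.1 hj) _ _)
  have hdecomp : y 0 - zs = (y n - zs) + α • ∑ j ∈ Finset.range n, g j (y n) + α • e := by
    rw [he, Finset.sum_sub_distrib,
      sub_eq_iff_eq_add.1 (eq_sub_smul_sum_range hy le_rfl).symm]
    module
  have hinner : d * (d * (1 + n * α * μ)) ≤ d * (‖y 0 - zs‖ + α * ‖e‖) := by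
    have h1 : ⟪y 0 - zs, y n - zs⟫ = d ^ 2
        + α * ⟪∑ j ∈ Finset.range n, g j (y n), y n - zs⟫ + α * ⟪e, y n - zs⟫ := by
      rw [hdecomp, inner_add_left, inner_add_left, real_inner_smul_left, real_inner_smul_left,
        real_inner_self_eq_norm_sq]
    have h2 := real_inner_le_norm (y 0 - zs) (y n - zs)
    have h3 := mul_le_mul_of_nonneg_left (neg_le_of_abs_le (abs_real_inner_le_norm e (y n - zs)))
      hα0.le
    have h4 := mul_le_mul_of_nonneg_left (hmono (y n)) hα0.le
    rw [← hd] at h2 h3 h4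
    nlinarith
  have hlin : d * (1 + 7 / 8 * (n * α * μ)) ≤ ‖y 0 - zs‖ + 5 / 4 * (α ^ 2 * l * S) := by
    have hS0 : 0 ≤ S := Finset.sum_nonneg fun _ _ => norm_nonneg _
    rcases hd0.eq_or_lt with h | h
    · rw [← h]
      simp only [zero_mul]
      positivity
    · have h1 := le_of_mul_le_mul_left hinner h
      have h2 := mul_le_mul_of_nonneg_left heU hα0.le
      nlinarith
  have hcs : S ^ 2 ≤ n * ∑ i ∈ Finset.range n, ‖∑ j ∈ Finset.range (i + 1), g j zs‖ ^ 2 := by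
    simpa using sq_sum_le_card_mul_sum_sq (s := Finset.range n)
      (f := fun i => ‖∑ j ∈ Finset.range (i + 1), g j zs‖)
  refine (sq_le_exp_neg_mul_sq_add hd0 (by positivity) ht5 hlin).trans (add_le_add le_rfl ?_)
  calc 2 / (n * α * μ) * (5 / 4 * (α ^ 2 * l * S)) ^ 2
      = 25 / 8 * (α ^ 3 * l ^ 2 / μ) / n * S ^ 2 := by
        field_simp
        ring
    _ ≤ 25 / 8 * (α ^ 3 * l ^ 2 / μ) / n *
        (n * ∑ i ∈ Finset.range n, ‖∑ j ∈ Finset.range (i + 1), g j zs‖ ^ 2) := by gcongr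
    _ = _ := by
        field_simp

/-- Second moment of a partial sum of a centred family sampled without replacement. -/
lemma sum_perm_norm_sq_sum {ι : Type*} [Fintype ι] [DecidableEq ι] (a : ι → E)
    (ha : ∑ i, a i = 0) (T : Finset ι) :
    ((Fintype.card ι : ℝ) - 1) * Fintype.card ι
        * ∑ π : Equiv.Perm ι, ‖∑ j ∈ T, a (π j)‖ ^ 2
      = T.card * ((Fintype.card ι : ℝ) - T.card) *
        ((Fintype.card ι).factorial * ∑ i, ‖a i‖ ^ 2) := by
  set N : ℝ := (Fintype.card ι : ℝ) with hN
  set B : ι → ι → ℝ := fun j k => ∑ π : Equiv.Perm ι, ⟪a (π j), a (π k)⟫ with hB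
  set F : ℝ := (Fintype.card ι).factorial * ∑ i, ‖a i‖ ^ 2 with hF
  have hinv : ∀ (ρ : Equiv.Perm ι) j k, B (ρ j) (ρ k) = B j k := fun ρ j k =>
    Fintype.sum_equiv (Equiv.mulRight ρ) _ _ fun π => rfl
  have hdiag : ∀ j, N * B j j = F := by
    intro j
    have h1 : ∑ k, B k k = F := by
      rw [hB, Finset.sum_comm]
      have : ∀ π : Equiv.Perm ι, ∑ k, ⟪a (π k), a (π k)⟫ = ∑ i, ‖a i‖ ^ 2 := fun π => by
        rw [Equiv.sum_comp π fun i => ⟪a i, a i⟫]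
        simp_rw [real_inner_self_eq_norm_sq]
      simp_rw [this]
      rw [Finset.sum_const, Finset.card_univ, Fintype.card_perm, nsmul_eq_mul]
    have h2 : ∀ k, B k k = B j j := fun k => by
      simpa using (hinv (Equiv.swap j k) j j)
    rw [← h1, Finset.sum_congr rfl fun k _ => h2 k, Finset.sum_const, nsmul_eq_mul,
      Finset.card_univ]
  have hrow : ∀ j, ∑ k, B j k = 0 := by
    intro j
    rw [hB, Finset.sum_comm]
    refine Finset.sum_eq_zero fun π _ => ?_
    rw [← inner_sum, Equiv.sum_comp π a, ha, inner_zero_right]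
  have hoff : ∀ j k, j ≠ k → (N - 1) * B j k = -B j j := by
    intro j k hjk
    have h1 : ∀ k' ∈ Finset.univ.erase j, B j k' = B j k := by
      intro k' hk'
      have := hinv (Equiv.swap k k') j k
      rwa [Equiv.swap_apply_left, Equiv.swap_apply_of_ne_of_ne hjk
        (Finset.ne_of_mem_erase hk').symm] at this
    have h2 := Finset.add_sum_erase Finset.univ (B j) (Finset.mem_univ j)
    rw [hrow, Finset.sum_congr rfl h1, Finset.sum_const, Finset.card_erase_of_mem
      (Finset.mem_univ j), nsmul_eq_mul, Finset.card_univ,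
      Nat.cast_sub (Fintype.card_pos_iff.2 ⟨j⟩), Nat.cast_one] at h2
    linarith
  have hexpand : ∑ π : Equiv.Perm ι, ‖∑ j ∈ T, a (π j)‖ ^ 2 = ∑ j ∈ T, ∑ k ∈ T, B j k := by
    simp_rw [hB, ← real_inner_self_eq_norm_sq, sum_inner, inner_sum]
    rw [Finset.sum_comm]
    refine Finset.sum_congr rfl fun j _ => ?_
    rw [Finset.sum_comm]
  have hin : ∀ j ∈ T, (N - 1) * N * ∑ k ∈ T, B j k = (N - T.card) * F := by
    intro j hj
    rw [← Finset.add_sum_erase T (B j) hj, mul_add, Finset.mul_sum (T.erase j)]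
    have h1 : ∀ k ∈ T.erase j, (N - 1) * N * B j k = -F := fun k hk => by
      rw [← hdiag j, mul_right_comm, hoff j k (Finset.ne_of_mem_erase hk).symm]
      ring
    rw [Finset.sum_congr rfl h1, Finset.sum_const, Finset.card_erase_of_mem hj, nsmul_eq_mul,
      Nat.cast_sub (Finset.card_pos.2 ⟨j, hj⟩), Nat.cast_one, mul_assoc, hdiag j]
    ring
  rw [hexpand, Finset.mul_sum, Finset.sum_congr rfl hin, Finset.sum_const, nsmul_eq_mul]
  ring

end Epoch

/-- Summed second moments of the prefix sums of a random permutation of a centred family. -/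
lemma sum_perm_sum_prefix_norm_sq_le {E : Type*} [NormedAddCommGroup E] [InnerProductSpace ℝ E]
    {n : ℕ} (hn : 1 ≤ n) (a : Fin n → E) (ha : ∑ i, a i = 0) :
    ∑ π : Equiv.Perm (Fin n), ∑ i ∈ Finset.range n,
        ‖∑ j ∈ Finset.univ.filter (fun j : Fin n => (j : ℕ) < i + 1), a (π j)‖ ^ 2
      ≤ n.factorial * (n / 4 * ∑ i, ‖a i‖ ^ 2) := by
  obtain ⟨m, rfl⟩ : ∃ m, n = m + 1 := ⟨n - 1, by omega⟩
  rw [Finset.sum_comm, Finset.sum_range_succ]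
  have hlast : ∀ π : Equiv.Perm (Fin (m + 1)),
      ∑ j ∈ Finset.univ.filter (fun j : Fin (m + 1) => (j : ℕ) < m + 1), a (π j) = 0 := by
    intro π
    rw [Finset.filter_true_of_mem fun j _ => j.2, Equiv.sum_comp π a, ha]
  simp_rw [hlast]
  rw [norm_zero, zero_pow two_ne_zero, Finset.sum_const_zero, add_zero]
  set Q := ∑ i, ‖a i‖ ^ 2 with hQ
  have hQ0 : 0 ≤ Q := Finset.sum_nonneg fun _ _ => by positivity
  rcases Nat.eq_zero_or_pos m with rfl | hm
  · simp only [Finset.range_zero, Finset.sum_empty]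
    positivity
  have hm0 : (0 : ℝ) < m := by exact_mod_cast hm
  have hterm : ∀ i ∈ Finset.range m, ∑ π : Equiv.Perm (Fin (m + 1)),
      ‖∑ j ∈ Finset.univ.filter (fun j : Fin (m + 1) => (j : ℕ) < i + 1), a (π j)‖ ^ 2
      ≤ ((m + 1 : ℝ) / (4 * m)) * ((m + 1).factorial * Q) := by
    intro i _
    have h := sum_perm_norm_sq_sum a ha
      (Finset.univ.filter (fun j : Fin (m + 1) => (j : ℕ) < i + 1))
    rw [Fintype.card_fin, ← hQ] at h
    set c : ℝ := ((Finset.univ.filter (fun j : Fin (m + 1) => (j : ℕ) < i + 1)).card : ℝ)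
    push_cast at h
    have hc : c * (m + 1 - c) ≤ (m + 1) ^ 2 / 4 := by nlinarith [sq_nonneg (c - (m + 1) / 2)]
    have h' := mul_le_mul_of_nonneg_right hc
      (by positivity : 0 ≤ ((m + 1).factorial : ℝ) * Q)
    rw [← h] at h'
    have hpos : (0 : ℝ) < (m + 1 - 1) * (m + 1) := by
      rw [add_sub_cancel_right]
      positivity
    refine le_of_mul_le_mul_left (h'.trans_eq ?_) hpos
    field_simp
    ring
  refine (Finset.sum_le_sum hterm).trans_eq ?_
  rw [Finset.sum_const, Finset.card_range, nsmul_eq_mul]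
  push_cast
  field_simp

/-- An implicit step with a Lipschitz map and small step size has a unique solution. -/
lemma existsUnique_eq_sub_smul {E : Type*} [NormedAddCommGroup E] [NormedSpace ℝ E]
    [CompleteSpace E] {f : E → E} {l α : ℝ} (hα : 0 ≤ α) (hαl : α * l < 1)
    (hf : ∀ z₁ z₂, ‖f z₁ - f z₂‖ ≤ l * ‖z₁ - z₂‖) (z : E) :
    ∃! z' : E, z' = z - α • f z' := by
  have hc : ContractingWith (α * l).toNNReal fun z' => z - α • f z' := by
    refine ⟨by simpa using hαl, LipschitzWith.of_dist_le_mul fun x y => ?_⟩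
    rw [dist_eq_norm, dist_eq_norm, sub_sub_sub_cancel_left, ← smul_sub, norm_smul,
      Real.norm_of_nonneg hα, norm_sub_rev]
    calc α * ‖f x - f y‖ ≤ α * (l * ‖x - y‖) := mul_le_mul_of_nonneg_left (hf x y) hα
      _ = α * l * ‖x - y‖ := by ring
      _ ≤ _ := mul_le_mul_of_nonneg_right (Real.le_coe_toNNReal _) (norm_nonneg _)
  exact ⟨hc.fixedPoint, hc.fixedPoint_isFixedPt.symm, fun y hy => hc.fixedPoint_unique hy.symm⟩

/-- Proximal point method with Random Reshuffling: the implicit updates are well defined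
(each `z′ = z − α·ωᵢ(z′)` has a unique solution), and for any assignment `Z` of
trajectories satisfying the PPM-without-replacement recurrences (epochs `k = 0,…,K−1`,
steps `i = 0,…,n−1`, `Z τ k i = zᵏ⁺¹ᵢ`), averaging over all `(n!)^K` tuples of
permutations gives
`E‖z^{K+1}₀ − z*‖² ≤ 2e^{−nαμK}‖z₀ − z*‖² + l²σ*²α³n²K/μ`. -/
theorem stmt_13
    {E : Type*} [NormedAddCommGroup E] [InnerProductSpace ℝ E] [FiniteDimensional ℝ E]
    (n : ℕ) (hn : 1 ≤ n) (ω : Fin n → E → E) (l μ : ℝ) (hμ : 0 < μ) (hμl : μ ≤ l)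
    (hlip : ∀ (i : Fin n) (z₁ z₂ : E), ‖ω i z₁ - ω i z₂‖ ≤ l * ‖z₁ - z₂‖)
    (ν : E → E) (hν : ∀ z, ν z = (n : ℝ)⁻¹ • ∑ i, ω i z)
    (hmono : ∀ z₁ z₂, ⟪ν z₁ - ν z₂, z₁ - z₂⟫ ≥ μ * ‖z₁ - z₂‖ ^ 2)
    (zs : E) (hzs : ν zs = 0)
    (σ2 : ℝ) (hσ2 : σ2 = (n : ℝ)⁻¹ * ∑ i, ‖ω i zs‖ ^ 2)
    (z0 : E) (K : ℕ) (hK : 1 ≤ K) (α : ℝ) (hα0 : 0 < α) (hα : α ≤ μ / (5 * n * l ^ 2)) :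
    (∀ (i : Fin n) (z : E), ∃! z' : E, z' = z - α • ω i z') ∧
    ∀ Z : (Fin K → Equiv.Perm (Fin n)) → ℕ → ℕ → E,
      (∀ τ, Z τ 0 0 = z0) →
      (∀ τ k, Z τ (k + 1) 0 = Z τ k n) →
      (∀ τ k i (hk : k < K) (hi : i < n),
        Z τ k (i + 1) = Z τ k i - α • ω ((τ ⟨k, hk⟩) ⟨i, hi⟩) (Z τ k (i + 1))) →
      ((n.factorial : ℝ) ^ K)⁻¹ * ∑ τ : Fin K → Equiv.Perm (Fin n), ‖Z τ K 0 - zs‖ ^ 2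
        ≤ 2 * Real.exp (-((n : ℝ) * α * μ * K)) * ‖z0 - zs‖ ^ 2 +
            l ^ 2 * σ2 * α ^ 3 * (n : ℝ) ^ 2 * K / μ := by
  have hl : 0 < l := hμ.trans_le hμl
  have hn0 : (0 : ℝ) < n := by exact_mod_cast hn
  have hn1 : (1 : ℝ) ≤ n := by exact_mod_cast hn
  have hαl : α * l < 1 := by
    have h1 : α * (5 * n * l ^ 2) ≤ μ := (le_div_iff₀ (by positivity)).1 hα
    have h2 : α * l * l ≤ α * l * l * n := le_mul_of_one_le_right (by positivity) hn1
    refine lt_of_mul_lt_mul_right (?_ : α * l * l < 1 * l) hl.le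
    nlinarith
  refine ⟨fun i z => existsUnique_eq_sub_smul hα0.le hαl (hlip i) z, ?_⟩
  intro Z hZ0 hZepoch hZstep
  have hsumν : ∀ z, ∑ i, ω i z = (n : ℝ) • ν z := fun z => by
    rw [hν, smul_inv_smul₀ hn0.ne']
  have hsum0 : ∑ i, ω i zs = 0 := by rw [hsumν, hzs, smul_zero]
  set C : ℝ := 25 / 8 * (α ^ 3 * l ^ 2 / μ) with hC
  have hC0 : 0 ≤ C := by positivity
  set P : Equiv.Perm (Fin n) → ℝ := fun π => ∑ i ∈ Finset.range n,
    ‖∑ j ∈ Finset.univ.filter (fun j : Fin n => (j : ℕ) < i + 1), ω (π j) zs‖ ^ 2 with hP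
  have hP0 : ∀ π, 0 ≤ P π := fun π => Finset.sum_nonneg fun _ _ => by positivity
  have hepoch : ∀ τ k (hk : k < K), ‖Z τ (k + 1) 0 - zs‖ ^ 2 ≤
      Real.exp (-(n * α * μ)) * ‖Z τ k 0 - zs‖ ^ 2 + C * P (τ ⟨k, hk⟩) := by
    intro τ k hk
    set π := τ ⟨k, hk⟩ with hπ
    set g : ℕ → E → E := fun j => if h : j < n then ω (π ⟨j, h⟩) else 0 with hg
    have hgval : ∀ j (h : j < n), g j = ω (π ⟨j, h⟩) := fun j h => dif_pos h
    have hgprefix : ∀ i ≤ n, ∀ z, ∑ j ∈ Finset.range i, g j z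
        = ∑ j ∈ Finset.univ.filter (fun j : Fin n => (j : ℕ) < i), ω (π j) z := by
      intro i hi z
      symm
      refine Finset.sum_bij (fun j _ => (j : ℕ)) ?_ ?_ ?_ ?_
      · intro j hj
        exact Finset.mem_range.2 (Finset.mem_filter.1 hj).2
      · intro j _ j' _ h
        exact Fin.ext h
      · intro j hj
        have hj' := Finset.mem_range.1 hj
        exact ⟨⟨j, hj'.trans_le hi⟩, Finset.mem_filter.2 ⟨Finset.mem_univ _, hj'⟩, rfl⟩
      · intro j _
        rw [hgval j j.2]
    have hgsum : ∀ z, ∑ j ∈ Finset.range n, g j z = ∑ i, ω i z := fun z => by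
      rw [hgprefix n le_rfl, Finset.filter_true_of_mem fun j _ => j.2,
        Equiv.sum_comp π fun i => ω i z]
    have h := norm_sq_epoch_le hn (g := g) (zs := zs) hμ hμl hα0 hα
      (fun j hj z₁ z₂ => by rw [hgval j hj]; exact hlip _ z₁ z₂)
      (by rw [hgsum, hsum0])
      (fun z => by
        have := mul_le_mul_of_nonneg_left (hmono z zs) hn0.le
        rw [hzs, sub_zero] at this
        rw [hgsum, hsumν, real_inner_smul_left, mul_assoc]
        exact this)
      (y := Z τ k) (fun i hi => by rw [hgval i hi]; exact hZstep τ k i hk hi)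
    rw [hZepoch]
    refine h.trans_eq ?_
    congr 2
    refine Finset.sum_congr rfl fun i hi => ?_
    rw [hgprefix (i + 1) (Finset.mem_range.1 hi)]
  have hq1 : Real.exp (-(n * α * μ)) ≤ 1 := Real.exp_le_one_iff.2 (by
    have : 0 < n * α * μ := by positivity
    linarith)
  have hpath : ∀ τ k (hk : k ≤ K), ‖Z τ k 0 - zs‖ ^ 2 ≤
      Real.exp (-(n * α * μ)) ^ k * ‖z0 - zs‖ ^ 2
        + C * ∑ j : Fin k, P (τ (Fin.castLE hk j)) := by
    intro τ k
    induction k with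
    | zero => intro _; simp [hZ0]
    | succ k ih =>
      intro hk
      have ih' := ih (Nat.le_of_succ_le hk)
      have hnn : 0 ≤ C * ∑ j : Fin k, P (τ (Fin.castLE (Nat.le_of_succ_le hk) j)) :=
        mul_nonneg hC0 (Finset.sum_nonneg fun _ _ => hP0 _)
      have h1 := mul_le_mul_of_nonneg_left ih' (Real.exp_pos (-(n * α * μ))).le
      have h2 := mul_le_mul_of_nonneg_right hq1 hnn
      have h3 := hepoch τ k hk
      have h4 : ∑ j : Fin (k + 1), P (τ (Fin.castLE hk j))
          = ∑ j : Fin k, P (τ (Fin.castLE (Nat.le_of_succ_le hk) j)) + P (τ ⟨k, hk⟩) :=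
        Fin.sum_univ_castSucc _
      rw [h4, pow_succ (Real.exp _)]
      linarith
  have hcoord : ∀ j : Fin K, ∑ τ : Fin K → Equiv.Perm (Fin n), P (τ j)
      = (n.factorial : ℝ) ^ (K - 1) * ∑ π, P π := by
    intro j
    have := Fintype.sum_piFinset_apply P (Finset.univ : Finset (Equiv.Perm (Fin n))) j
    simpa [Fintype.card_perm] using this
  have hPsum : ∑ π, P π ≤ n.factorial * (n ^ 2 / 4 * σ2) := by
    refine (sum_perm_sum_prefix_norm_sq_le hn (fun i => ω i zs) hsum0).trans_eq ?_
    rw [hσ2]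
    field_simp
  have hσ0 : 0 ≤ σ2 := by
    rw [hσ2]
    exact mul_nonneg (by positivity) (Finset.sum_nonneg fun _ _ => by positivity)
  have hf0 : (0 : ℝ) < (n.factorial : ℝ) ^ K := by positivity
  have hpow : (n.factorial : ℝ) ^ K = (n.factorial : ℝ) ^ (K - 1) * n.factorial := by
    rw [← pow_succ, Nat.sub_add_cancel hK]
  have hexp : Real.exp (-(n * α * μ)) ^ K = Real.exp (-((n : ℝ) * α * μ * K)) := by
    rw [← Real.exp_nat_mul]
    congr 1
    ring
  rw [inv_mul_le_iff₀ hf0]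
  calc ∑ τ : Fin K → Equiv.Perm (Fin n), ‖Z τ K 0 - zs‖ ^ 2
      ≤ ∑ τ : Fin K → Equiv.Perm (Fin n), (Real.exp (-((n : ℝ) * α * μ * K)) * ‖z0 - zs‖ ^ 2
          + C * ∑ j : Fin K, P (τ j)) := Finset.sum_le_sum fun τ _ => by
        rw [← hexp]
        exact hpath τ K le_rfl
    _ = (n.factorial : ℝ) ^ K * (Real.exp (-((n : ℝ) * α * μ * K)) * ‖z0 - zs‖ ^ 2)
          + C * (K * ((n.factorial : ℝ) ^ (K - 1) * ∑ π, P π)) := by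
        have hswap : ∑ τ : Fin K → Equiv.Perm (Fin n), ∑ j : Fin K, P (τ j)
            = K * ((n.factorial : ℝ) ^ (K - 1) * ∑ π, P π) := by
          rw [Finset.sum_comm, Finset.sum_congr rfl fun j _ => hcoord j]
          simp
        rw [Finset.sum_add_distrib, ← Finset.mul_sum _ _ C, hswap]
        simp [Fintype.card_perm]
    _ ≤ (n.factorial : ℝ) ^ K * (Real.exp (-((n : ℝ) * α * μ * K)) * ‖z0 - zs‖ ^ 2)
          + C * (K * ((n.factorial : ℝ) ^ (K - 1) * (n.factorial * (n ^ 2 / 4 * σ2)))) := by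
        gcongr
    _ = (n.factorial : ℝ) ^ K * (Real.exp (-((n : ℝ) * α * μ * K)) * ‖z0 - zs‖ ^ 2
          + 25 / 32 * (l ^ 2 * σ2 * α ^ 3 * (n : ℝ) ^ 2 * K / μ)) := by
        rw [hC, hpow]
        ring
    _ ≤ _ := by
        have h1 : 0 ≤ Real.exp (-((n : ℝ) * α * μ * K)) * ‖z0 - zs‖ ^ 2 := by positivity
        have h2 : 0 ≤ l ^ 2 * σ2 * α ^ 3 * (n : ℝ) ^ 2 * K / μ := by positivity
        refine mul_le_mul_of_nonneg_left ?_ hf0.le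
        linarith
end

section
/- Let E, G be finite-dimensional real inner product spaces and F : E × G → ℝ differentiable with l-Lipschitz gradient operator ν(x,y) = (∇ₓF(x,y), −∇_yF(x,y)), satisfying the two-sided PL inequality with constants μ₁, μ₂ > 0, and suppose the set Z* of saddle points of F is nonempty. Let Φ(x) = max_y F(x,y) (assumed attained for every x), Φ* = min_x Φ(x) (assumed attained), and for λ > 0 let V_λ(x,y) = (Φ(x) − Φ*) + λ·(Φ(x) − F(x,y)). Then for every z = (x,y) ∈ E × G and every λ > 0, dist(z, Z*)² ≤ max{ (2/μ₁)·(l²/(2μ₂²) + 1), 4/(λμ₂) } · V_λ(z), where dist(z, Z*) is the infimum of ‖z − z*‖ over z* ∈ Z*. -/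
open scoped RealInnerProductSpace

/-- An affine form with fixed-point coefficients (denominator `2 ^ 24`): a centre, three linear
coefficients for variables ranging over `[-1, 1]`, and an error radius. -/
structure AffForm where
  c : ℤ
  x : ℤ
  y : ℤ
  z : ℤ
  e : ℕ

namespace AffForm

def const (n : ℤ) : AffForm := ⟨n, 0, 0, 0, 0⟩

def add (p q : AffForm) : AffForm := ⟨p.c + q.c, p.x + q.x, p.y + q.y, p.z + q.z, p.e + q.e⟩

def rad (p : AffForm) : ℕ := p.x.natAbs + p.y.natAbs + p.z.natAbs + p.e

def mul (p q : AffForm) : AffForm :=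
  ⟨p.c * q.c / 16777216, (p.c * q.x + q.c * p.x) / 16777216,
    (p.c * q.y + q.c * p.y) / 16777216, (p.c * q.z + q.c * p.z) / 16777216,
    (p.c.natAbs * q.e + q.c.natAbs * p.e + p.rad * q.rad) / 16777216 + 5⟩

def smul (n : ℤ) (p : AffForm) : AffForm :=
  ⟨n * p.c / 16777216, n * p.x / 16777216, n * p.y / 16777216, n * p.z / 16777216,
    n.natAbs * p.e / 16777216 + 5⟩

def isNeg (p : AffForm) : Bool := decide (p.c + (p.rad : ℤ) < 0)

end AffForm

/-- A box of parameters given by centres and radii with denominator `2 ^ 24`. -/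
structure ParamBox where
  lc : ℤ
  lr : ℤ
  mc : ℤ
  mr : ℤ
  tc : ℤ
  tr : ℤ

namespace ParamBox

open AffForm

def invl (b : ParamBox) : ℤ := 281474976710656 / b.lc

/-- Two Newton steps towards `√(1 - 1 / l²)`. -/
def root (b : ParamBox) : ℤ :=
  let v := 16777216 - b.invl * b.invl / 16777216
  let g := (16777216 + v) / 2
  let g := (g * g + v * 16777216) / (2 * g)
  (g * g + v * 16777216) / (2 * g)

def slope₀ (b : ParamBox) : ℤ :=
  (281474976710656 - 3 * (b.invl * b.invl) + b.root * b.root) / (2 * b.root) + 1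

def slope₁ (b : ParamBox) : ℤ := b.invl * b.invl * b.invl / (16777216 * b.root) + 1

def theta (b : ParamBox) : AffForm :=
  (const b.slope₀).add (smul b.slope₁ ⟨b.lc, b.lr, 0, 0, 0⟩)

def cc (b : ParamBox) : ℤ := b.lc * b.lc / 16777216 + 33554432

def q₂ (b : ParamBox) : ℤ := 18889465931478580854784 / (b.cc * b.cc) + 1

def q₀ (b : ParamBox) : ℤ := 33554432 - 2251799813685248 / b.cc + 2 * b.q₂

def qq (b : ParamBox) : AffForm :=
  (const b.q₀).add (smul b.q₂ (mul ⟨b.lc, b.lr, 0, 0, 0⟩ ⟨b.lc, b.lr, 0, 0, 0⟩))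

def var (b : ParamBox) : AffForm := ⟨b.tc, 0, 0, b.tr, 0⟩

/-- The certificate test with multiplier `n / 64` on a box; `v * u`, `v * p` and `v * d` enclose
the square of the last parameter, the comparison function and its first-order variation. -/
def test (b : ParamBox) (v u p d : AffForm) (n : ℕ) (o : ℕ) : Bool :=
  let l : AffForm := ⟨b.lc, b.lr, 0, 0, 0⟩
  let mu : AffForm := ⟨b.mc, 0, b.mr, 0, 0⟩
  let q := b.qq
  let w := q.mul p
  let r := (smul 2048 u).add (q.mul d)
  let m2 := mu.mul mu
  let s : ℤ := n * 262144
  let s2 : ℤ := n * n * 4096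
  let ss : ℤ := o * (s + s2)
  let mc := (smul (16777216 - s) mu).add (smul (s2 - s - ss) m2)
  let l2 := u.mul ((smul (-16777216 - s) l).add (const (-s)))
  let Z := (l2.add (smul (-16777216 - s) (mu.mul w))).add
    (mc.mul (r.mul ((const 33554432).add (v.mul r))))
  let ml := mu.mul (l.add (const 33554432))
  let X1 := if o = 0 then smul (2 * (s + s2)) (mu.mul r)
    else smul ss (ml.mul (w.add (smul 2048 u)))
  let X2 := if o = 0 then smul (2 * (s + s2)) (smul 2048 (mu.mul u))
    else smul ss (smul 2048 (ml.mul u))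
  let X := Z.add X1
  let X0 := (l2.add (smul 6144 u)).add X2
  decide (0 < b.invl ∧ 0 < b.root ∧ 0 < b.cc) &&
  ((b.theta.add (smul (-16777216) b.var)).isNeg ||
  (decide (2 * n * o * (b.mc + b.mr) ≤ (64 - n) * 16777216) &&
  if n = 0 then X.isNeg && X0.isNeg else
    let C := (const (s + s2 + ss)).add ((smul (2 * s2) mu).add (smul (s2 - s - ss) m2))
    (C.add (v.mul X)).isNeg && (C.add (v.mul X0)).isNeg))

/-- The test for the part of the comparison function below (`g = true`) or above `2 / 3`. -/
def testAt (g : Bool) (b : ParamBox) (n : ℕ) (o : ℕ) : Bool :=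
  let k := b.var
  let k2 := k.mul k
  let h := b.theta.add (smul (-16777216) k)
  if g then
    let p := k2.mul ((const 14155776).add (smul 28311552 k))
    b.test k2 (const 16777216) p (p.add (((smul 28311552 k).add (smul 70778880 k2)).mul h)) n o
  else
    let p := (smul 33554432 k2).add (const (-8388608))
    b.test (const 16777216) k2 p (p.add ((smul 33554432 k).mul h)) n o

def half (b : ParamBox) (i : ℕ) (h : ℤ) : ParamBox :=
  if i = 0 then { b with lc := b.lc + h * ((b.lr + 1) / 2), lr := (b.lr + 1) / 2 }
  else if i = 1 then { b with mc := b.mc + h * ((b.mr + 1) / 2), mr := (b.mr + 1) / 2 }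
  else { b with tc := b.tc + h * ((b.tr + 1) / 2), tr := (b.tr + 1) / 2 }

/-- Runs the branch-and-bound tree encoded by the base-128 digits of `code`, returning what is
left of the code. -/
def run (g : Bool) : ℕ → ParamBox → ℕ → Option ℕ
  | 0, _, _ => none
  | d + 1, b, code =>
    if code % 128 < 3 then
      (run g d (b.half (code % 128) (-1)) (code / 128)).bind
        (run g d (b.half (code % 128) 1))
    else if testAt g b ((code % 128 - 3) / 2) ((code % 128 - 3) % 2) then some (code / 128)
    else none

end ParamBox

namespace AffForm

/-- `p.Encl x y z v` says that `p`, evaluated at `(x, y, z)`, encloses `v`. -/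
def Encl (p : AffForm) (x y z v : ℝ) : Prop :=
  |v * 16777216 - (p.c + p.x * x + p.y * y + p.z * z)| ≤ p.e

variable {p q : AffForm} {x y z v w : ℝ}

lemma Encl.of_eq (h : p.Encl x y z v) (hw : v = w) : p.Encl x y z w := hw ▸ h

lemma encl_const (n : ℤ) : (const n).Encl x y z (n / 16777216) := by
  simp [Encl, const]

lemma Encl.add (hp : p.Encl x y z v) (hq : q.Encl x y z w) : (p.add q).Encl x y z (v + w) := by
  simp only [Encl, AffForm.add] at *
  push_cast
  rw [abs_le] at *
  constructor <;> linarith [hp.1, hp.2, hq.1, hq.2]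

lemma floor_div_bounds (n : ℤ) :
    (n : ℝ) / 16777216 - 1 ≤ ((n / 16777216 : ℤ) : ℝ) ∧
      ((n / 16777216 : ℤ) : ℝ) ≤ (n : ℝ) / 16777216 := by
  have h := Int.emod_add_mul_ediv n 16777216
  have h1 := Int.emod_nonneg n (b := 16777216) (by norm_num)
  have h2 := Int.emod_lt_of_pos n (b := 16777216) (by norm_num)
  have h3 : (n : ℝ) = ((n % 16777216 : ℤ) : ℝ) + 16777216 * ((n / 16777216 : ℤ) : ℝ) := by
    exact_mod_cast h.symm
  have h1' : (0 : ℝ) ≤ ((n % 16777216 : ℤ) : ℝ) := by exact_mod_cast h1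
  have h2' : ((n % 16777216 : ℤ) : ℝ) < 16777216 := by exact_mod_cast h2
  constructor <;> linarith

lemma nat_floor_div_bound (n : ℕ) :
    (n : ℝ) / 16777216 - 1 ≤ ((n / 16777216 : ℕ) : ℝ) := by
  have h := (floor_div_bounds (n : ℤ)).1
  have e : (((n : ℤ) / 16777216 : ℤ) : ℝ) = ((n / 16777216 : ℕ) : ℝ) := by
    rw [← Int.cast_natCast (n / 16777216)]; push_cast; rfl
  rwa [e, Int.cast_natCast] at h

lemma natAbs_cast_real (n : ℤ) : ((n.natAbs : ℕ) : ℝ) = |(n : ℝ)| := by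
  rw [← Int.cast_abs, Int.abs_eq_natAbs]; simp

lemma abs_lin_le (a b c : ℤ) (hx : |x| ≤ 1) (hy : |y| ≤ 1) (hz : |z| ≤ 1) :
    |(a : ℝ) * x + b * y + c * z| ≤ a.natAbs + b.natAbs + c.natAbs := by
  simp only [natAbs_cast_real]
  refine (abs_add_three _ _ _).trans ?_
  simp only [abs_mul]
  have := mul_le_mul_of_nonneg_left hx (abs_nonneg (a : ℝ))
  have := mul_le_mul_of_nonneg_left hy (abs_nonneg (b : ℝ))
  have := mul_le_mul_of_nonneg_left hz (abs_nonneg (c : ℝ))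
  linarith

/-- Rounding the coefficients of an affine form down costs at most `4`. -/
lemma round_lin {c a₁ a₂ a₃ : ℤ} {N : ℕ} {V : ℝ} (hx : |x| ≤ 1) (hy : |y| ≤ 1) (hz : |z| ≤ 1)
    (h : |V - (c + a₁ * x + a₂ * y + a₃ * z)| ≤ N) :
    |V / 16777216 - (((c / 16777216 : ℤ) : ℝ) + ((a₁ / 16777216 : ℤ) : ℝ) * x +
      ((a₂ / 16777216 : ℤ) : ℝ) * y + ((a₃ / 16777216 : ℤ) : ℝ) * z)| ≤
      ((N / 16777216 + 5 : ℕ) : ℝ) := by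
  have key : ∀ (n : ℤ) (t : ℝ), |t| ≤ 1 →
      |(n : ℝ) / 16777216 * t - ((n / 16777216 : ℤ) : ℝ) * t| ≤ 1 := by
    intro n t ht
    obtain ⟨h1, h2⟩ := floor_div_bounds n
    rw [← sub_mul, abs_mul]
    have : |(n : ℝ) / 16777216 - ((n / 16777216 : ℤ) : ℝ)| ≤ 1 := by
      rw [abs_le]; constructor <;> linarith
    nlinarith [abs_nonneg t, abs_nonneg ((n : ℝ) / 16777216 - ((n / 16777216 : ℤ) : ℝ))]
  have h0 := abs_le.1 (key c 1 (by simp))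
  have h1 := abs_le.1 (key a₁ x hx)
  have h2 := abs_le.1 (key a₂ y hy)
  have h3 := abs_le.1 (key a₃ z hz)
  have h4 := abs_le.1 h
  have h5 := nat_floor_div_bound N
  push_cast at h5 ⊢
  rw [abs_le]
  constructor <;> linarith [h0.1, h0.2, h1.1, h1.2, h2.1, h2.2, h3.1, h3.2, h4.1, h4.2]

lemma Encl.smul (n : ℤ) (hp : p.Encl x y z v) (hx : |x| ≤ 1) (hy : |y| ≤ 1) (hz : |z| ≤ 1) :
    (smul n p).Encl x y z (n / 16777216 * v) := by
  have := round_lin (c := n * p.c) (a₁ := n * p.x) (a₂ := n * p.y) (a₃ := n * p.z)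
    (N := n.natAbs * p.e) (V := n * (v * 16777216)) hx hy hz (by
      have e : (n : ℝ) * (v * 16777216) - (((n * p.c : ℤ) : ℝ) + ((n * p.x : ℤ) : ℝ) * x +
          ((n * p.y : ℤ) : ℝ) * y + ((n * p.z : ℤ) : ℝ) * z) =
          n * (v * 16777216 - (p.c + p.x * x + p.y * y + p.z * z)) := by push_cast; ring
      rw [e, abs_mul]
      push_cast
      rw [natAbs_cast_real]
      exact mul_le_mul_of_nonneg_left hp (abs_nonneg _))
  have e : (n : ℝ) * (v * 16777216) / 16777216 = n / 16777216 * v * 16777216 := by ring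
  rw [e] at this
  exact this

lemma Encl.mul (hp : p.Encl x y z v) (hq : q.Encl x y z w) (hx : |x| ≤ 1) (hy : |y| ≤ 1)
    (hz : |z| ≤ 1) : (p.mul q).Encl x y z (v * w) := by
  obtain ⟨L₁, hL₁⟩ : ∃ L, L = (p.x : ℝ) * x + p.y * y + p.z * z := ⟨_, rfl⟩
  obtain ⟨L₂, hL₂⟩ : ∃ L, L = (q.x : ℝ) * x + q.y * y + q.z * z := ⟨_, rfl⟩
  obtain ⟨r₁, hr₁⟩ : ∃ r, r = v * 16777216 - (p.c + p.x * x + p.y * y + p.z * z) := ⟨_, rfl⟩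
  obtain ⟨r₂, hr₂⟩ : ∃ r, r = w * 16777216 - (q.c + q.x * x + q.y * y + q.z * z) := ⟨_, rfl⟩
  have a₁ : |r₁| ≤ p.e := hr₁ ▸ hp
  have a₂ : |r₂| ≤ q.e := hr₂ ▸ hq
  have b₁ : |L₁ + r₁| ≤ p.rad := by
    have := abs_lin_le p.x p.y p.z hx hy hz
    rw [← hL₁] at this
    simp only [rad]; push_cast
    exact (abs_add_le _ _).trans (by linarith)
  have b₂ : |L₂ + r₂| ≤ q.rad := by
    have := abs_lin_le q.x q.y q.z hx hy hz
    rw [← hL₂] at this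
    simp only [rad]; push_cast
    exact (abs_add_le _ _).trans (by linarith)
  have := round_lin (c := p.c * q.c) (a₁ := p.c * q.x + q.c * p.x) (a₂ := p.c * q.y + q.c * p.y)
    (a₃ := p.c * q.z + q.c * p.z)
    (N := p.c.natAbs * q.e + q.c.natAbs * p.e + p.rad * q.rad)
    (V := v * 16777216 * (w * 16777216)) hx hy hz (by
      have e : v * 16777216 * (w * 16777216) - (((p.c * q.c : ℤ) : ℝ) +
          ((p.c * q.x + q.c * p.x : ℤ) : ℝ) * x + ((p.c * q.y + q.c * p.y : ℤ) : ℝ) * y +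
          ((p.c * q.z + q.c * p.z : ℤ) : ℝ) * z) =
          p.c * r₂ + q.c * r₁ + (L₁ + r₁) * (L₂ + r₂) := by
        rw [hr₁, hr₂, hL₁, hL₂]; push_cast; ring
      rw [e]
      push_cast
      refine (abs_add_three _ _ _).trans ?_
      rw [abs_mul, abs_mul, abs_mul, natAbs_cast_real, natAbs_cast_real]
      have := mul_le_mul_of_nonneg_left a₂ (abs_nonneg (p.c : ℝ))
      have := mul_le_mul_of_nonneg_left a₁ (abs_nonneg (q.c : ℝ))
      have := mul_le_mul b₁ b₂ (abs_nonneg _) (by positivity)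
      linarith)
  have e : v * 16777216 * (w * 16777216) / 16777216 = v * w * 16777216 := by ring
  rw [e] at this
  exact this

lemma Encl.neg_of_isNeg (hp : p.Encl x y z v) (hx : |x| ≤ 1) (hy : |y| ≤ 1) (hz : |z| ≤ 1)
    (h : p.isNeg = true) : v < 0 := by
  have h' : p.c + (p.rad : ℤ) < 0 := by simpa [isNeg] using h
  have h'' : (p.c : ℝ) + (p.rad : ℝ) < 0 := by exact_mod_cast h'
  have h1 := abs_lin_le p.x p.y p.z hx hy hz
  have h2 := (abs_le.1 h1).2
  have h3 := (abs_le.1 hp).2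
  simp only [rad] at h''
  push_cast at h''
  linarith

end AffForm

/-- The certificate expression. -/
noncomputable def certE (l μ κ w r σ ω : ℝ) : ℝ :=
  σ * ((1 - μ ^ 2) + σ * (1 + μ) ^ 2) + ω * σ * (1 + σ) * (1 - μ ^ 2)
    - (1 + σ) * l * κ - σ * κ - (1 + σ) * (μ * w) + (1 - ω) * (2 * (σ + σ ^ 2)) * (μ * r)
    + ω * (σ + σ ^ 2) * (μ * (l + 2) * (w + κ / 8192))
    + ((1 - σ) * μ + (σ ^ 2 - σ - ω * (σ + σ ^ 2)) * μ ^ 2) * (r * (2 + r))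

/-- The comparison function. -/
noncomputable def ups (k : ℝ) : ℝ :=
  if k ≤ 2 / 3 then 27 / 32 * k ^ 4 + 27 / 16 * k ^ 5 else 2 * k ^ 2 - 1 / 2

/-- Half the derivative of the comparison function. -/
noncomputable def dups (k : ℝ) : ℝ :=
  if k ≤ 2 / 3 then 27 / 16 * k ^ 3 + 135 / 32 * k ^ 4 else 2 * k

def CertHolds (l μ k θ β : ℝ) : Prop :=
  ∃ σ ω : ℝ, 0 ≤ σ ∧ σ < 1 ∧ (ω = 0 ∨ ω = 1) ∧
    0 ≤ (1 - σ) * (1 - μ * σ) - ω * μ * σ * (1 + σ) ∧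
    certE l μ (k ^ 2) (β * ups k) (k ^ 2 / 8192 + β * (ups k + dups k * (θ - k))) σ ω < 0

lemma int_div_le_ediv_add_one {a d : ℤ} (hd : 0 < d) :
    (a : ℝ) / d ≤ ((a / d + 1 : ℤ) : ℝ) := by
  have h := Int.lt_ediv_add_one_mul_self a hd
  have h' : (a : ℝ) < ((a / d + 1 : ℤ) : ℝ) * d := by exact_mod_cast h
  have hd' : (0 : ℝ) < d := by exact_mod_cast hd
  rw [div_le_iff₀ hd']
  exact h'.le

lemma int_ediv_le_div {a d : ℤ} (hd : 0 < d) : ((a / d : ℤ) : ℝ) ≤ (a : ℝ) / d := by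
  have h := Int.ediv_mul_le a hd.ne'
  have h' : ((a / d : ℤ) : ℝ) * d ≤ a := by exact_mod_cast h
  have hd' : (0 : ℝ) < d := by exact_mod_cast hd
  rw [le_div_iff₀ hd']
  exact h'

namespace ParamBox

open AffForm

variable {b : ParamBox}

lemma le_theta {l θ : ℝ} (hl : 0 < l) (hθ : θ ^ 2 = 1 - 1 / l ^ 2) (hu : 0 < b.invl)
    (hg : 0 < b.root) : θ ≤ b.slope₀ / 16777216 + b.slope₁ / 16777216 * l := by
  have h0 : ((281474976710656 - 3 * (b.invl * b.invl) + b.root * b.root : ℤ) : ℝ) /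
      ((2 * b.root : ℤ) : ℝ) ≤ (b.slope₀ : ℝ) := by
    rw [slope₀]
    exact int_div_le_ediv_add_one (by positivity)
  have h1 : ((b.invl * b.invl * b.invl : ℤ) : ℝ) / ((16777216 * b.root : ℤ) : ℝ) ≤
      (b.slope₁ : ℝ) := by
    rw [slope₁]
    exact int_div_le_ediv_add_one (by positivity)
  push_cast at h0 h1
  have hu' : (0 : ℝ) < b.invl := by exact_mod_cast hu
  have hg' : (0 : ℝ) < b.root := by exact_mod_cast hg
  generalize (b.invl : ℝ) = u at *
  generalize (b.root : ℝ) = g at *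
  have e1 : θ ≤ (θ ^ 2 + (g / 16777216) ^ 2) / (2 * (g / 16777216)) := by
    rw [le_div_iff₀ (by positivity)]
    nlinarith [sq_nonneg (θ - g / 16777216)]
  have e2 : -(1 / l ^ 2) ≤ -3 * (u / 16777216) ^ 2 + 2 * (u / 16777216) ^ 3 * l := by
    have hs : 0 < u / 16777216 := by positivity
    generalize u / 16777216 = s at *
    have : 0 ≤ (1 - s * l) ^ 2 * (1 + 2 * (s * l)) / l ^ 2 := by positivity
    have e : (1 - s * l) ^ 2 * (1 + 2 * (s * l)) / l ^ 2 =
        1 / l ^ 2 - 3 * s ^ 2 + 2 * s ^ 3 * l := by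
      field_simp; ring
    linarith
  have e3 : (θ ^ 2 + (g / 16777216) ^ 2) / (2 * (g / 16777216)) ≤
      (1 - 3 * (u / 16777216) ^ 2 + 2 * (u / 16777216) ^ 3 * l + (g / 16777216) ^ 2) /
        (2 * (g / 16777216)) := by
    gcongr
    linarith
  have e4 : (1 - 3 * (u / 16777216) ^ 2 + 2 * (u / 16777216) ^ 3 * l + (g / 16777216) ^ 2) /
        (2 * (g / 16777216)) = (281474976710656 - 3 * (u * u) + g * g) / (2 * g) / 16777216 +
        u * u * u / (16777216 * g) / 16777216 * l := by
    field_simp; ring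
  rw [e4] at e3
  have e5 : (281474976710656 - 3 * (u * u) + g * g) / (2 * g) / 16777216 ≤
    (b.slope₀ : ℝ) / 16777216 := by gcongr
  have e6 : u * u * u / (16777216 * g) / 16777216 * l ≤ (b.slope₁ : ℝ) / 16777216 * l := by
    gcongr
  linarith

lemma le_qq {l : ℝ} (hc : 0 < b.cc) :
    2 * l ^ 2 / (l ^ 2 + 2) ≤ b.q₀ / 16777216 + b.q₂ / 16777216 * (l * l) := by
  have h2 : ((18889465931478580854784 : ℤ) : ℝ) / ((b.cc * b.cc : ℤ) : ℝ) ≤ (b.q₂ : ℝ) := by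
    rw [q₂]
    exact int_div_le_ediv_add_one (by positivity)
  have h0 : ((2251799813685248 / b.cc : ℤ) : ℝ) ≤ ((2251799813685248 : ℤ) : ℝ) / (b.cc : ℝ) :=
    int_ediv_le_div hc
  have h0' : (b.q₀ : ℝ) = 33554432 - ((2251799813685248 / b.cc : ℤ) : ℝ) + 2 * (b.q₂ : ℝ) := by
    rw [q₀]; push_cast; rfl
  push_cast at h0 h2
  have hc' : (0 : ℝ) < b.cc := by exact_mod_cast hc
  generalize (b.cc : ℝ) = c at *
  have e1 : 2 * l ^ 2 / (l ^ 2 + 2) ≤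
      2 - 8 / (c / 16777216) + 4 * (l ^ 2 + 2) / (c / 16777216) ^ 2 := by
    have hs : 0 < c / 16777216 := by positivity
    generalize c / 16777216 = s at *
    have e : 2 - 8 / s + 4 * (l ^ 2 + 2) / s ^ 2 - 2 * l ^ 2 / (l ^ 2 + 2) =
        4 * (s - (l ^ 2 + 2)) ^ 2 / (s ^ 2 * (l ^ 2 + 2)) := by
      field_simp; ring
    have : 0 ≤ 4 * (s - (l ^ 2 + 2)) ^ 2 / (s ^ 2 * (l ^ 2 + 2)) := by positivity
    linarith
  have e2 : 2 - 8 / (c / 16777216) + 4 * (l ^ 2 + 2) / (c / 16777216) ^ 2 =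
      2 - 2251799813685248 / c / 16777216 +
        18889465931478580854784 / (c * c) / 16777216 * (l * l + 2) := by
    field_simp; ring
  have e3 : 18889465931478580854784 / (c * c) / 16777216 * (l * l + 2) ≤
      (b.q₂ : ℝ) / 16777216 * (l * l + 2) := by
    have : 0 ≤ l * l + 2 := by nlinarith [mul_self_nonneg l]
    gcongr
  rw [h0']
  linarith

end ParamBox

namespace ParamBox

open AffForm

variable {b : ParamBox}

/-- The parameters `(l, μ, k)` lie in the box. -/
def Mem (b : ParamBox) (l μ k : ℝ) : Prop :=
  |l * 16777216 - b.lc| ≤ b.lr ∧ |μ * 16777216 - b.mc| ≤ b.mr ∧ |k * 16777216 - b.tc| ≤ b.tr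

lemma exists_unit_coord {v : ℝ} {c r : ℤ} (h : |v * 16777216 - c| ≤ r) :
    ∃ x : ℝ, |x| ≤ 1 ∧ v * 16777216 = c + r * x := by
  have hr : (0 : ℝ) ≤ r := (abs_nonneg _).trans h
  rcases hr.eq_or_lt with h0 | h0
  · refine ⟨0, by simp, ?_⟩
    rw [← h0] at h
    have := abs_nonpos_iff.1 h
    linarith
  · refine ⟨(v * 16777216 - c) / r, ?_, by field_simp; ring⟩
    rw [abs_div, abs_of_pos h0, div_le_one h0]
    exact h

lemma pos_of_test {v u p d : AffForm} {n o : ℕ} (h : b.test v u p d n o = true) :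
    0 < b.invl ∧ 0 < b.root ∧ 0 < b.cc := by
  simp only [test, Bool.and_eq_true, decide_eq_true_eq] at h
  exact h.1

lemma test_neg {v' u' p' d' : AffForm} {n o : ℕ} {l μ k v u p d x y z : ℝ}
    (h : b.test v' u' p' d' n o = true)
    (ho : o = 0 ∨ o = 1) (hx : |x| ≤ 1) (hy : |y| ≤ 1) (hz : |z| ≤ 1)
    (hm : b.Mem l μ k) (hlx : l * 16777216 = b.lc + b.lr * x)
    (hmy : μ * 16777216 = b.mc + b.mr * y) (Rk : b.var.Encl x y z k)
    {σ T q : ℝ} (hσ : σ = n / 64) (RT : b.theta.Encl x y z T)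
    (hq : q = b.q₀ / 16777216 + b.q₂ / 16777216 * (l * l)) (hkT : k ≤ T)
    (Rv : v'.Encl x y z v) (Ru : u'.Encl x y z u) (Rp : p'.Encl x y z p) (Rd : d'.Encl x y z d)
    (hv : 0 < v) :
    certE l μ (v * u) (v * (q * p)) (v * u / 8192 + v * (q * d)) σ o < 0 ∧
      certE l μ (v * u) 0 0 σ o + (1 - o) * (2 * (σ + σ ^ 2)) * (μ * (v * u) / 8192)
        + 6144 / 16777216 * (v * u) < 0 ∧
      2 * σ * o * μ ≤ 1 - σ := by
  have hμ : μ * 16777216 ≤ b.mc + b.mr := by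
    have := (abs_le.1 hm.2.1).2; linarith
  have Rl : Encl ⟨b.lc, b.lr, 0, 0, 0⟩ x y z l := by simp [Encl, hlx]
  have Rm : Encl ⟨b.mc, 0, b.mr, 0, 0⟩ x y z μ := by simp [Encl, hmy]
  have S : ∀ {p : AffForm} {v : ℝ} (n : ℤ), p.Encl x y z v →
    (smul n p).Encl x y z (n / 16777216 * v) := fun n hp => hp.smul n hx hy hz
  have M : ∀ {p q : AffForm} {v w : ℝ}, p.Encl x y z v → q.Encl x y z w →
    (mul p q).Encl x y z (v * w) := fun hp hq => hp.mul hq hx hy hz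
  have N : ∀ {p : AffForm} {v : ℝ}, p.Encl x y z v → p.isNeg = true → v < 0 :=
    fun hp => hp.neg_of_isNeg hx hy hz
  have Rq : b.qq.Encl x y z q := ((encl_const _).add (S _ (M Rl Rl))).of_eq hq.symm
  simp only [test, Bool.and_eq_true, Bool.or_eq_true, decide_eq_true_eq] at h
  obtain ⟨-, h | ⟨hbr, hneg⟩⟩ := h
  · have := N (RT.add (S (-16777216) Rk)) h
    push_cast at this
    linarith
  generalize b.qq = q' at *
  generalize (⟨b.lc, b.lr, 0, 0, 0⟩ : AffForm) = l' at *
  generalize (⟨b.mc, 0, b.mr, 0, 0⟩ : AffForm) = m' at *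
  have Rw := M Rq Rp
  have Rr := ((S 2048 Ru).add (M Rq Rd)).of_eq (w := u / 8192 + q * d) (by push_cast; ring)
  generalize (smul 2048 u').add (q'.mul d') = r' at *
  generalize q'.mul p' = w' at *
  have Rm2 := M Rm Rm
  have Rml := M Rm (Rl.add (encl_const 33554432))
  generalize m'.mul m' = mm at *
  generalize m'.mul (l'.add (const 33554432)) = ml at *
  have Rmc := (S (16777216 - (n : ℤ) * 262144) Rm).add
    (S ((n : ℤ) * n * 4096 - n * 262144 - o * (n * 262144 + n * n * 4096)) Rm2)
  have Rl2 := M Ru ((S (-16777216 - (n : ℤ) * 262144) Rl).add (encl_const (-((n : ℤ) * 262144))))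
  have RZ := (Rl2.add (S (-16777216 - (n : ℤ) * 262144) (M Rm Rw))).add
    (M Rmc (M Rr ((encl_const 33554432).add (M Rv Rr))))
  have RC := (encl_const ((n : ℤ) * 262144 + n * n * 4096 + o * (n * 262144 + n * n * 4096))).add
    ((S (2 * ((n : ℤ) * n * 4096)) Rm).add
      (S ((n : ℤ) * n * 4096 - n * 262144 - o * (n * 262144 + n * n * 4096)) Rm2))
  have RX1 : (if o = 0 then smul (2 * ((n : ℤ) * 262144 + n * n * 4096)) (m'.mul r')
      else smul (o * ((n : ℤ) * 262144 + n * n * 4096)) (ml.mul (w'.add (smul 2048 u')))).Encl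
      x y z ((1 - o) * (2 * (σ + σ ^ 2)) * (μ * (u / 8192 + q * d))
        + o * (σ + σ ^ 2) * (μ * (l + 2) * (q * p + u / 8192))) := by
    rcases ho with rfl | rfl
    · exact (S _ (M Rm Rr)).of_eq (by rw [hσ]; push_cast; ring)
    · exact (S _ (M Rml (Rw.add (S 2048 Ru)))).of_eq (by rw [hσ]; push_cast; ring)
  have RX2 : (if o = 0 then smul (2 * ((n : ℤ) * 262144 + n * n * 4096)) (smul 2048 (m'.mul u'))
      else smul (o * ((n : ℤ) * 262144 + n * n * 4096)) (smul 2048 (ml.mul u'))).Encl x y z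
      ((1 - o) * (2 * (σ + σ ^ 2)) * (μ * u / 8192)
        + o * (σ + σ ^ 2) * (μ * (l + 2) * u / 8192)) := by
    rcases ho with rfl | rfl
    · exact (S _ (S 2048 (M Rm Ru))).of_eq (by rw [hσ]; push_cast; ring)
    · exact (S _ (S 2048 (M Rml Ru))).of_eq (by rw [hσ]; push_cast; ring)
  have RX := RZ.add RX1
  have RX0 := (Rl2.add (S 6144 Ru)).add RX2
  have hC : n = 0 → σ * ((1 - μ ^ 2) + σ * (1 + μ) ^ 2) + o * σ * (1 + σ) * (1 - μ ^ 2) = 0 := by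
    intro hn; simp [hσ, hn]
  have RC' := RC.of_eq (w := σ * ((1 - μ ^ 2) + σ * (1 + μ) ^ 2) + o * σ * (1 + σ) * (1 - μ ^ 2))
    (by rw [hσ]; push_cast; ring)
  refine ⟨?_, ?_, ?_⟩
  · by_cases hn : n = 0
    · rw [if_pos hn, Bool.and_eq_true] at hneg
      have h1 := mul_neg_of_pos_of_neg hv (N RX hneg.1)
      have h2 := hC hn
      simp only [certE]
      rw [h2]
      refine lt_of_eq_of_lt ?_ h1
      rw [hσ, hn]; push_cast; ring
    · rw [if_neg hn, Bool.and_eq_true] at hneg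
      refine lt_of_eq_of_lt ?_ (N (RC'.add (M Rv RX)) hneg.1)
      simp only [certE]; rw [hσ]; push_cast; ring
  · by_cases hn : n = 0
    · rw [if_pos hn, Bool.and_eq_true] at hneg
      have h1 := mul_neg_of_pos_of_neg hv (N RX0 hneg.2)
      have h2 := hC hn
      simp only [certE]
      rw [h2]
      refine lt_of_eq_of_lt ?_ h1
      rw [hσ, hn]; push_cast; ring
    · rw [if_neg hn, Bool.and_eq_true] at hneg
      refine lt_of_eq_of_lt ?_ (N (RC'.add (M Rv RX0)) hneg.2)
      simp only [certE]; rw [hσ]; push_cast; ring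
  · have : (2 * n * o * (b.mc + b.mr) : ℝ) ≤ (64 - n) * 16777216 := by exact_mod_cast hbr
    have h2 : (2 * n * o * (μ * 16777216) : ℝ) ≤ 2 * n * o * (b.mc + b.mr) := by gcongr
    rw [hσ]; linarith

end ParamBox

lemma certE_mono {l μ κ w r r' σ ω : ℝ} (hμ : 0 ≤ μ) (hσ : 0 ≤ σ) (hω : ω ≤ 1) (hr : 0 ≤ r)
    (hrr : r ≤ r') (hb : 0 ≤ (1 - σ) * (1 - μ * σ) - ω * μ * σ * (1 + σ)) :
    certE l μ κ w r σ ω ≤ certE l μ κ w r' σ ω := by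
  have e : (1 - σ) * μ + (σ ^ 2 - σ - ω * (σ + σ ^ 2)) * μ ^ 2 =
      μ * ((1 - σ) * (1 - μ * σ) - ω * μ * σ * (1 + σ)) := by ring
  simp only [certE]
  rw [e]
  have h1 : (1 - ω) * (2 * (σ + σ ^ 2)) * (μ * r) ≤ (1 - ω) * (2 * (σ + σ ^ 2)) * (μ * r') := by
    have : 0 ≤ 1 - ω := by linarith
    gcongr
  have h2 : r * (2 + r) ≤ r' * (2 + r') := by
    have : 0 ≤ r' := hr.trans hrr
    gcongr
  have h3 := mul_le_mul_of_nonneg_left h2 (mul_nonneg hμ hb)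
  linarith

lemma certE_convex {l μ κ w r σ ω τ ε : ℝ} (hμ : 0 ≤ μ) (hτ : 0 ≤ τ) (hτ1 : τ ≤ 1)
    (hb : 0 ≤ (1 - σ) * (1 - μ * σ) - ω * μ * σ * (1 + σ)) :
    certE l μ κ (τ * w) (ε + τ * r) σ ω ≤
      (1 - τ) * certE l μ κ 0 ε σ ω + τ * certE l μ κ w (ε + r) σ ω := by
  have e : (1 - σ) * μ + (σ ^ 2 - σ - ω * (σ + σ ^ 2)) * μ ^ 2 =
      μ * ((1 - σ) * (1 - μ * σ) - ω * μ * σ * (1 + σ)) := by ring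
  simp only [certE]
  rw [e]
  have h := mul_nonneg (mul_nonneg (mul_nonneg hμ hb) (mul_nonneg hτ (sub_nonneg.2 hτ1)))
    (sq_nonneg r)
  generalize (1 - σ) * (1 - μ * σ) - ω * μ * σ * (1 + σ) = B at *
  linear_combination h

lemma ups_nonneg {k : ℝ} (hk : 0 ≤ k) : 0 ≤ ups k := by
  unfold ups
  split_ifs with h
  · positivity
  · nlinarith

lemma dups_nonneg {k : ℝ} (hk : 0 ≤ k) : 0 ≤ dups k := by
  unfold dups
  split_ifs with h <;> positivity

/-- The interval test, read as a statement about real parameters. -/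
lemma certHolds_of_neg {l μ k θ T β q σ ω : ℝ} (hμ : 0 < μ) (hμ1 : μ ≤ 1)
    (hk0 : 0 < k) (hkθ : k ≤ θ) (hθ1 : θ ≤ 1) (hT : θ ≤ T) (hq0 : 0 < q)
    (hβ0 : 0 ≤ β) (hβ : β ≤ q) (hσ0 : 0 ≤ σ) (hσ1 : σ < 1) (hω : ω = 0 ∨ ω = 1)
    (h1 : certE l μ (k ^ 2) (q * ups k) (k ^ 2 / 8192 + q * (ups k + dups k * (T - k))) σ ω < 0)
    (h2 : certE l μ (k ^ 2) 0 0 σ ω + (1 - ω) * (2 * (σ + σ ^ 2)) * (μ * k ^ 2 / 8192)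
        + 6144 / 16777216 * k ^ 2 < 0)
    (h3 : 2 * σ * ω * μ ≤ 1 - σ) : CertHolds l μ k θ β := by
  have hk1 : k ^ 2 ≤ 1 := by nlinarith
  have hμσ : 0 ≤ 1 - μ * σ := by nlinarith
  have hb : 0 ≤ (1 - σ) * (1 - μ * σ) - ω * μ * σ * (1 + σ) := by
    rcases hω with rfl | rfl
    · have := mul_nonneg (sub_nonneg.2 hσ1.le) hμσ
      linarith
    · nlinarith
  have hb1 : (1 - σ) * (1 - μ * σ) - ω * μ * σ * (1 + σ) ≤ 1 := by
    have : (1 - σ) * (1 - μ * σ) ≤ 1 * 1 := by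
      have : 0 ≤ μ * σ := by positivity
      gcongr <;> linarith
    have : 0 ≤ ω * μ * σ * (1 + σ) := by
      have : 0 ≤ ω := by rcases hω with rfl | rfl <;> norm_num
      positivity
    linarith
  refine ⟨σ, ω, hσ0, hσ1, hω, hb, ?_⟩
  have hψ := ups_nonneg hk0.le
  have hd := dups_nonneg hk0.le
  have hω1 : ω ≤ 1 := by rcases hω with rfl | rfl <;> norm_num
  have hkθ' : 0 ≤ θ - k := sub_nonneg.2 hkθ
  have s1 := certE_mono (l := l) (κ := k ^ 2) (w := β * ups k)
    (r := k ^ 2 / 8192 + β * (ups k + dups k * (θ - k)))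
    (r' := k ^ 2 / 8192 + β * (ups k + dups k * (T - k))) hμ.le hσ0 hω1 (by positivity)
    (by gcongr) hb
  have hτ0 : 0 ≤ β / q := by positivity
  have hτ1 : β / q ≤ 1 := by rw [div_le_one hq0]; exact hβ
  have s2 := certE_convex (l := l) (κ := k ^ 2) (w := q * ups k)
    (r := q * (ups k + dups k * (T - k))) (ε := k ^ 2 / 8192) hμ.le hτ0 hτ1 hb
  have e1 : β / q * (q * ups k) = β * ups k := by field_simp
  have e2 : β / q * (q * (ups k + dups k * (T - k))) = β * (ups k + dups k * (T - k)) := by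
    field_simp
  rw [e1, e2] at s2
  have s3 : certE l μ (k ^ 2) 0 (k ^ 2 / 8192) σ ω < 0 := by
    refine lt_of_le_of_lt ?_ h2
    have e : (1 - σ) * μ + (σ ^ 2 - σ - ω * (σ + σ ^ 2)) * μ ^ 2 =
      μ * ((1 - σ) * (1 - μ * σ) - ω * μ * σ * (1 + σ)) := by ring
    simp only [certE]
    rw [e]
    have : μ * ((1 - σ) * (1 - μ * σ) - ω * μ * σ * (1 + σ)) ≤ 1 := by nlinarith
    have h5 : μ * ((1 - σ) * (1 - μ * σ) - ω * μ * σ * (1 + σ)) *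
        (k ^ 2 / 8192 * (2 + k ^ 2 / 8192)) ≤ 1 * (k ^ 2 / 8192 * (2 + 1)) := by
      gcongr
      linarith
    linarith
  rcases hτ0.eq_or_lt with h | h
  · rw [← h] at s2; linarith
  · have g0 := mul_nonpos_of_nonneg_of_nonpos (sub_nonneg.2 hτ1) s3.le
    have g1 := mul_neg_of_pos_of_neg h h1
    linarith

namespace ParamBox

open AffForm

variable {b : ParamBox}

lemma pos_of_testAt {g : Bool} {n o : ℕ} (h : testAt g b n o = true) :
    0 < b.invl ∧ 0 < b.root ∧ 0 < b.cc := by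
  unfold testAt at h
  cases g
  · exact pos_of_test (by simpa using h)
  · exact pos_of_test (by simpa using h)

lemma certHolds_of_test {g : Bool} {n o : ℕ} {l μ k θ β : ℝ} (h : testAt g b n o = true)
    (ho : o = 0 ∨ o = 1) (hn : n < 64) (hm : b.Mem l μ k) (hg : g = true ↔ k ≤ 2 / 3)
    (hl : 1 < l) (hμ : 0 < μ) (hμ1 : μ ≤ 1)
    (hk0 : 0 < k) (hkθ : k ≤ θ) (hθ : θ ^ 2 = 1 - 1 / l ^ 2)
    (hβ0 : 0 ≤ β) (hβ : β ≤ 2 * l ^ 2 / (l ^ 2 + 2)) :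
    CertHolds l μ k θ β := by
  obtain ⟨hu, hr, hc⟩ := pos_of_testAt h
  have hT := le_theta (by linarith) hθ hu hr
  have hq := le_qq (l := l) hc
  have hθ1 : θ ≤ 1 := by
    have : 0 < 1 / l ^ 2 := by positivity
    nlinarith
  have hq0 : (0 : ℝ) < b.q₀ / 16777216 + b.q₂ / 16777216 * (l * l) :=
    lt_of_lt_of_le (by positivity) hq
  have hσ1 : (n : ℝ) / 64 < 1 := by
    rw [div_lt_one (by norm_num)]; exact_mod_cast hn
  have hω : (o : ℝ) = 0 ∨ (o : ℝ) = 1 := by rcases ho with rfl | rfl <;> simp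
  obtain ⟨x, hx, hlx⟩ := exists_unit_coord hm.1
  obtain ⟨y, hy, hmy⟩ := exists_unit_coord hm.2.1
  obtain ⟨z, hz, hkz⟩ := exists_unit_coord hm.2.2
  have S : ∀ {p : AffForm} {v : ℝ} (n : ℤ), p.Encl x y z v →
    (smul n p).Encl x y z (n / 16777216 * v) := fun n hp => hp.smul n hx hy hz
  have M : ∀ {p q : AffForm} {v w : ℝ}, p.Encl x y z v → q.Encl x y z w →
    (mul p q).Encl x y z (v * w) := fun hp hq => hp.mul hq hx hy hz
  have Rl : Encl ⟨b.lc, b.lr, 0, 0, 0⟩ x y z l := by simp [Encl, hlx]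
  have Rk : b.var.Encl x y z k := by simp [Encl, var, hkz]
  have RT : b.theta.Encl x y z (b.slope₀ / 16777216 + b.slope₁ / 16777216 * l) :=
    (encl_const _).add (S _ Rl)
  have Rh := RT.add (S (-16777216) Rk)
  have Rk2 := M Rk Rk
  generalize hTe : (b.slope₀ / 16777216 + b.slope₁ / 16777216 * l : ℝ) = T at *
  cases g
  · have hk : ¬ k ≤ 2 / 3 := fun h => Bool.false_ne_true (hg.2 h)
    have Rp := (S 33554432 Rk2).add (encl_const (-8388608))
    obtain ⟨h1, h2, h3⟩ := test_neg (by simpa [testAt] using h) ho hx hy hz hm hlx hmy Rk rfl RT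
      rfl (hkθ.trans hT) (encl_const 16777216) Rk2 Rp (Rp.add (M (S 33554432 Rk) Rh))
      (by norm_num)
    refine certHolds_of_neg hμ hμ1 hk0 hkθ hθ1 hT hq0 hβ0 (hβ.trans hq) (by positivity) hσ1 hω
      ?_ ?_ h3
    · rw [ups, dups, if_neg hk, if_neg hk]
      refine lt_of_eq_of_lt ?_ h1
      congr 1 <;> push_cast <;> ring
    · refine lt_of_eq_of_lt ?_ h2
      push_cast
      congr 2
      · congr 1; ring
      · ring
      · ring
  · have hk : k ≤ 2 / 3 := hg.1 rfl
    have Rp := M Rk2 ((encl_const 14155776).add (S 28311552 Rk))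
    obtain ⟨h1, h2, h3⟩ := test_neg (by simpa [testAt] using h) ho hx hy hz hm hlx hmy Rk rfl RT
      rfl (hkθ.trans hT) Rk2 (encl_const 16777216) Rp
      (Rp.add (M ((S 28311552 Rk).add (S 70778880 Rk2)) Rh)) (by positivity)
    refine certHolds_of_neg hμ hμ1 hk0 hkθ hθ1 hT hq0 hβ0 (hβ.trans hq) (by positivity) hσ1 hω
      ?_ ?_ h3
    · rw [ups, dups, if_pos hk, if_pos hk]
      refine lt_of_eq_of_lt ?_ h1
      congr 1 <;> push_cast <;> ring
    · refine lt_of_eq_of_lt ?_ h2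
      push_cast
      congr 2
      · congr 1; ring
      · ring
      · ring

end ParamBox

namespace ParamBox

variable {b c : ParamBox}

lemma mem_half_aux {v : ℝ} {c r : ℤ} (h : |v * 16777216 - c| ≤ r) :
    |v * 16777216 - ((c + -1 * ((r + 1) / 2) : ℤ) : ℝ)| ≤ ((r + 1) / 2 : ℤ) ∨
      |v * 16777216 - ((c + 1 * ((r + 1) / 2) : ℤ) : ℝ)| ≤ ((r + 1) / 2 : ℤ) := by
  have h2 : r ≤ 2 * ((r + 1) / 2) := by omega
  have h2' : (r : ℝ) ≤ 2 * (((r + 1) / 2 : ℤ) : ℝ) := by exact_mod_cast h2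
  generalize (r + 1) / 2 = s at *
  rw [abs_le] at h
  push_cast
  rcases le_total (v * 16777216) c with h0 | h0
  · left; rw [abs_le]; constructor <;> linarith
  · right; rw [abs_le]; constructor <;> linarith

lemma mem_half {l μ k : ℝ} (i : ℕ) (hm : b.Mem l μ k) :
    (b.half i (-1)).Mem l μ k ∨ (b.half i 1).Mem l μ k := by
  obtain ⟨h1, h2, h3⟩ := hm
  unfold half
  split_ifs
  · exact (mem_half_aux h1).imp (fun h => ⟨h, h2, h3⟩) (fun h => ⟨h, h2, h3⟩)
  · exact (mem_half_aux h2).imp (fun h => ⟨h1, h, h3⟩) (fun h => ⟨h1, h, h3⟩)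
  · exact (mem_half_aux h3).imp (fun h => ⟨h1, h2, h⟩) (fun h => ⟨h1, h2, h⟩)

/-- An accepted branch-and-bound tree has an accepted leaf test for each point of the box. -/
lemma exists_test_of_run {g : Bool} {l μ : ℝ} {d : ℕ} {code code' : ℕ} :
    ∀ {b : ParamBox}, run g d b code = some code' → ∀ {k : ℝ}, b.Mem l μ k →
      ∃ (c : ParamBox) (n o : ℕ), testAt g c n o = true ∧ (o = 0 ∨ o = 1) ∧ n < 64 ∧
        c.Mem l μ k := by
  induction d generalizing code code' with
  | zero => intro b h; simp [run] at h
  | succ d ih =>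
    intro b h k hm
    rw [run] at h
    split_ifs at h with h1 h2
    · obtain ⟨c1, hc1, hc2⟩ := Option.bind_eq_some_iff.1 h
      rcases mem_half (code % 128) hm with hm | hm
      · exact ih hc1 hm
      · exact ih hc2 hm
    · exact ⟨b, _, _, h2, by omega, by omega, hm⟩

end ParamBox

/-- A branch-and-bound tree. -/
def lowerCode : ℕ :=
  3325523638569364600650770468269213820831710190067720365144945899337239207563507820383434487441146920436537198898879957590800240504217554223071607674429948477430930220223949958950910230101388736468272159242245865804194418456621072888625056611177082759346625868773089453810863387552153751191490011710830685510550000442581188467986090363355177523869058675135926210360224055017614016705842624682276887264861616872234185894542997516562733536815760499480685097316965329880612362250637341126224261135134005306131482655400730576686595120079799928111444375714746150232166204781899574058090529409875331825203824577386592937962932184503352521569565477140869994186854486712670566296305980778644452939580871224815503431175730088773194275490069182029916780638593692704316013683745992910342499404740146280483799924635478966466077431879548758889708526318937394476324508295950044395894442505187710239479314954472463979716655875905578186862449841862042589066945640317474962347699807375021078933608239203521471912360943136987786261148728827294691544294564142890681861956173231753530406931153830174338778737618190803702157641200789243547900634004129271271185674846116016984159811557021523582389504422748236580853176763654081115641449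86196904852991895954116946440615741234951848859767719521163435730904470667502395850752

set_option maxRecDepth 100000 in
lemma lower_run :
    ParamBox.run true 30 ⟨285212672, 268435456, 8388608, 8388608, 5592406, 5592406⟩ lowerCode =
      some 0 := by
  decide +kernel

/-- A branch-and-bound tree. -/
def upperCode : ℕ :=
  67655969506005248728945581518966574297103553056143937633766227194954996903750314400385106504160919064037704448917787835702665950878949938353333090560450218538854543361813383192221594201351372143211972391310583631866615858113224077392867036145026148361156494374788797622956516540499995254887183199510143991021157309820810911600613534058179979644866066700863975700717865351873310851359178971105710840742908556335038149891141066730973577170259014464965721048588477428742985422960808352019573258577067514248043874059087392674447341489342298360461685119581026963138257770935985891466462954642463262735267608269455561287294949797576375067443308189332125851423273678861663002209703085898995678029563440398336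

set_option maxRecDepth 100000 in
lemma upper_run :
    ParamBox.run false 30 ⟨285212672, 268435456, 8388608, 8388608, 13981013, 2796203⟩ upperCode =
      some 0 := by
  decide +kernel

lemma certHolds_of_le {l μ k θ β : ℝ} (hl : 1 < l) (hl' : l ≤ 33) (hμ : 0 < μ) (hμ1 : μ ≤ 1)
    (hk0 : 0 < k) (hkθ : k ≤ θ) (hθ : θ ^ 2 = 1 - 1 / l ^ 2)
    (hβ0 : 0 ≤ β) (hβ : β ≤ 2 * l ^ 2 / (l ^ 2 + 2)) : CertHolds l μ k θ β := by
  have hθ1 : θ ≤ 1 := by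
    have : 0 < 1 / l ^ 2 := by positivity
    nlinarith
  rcases le_or_gt k (2 / 3) with hk | hk
  · obtain ⟨c, n, o, h, ho, hn, hm⟩ := ParamBox.exists_test_of_run lower_run
      (l := l) (μ := μ) (k := k)
      ⟨by rw [abs_le]; push_cast; constructor <;> linarith,
        by rw [abs_le]; push_cast; constructor <;> linarith,
        by rw [abs_le]; push_cast; constructor <;> linarith⟩
    exact ParamBox.certHolds_of_test h ho hn hm (by simpa using hk) hl hμ hμ1 hk0 hkθ hθ hβ0 hβ
  · obtain ⟨c, n, o, h, ho, hn, hm⟩ := ParamBox.exists_test_of_run upper_run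
      (l := l) (μ := μ) (k := k)
      ⟨by rw [abs_le]; push_cast; constructor <;> linarith,
        by rw [abs_le]; push_cast; constructor <;> linarith,
        by rw [abs_le]; push_cast; constructor <;> linarith⟩
    exact ParamBox.certHolds_of_test h ho hn hm (by simpa using hk) hl hμ hμ1 hk0 hkθ hθ hβ0 hβ

lemma certHolds {l μ k θ β : ℝ} (hl : 1 < l) (hμ : 0 < μ) (hμ1 : μ ≤ 1)
    (hk0 : 0 < k) (hkθ : k ≤ θ) (hθ : θ ^ 2 = 1 - 1 / l ^ 2)
    (hβ0 : 0 ≤ β) (hβ : β ≤ 2 * l ^ 2 / (l ^ 2 + 2)) : CertHolds l μ k θ β := by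
  rcases le_or_gt l 33 with h | h
  · exact certHolds_of_le hl h hμ hμ1 hk0 hkθ hθ hβ0 hβ
  have hθ1 : θ ≤ 1 := by
    have : 0 < 1 / l ^ 2 := by positivity
    nlinarith
  have hk1 : k ≤ 1 := hkθ.trans hθ1
  have hβ2 : β ≤ 2 := by
    refine hβ.trans ?_
    rw [div_le_iff₀ (by positivity)]
    linarith
  have hψ := ups_nonneg hk0.le
  have hd := dups_nonneg hk0.le
  have hkθ' : 0 ≤ θ - k := sub_nonneg.2 hkθ
  have hρ : ups k + dups k * (θ - k) ≤ 9 / 4 * k ^ 2 := by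
    have h1 : ups k + dups k * (θ - k) ≤ ups k + dups k * (1 - k) := by gcongr
    refine h1.trans ?_
    unfold ups dups
    split_ifs with hk
    · have : 27 / 32 * k ^ 4 + 27 / 16 * k ^ 5 + (27 / 16 * k ^ 3 + 135 / 32 * k ^ 4) * (1 - k) =
        k ^ 2 * (27 / 16 * k + 27 / 8 * k ^ 2 - 81 / 32 * k ^ 3) := by ring
      rw [this, mul_comm]
      gcongr
      nlinarith [mul_nonneg hk0.le (sub_nonneg.2 hk), pow_pos hk0 3]
    · nlinarith [sq_nonneg (k - 4 / 9)]
  have hr0 : 0 ≤ k ^ 2 / 8192 + β * (ups k + dups k * (θ - k)) := by positivity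
  have hr : k ^ 2 / 8192 + β * (ups k + dups k * (θ - k)) ≤ 23 / 5 * k ^ 2 := by
    nlinarith [sq_nonneg k]
  have hw : 0 ≤ β * ups k := by positivity
  refine ⟨0, 0, le_rfl, one_pos, Or.inl rfl, by norm_num, ?_⟩
  simp only [certE]
  generalize k ^ 2 / 8192 + β * (ups k + dups k * (θ - k)) = r at *
  generalize β * ups k = w at *
  have hk2 : k ^ 2 ≤ 1 := by nlinarith
  have hA : μ * (r * (2 + r)) ≤ 1 * (23 / 5 * k ^ 2 * (2 + 23 / 5 * 1)) := by
    have : r ≤ 23 / 5 * 1 := hr.trans (by gcongr)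
    gcongr
  have hB : 0 ≤ μ * w := by positivity
  nlinarith [pow_pos hk0 2]

section PolyakLojasiewicz

variable {X : Type*} [NormedAddCommGroup X] [InnerProductSpace ℝ X]

/-- Quadratic growth from the Polyak–Łojasiewicz inequality. -/
lemma quadratic_growth [FiniteDimensional ℝ X] {f : X → ℝ} {g : X → X} {C m a : ℝ} (hm : 0 < m)
    (hf : ∀ x h, f (x + h) ≤ f x + ⟪g x, h⟫ + C * ‖h‖ ^ 2) (hc : Continuous f)
    (ha : ∀ x, a ≤ f x) (hatt : ∃ x, f x = a) (hpl : ∀ x, 2 * m * (f x - a) ≤ ‖g x‖ ^ 2) (x₀ : X) :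
    m / 2 * Metric.infDist x₀ {x | f x = a} ^ 2 ≤ f x₀ - a := by
  by_contra! hlt
  set S : Set X := {x | f x = a} with hS
  have hSne : S.Nonempty := hatt
  set D := Metric.infDist x₀ S with hD
  have hD0 : 0 ≤ D := Metric.infDist_nonneg
  have hDpos : 0 < D := by
    rcases hD0.eq_or_lt with h | h
    · rw [← h] at hlt; have := ha x₀; norm_num at hlt; linarith
    · exact h
  set p : X → ℝ := fun x => √(2 / m * (f x - a)) with hp
  have hpc : Continuous p := by fun_prop
  have hp0 : ∀ x, 0 ≤ p x := fun x => Real.sqrt_nonneg _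
  have hpsq : ∀ x, p x ^ 2 = 2 / m * (f x - a) := fun x =>
    Real.sq_sqrt (mul_nonneg (by positivity) (sub_nonneg.2 (ha x)))
  have hpf : ∀ x, f x - a = m / 2 * p x ^ 2 := fun x => by rw [hpsq]; field_simp
  have hpD : p x₀ < D := by
    rw [hpf] at hlt
    have := lt_of_mul_lt_mul_left hlt (by positivity)
    exact lt_of_pow_lt_pow_left₀ 2 hD0 this
  obtain ⟨s, hs, hs1⟩ := exists_between ((div_lt_one hDpos).2 hpD)
  have hs0 : 0 < s := lt_of_le_of_lt (div_nonneg (hp0 _) hD0) hs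
  rw [div_lt_iff₀ hDpos] at hs
  have hcont : Continuous fun x => p x + s * ‖x - x₀‖ := by fun_prop
  obtain ⟨z, hzm, hz⟩ := (isCompact_closedBall x₀ D).exists_isMinOn
    ⟨x₀, Metric.mem_closedBall_self hD0⟩ hcont.continuousOn
  have hz0 : p z + s * ‖z - x₀‖ ≤ p x₀ := by
    have := hz (Metric.mem_closedBall_self hD0)
    simpa using this
  have hzD : ‖z - x₀‖ < D := by
    have : s * ‖z - x₀‖ < s * D := by have := hp0 z; linarith
    exact lt_of_mul_lt_mul_left this hs0.le
  have hall : ∀ x, p z + s * ‖z - x₀‖ ≤ p x + s * ‖x - x₀‖ := by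
    intro x
    by_cases hx : x ∈ Metric.closedBall x₀ D
    · exact hz hx
    · have : D < ‖x - x₀‖ := by simpa [dist_eq_norm] using hx
      have := mul_lt_mul_of_pos_left this hs0
      have := hp0 x
      linarith
  have hpz : 0 < p z := by
    rcases (hp0 z).eq_or_lt with h | h
    · exfalso
      have hzS : z ∈ S := by
        have := hpf z
        rw [← h] at this
        have : f z = a := by nlinarith
        exact this
      have := Metric.infDist_le_dist_of_mem (x := x₀) hzS
      rw [dist_comm, dist_eq_norm] at this
      linarith
    · exact h
  have hg : m * p z ≤ ‖g z‖ := by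
    have := hpl z
    rw [hpf] at this
    refine le_of_sq_le_sq ?_ (norm_nonneg _)
    nlinarith
  have hgpos : 0 < ‖g z‖ := lt_of_lt_of_le (by positivity) hg
  have key : ∀ t : ℝ, 0 < t → s * t * ‖g z‖ ≤ p z → ‖g z‖ ≤ m * p z * s + C * t * ‖g z‖ := by
    intro t ht hts
    have h1 := hall (z + (-t) • g z)
    have h2 : ‖z + (-t) • g z - x₀‖ ≤ ‖z - x₀‖ + t * ‖g z‖ := by
      have : z + (-t) • g z - x₀ = (z - x₀) + (-t) • g z := by abel
      rw [this]
      refine (norm_add_le _ _).trans ?_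
      rw [norm_smul, Real.norm_eq_abs, abs_neg, abs_of_pos ht]
    have h3 : p z - s * t * ‖g z‖ ≤ p (z + (-t) • g z) := by
      have := mul_le_mul_of_nonneg_left h2 hs0.le
      linarith
    have h4 := hf z ((-t) • g z)
    rw [inner_smul_right, real_inner_self_eq_norm_sq, norm_smul, Real.norm_eq_abs, abs_neg,
      abs_of_pos ht] at h4
    have h5 : (p z - s * t * ‖g z‖) ^ 2 ≤ p (z + (-t) • g z) ^ 2 := by
      gcongr
    have h6 := hpf (z + (-t) • g z)
    have h7 := hpf z
    have h8 : m / 2 * (p z - s * t * ‖g z‖) ^ 2 ≤ m / 2 * p (z + (-t) • g z) ^ 2 := by gcongr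
    have h9 : t * ‖g z‖ * ‖g z‖ ≤ t * ‖g z‖ * (m * p z * s + C * t * ‖g z‖) := by
      nlinarith [sq_nonneg (s * t * ‖g z‖)]
    exact le_of_mul_le_mul_left h9 (by positivity)
  have hlim : Filter.Tendsto (fun t : ℝ => m * p z * s + C * t * ‖g z‖) (nhdsWithin 0 (Set.Ioi 0))
      (nhds (m * p z * s + C * 0 * ‖g z‖)) := by
    apply Filter.Tendsto.mono_left _ nhdsWithin_le_nhds
    exact Continuous.tendsto (by fun_prop) _
  have hfin := ge_of_tendsto hlim (b := ‖g z‖) (by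
    have h1 : ∀ᶠ t : ℝ in nhdsWithin 0 (Set.Ioi 0), s * t * ‖g z‖ < p z := by
      apply Filter.Eventually.filter_mono nhdsWithin_le_nhds
      apply ContinuousAt.eventually_lt (by fun_prop) (by fun_prop)
      simpa using hpz
    filter_upwards [h1, self_mem_nhdsWithin] with t ht ht0
    exact key t ht0 ht.le)
  have : m * p z * s < m * p z * 1 := by gcongr
  linarith

end PolyakLojasiewicz

section Certificate

variable {X : Type*} [NormedAddCommGroup X] [InnerProductSpace ℝ X]

lemma certE_nonneg {A C v : X} {l μ κ w r W σ ω : ℝ} (hv : ‖v‖ = 1) (hμ : 0 < μ) (hl : 0 < l)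
    (h₁ : μ ^ 2 * W + μ * l * κ + μ * ‖C‖ ^ 2 ≤ ‖A‖ ^ 2)
    (h₂ : ‖A - C‖ ^ 2 - 2 * ⟪A + C, v⟫ + 2 * μ * W + (2 * l + 1) * κ ≤ 1)
    (h₃ : ‖A‖ ^ 2 + 2 * ⟪A, v⟫ ≤ 1 + μ * l * (W - 1) + 2 * μ * W)
    (hA : ‖A‖ ≤ μ * (1 + r)) (hW : 1 + w ≤ W) (hW' : W ≤ 1 + w + κ / 8192)
    (hσ : 0 ≤ σ) (hσ1 : σ < 1) (hω : ω = 0 ∨ ω = 1)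
    (hc : 0 ≤ (1 - σ) * (1 - μ * σ) - ω * μ * σ * (1 + σ)) : 0 ≤ certE l μ κ w r σ ω := by
  have hω0 : 0 ≤ ω := by rcases hω with rfl | rfl <;> norm_num
  have hω1 : 0 ≤ 1 - ω := by rcases hω with rfl | rfl <;> norm_num
  have hsq := sq_nonneg ‖C - σ • (A + v)‖
  rw [norm_sub_sq_real, norm_smul, mul_pow, norm_add_sq_real A v, inner_smul_right, inner_add_right,
    Real.norm_eq_abs, sq_abs, hv] at hsq
  rw [norm_sub_sq_real, inner_add_left] at h₂
  have hav : ⟪A, v⟫ ≤ μ * (1 + r) := by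
    have := real_inner_le_norm A v
    rw [hv, mul_one] at this
    linarith
  have ha2 : ‖A‖ ^ 2 ≤ (μ * (1 + r)) ^ 2 := by gcongr
  rw [real_inner_comm A C] at hsq
  unfold certE
  generalize ‖A‖ ^ 2 = a at *
  generalize ‖C‖ ^ 2 = c at *
  generalize ⟪A, C⟫ = s at *
  generalize ⟪C, v⟫ = t at *
  generalize ⟪A, v⟫ = u at *
  have e₁ := mul_nonneg (sub_nonneg.2 hσ1.le) (sub_nonneg.2 h₁)
  have e₂ := mul_nonneg (mul_nonneg hμ.le hσ) (sub_nonneg.2 h₂)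
  have e₃ := mul_nonneg (mul_nonneg hμ.le (mul_nonneg (mul_nonneg hω0 hσ)
    (by linarith : 0 ≤ 1 + σ))) (sub_nonneg.2 h₃)
  have e₄ := mul_nonneg hμ.le hsq
  have e₅ := mul_nonneg hc (sub_nonneg.2 ha2)
  have e₆ := mul_nonneg (mul_nonneg hμ.le (mul_nonneg (mul_nonneg hω1 hσ)
    (by linarith : 0 ≤ 1 + σ))) (sub_nonneg.2 hav)
  have e₇ := mul_nonneg (mul_nonneg (sq_nonneg μ) (by linarith : 0 ≤ 1 + σ)) (sub_nonneg.2 hW)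
  have e₈ := mul_nonneg (mul_nonneg (sq_nonneg μ) (mul_nonneg (mul_nonneg hω0 hσ)
    (mul_nonneg (by linarith : 0 ≤ 1 + σ) (by linarith : 0 ≤ l + 2)))) (sub_nonneg.2 hW')
  refine nonneg_of_mul_nonneg_right ?_ hμ
  rcases hω with rfl | rfl
  · linarith
  · linarith

end Certificate

/-- Data of an `l`-smooth zero-sum game with two-sided PL inequality, value `c`, gradients `gx`
and `gy`, and marginal functions `Φ = max F` and `Ψ = min F`. -/
structure IsPLGame {X Y : Type*} [NormedAddCommGroup X] [InnerProductSpace ℝ X]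
    [NormedAddCommGroup Y] [InnerProductSpace ℝ Y] (F : X → Y → ℝ) (gx : X → Y → X)
    (gy : X → Y → Y) (l m₁ m₂ : ℝ) (Φ : X → ℝ) (Ψ : Y → ℝ) (c : ℝ) : Prop where
  l_pos : 0 < l
  m₁_pos : 0 < m₁
  m₂_pos : 0 < m₂
  cont : Continuous fun p : X × Y => F p.1 p.2
  smooth : ∀ x y x' y', |F x' y' - F x y - ⟪gx x y, x' - x⟫ - ⟪gy x y, y' - y⟫| ≤
    l / 2 * (‖x' - x‖ ^ 2 + ‖y' - y‖ ^ 2)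
  lip : ∀ x₁ y₁ x₂ y₂, ‖gx x₁ y₁ - gx x₂ y₂‖ ^ 2 + ‖gy x₁ y₁ - gy x₂ y₂‖ ^ 2 ≤
    l ^ 2 * (‖x₁ - x₂‖ ^ 2 + ‖y₁ - y₂‖ ^ 2)
  le_max : ∀ x y, F x y ≤ Φ x
  max_att : ∀ x, ∃ y, F x y = Φ x
  min_le : ∀ x y, Ψ y ≤ F x y
  min_att : ∀ y, ∃ x, F x y = Ψ y
  val_le : ∀ x, c ≤ Φ x
  le_val : ∀ y, Ψ y ≤ c
  val_att : ∃ x, Φ x = c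
  val_att' : ∃ y, Ψ y = c
  pl₁ : ∀ x y, 2 * m₁ * (F x y - Ψ y) ≤ ‖gx x y‖ ^ 2
  pl₂ : ∀ x y, 2 * m₂ * (Φ x - F x y) ≤ ‖gy x y‖ ^ 2

lemma hasFDerivAt_of_abs_le {X : Type*} [NormedAddCommGroup X] [InnerProductSpace ℝ X] {f : X → ℝ}
    {g x : X} {C : ℝ} (h : ∀ x', |f x' - f x - ⟪g, x' - x⟫| ≤ C * ‖x' - x‖ ^ 2) :
    HasFDerivAt f (innerSL ℝ g) x := by
  rw [hasFDerivAt_iff_isLittleO]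
  have h1 : (fun x' => f x' - f x - innerSL ℝ g (x' - x)) =O[nhds x] fun x' => ‖x' - x‖ ^ 2 := by
    refine Asymptotics.IsBigO.of_bound C (Filter.Eventually.of_forall fun x' => ?_)
    rw [Real.norm_eq_abs, Real.norm_eq_abs, abs_of_nonneg (sq_nonneg ‖x' - x‖)]
    simpa using h x'
  refine h1.trans_isLittleO ?_
  have h2 : (fun x' : X => ‖x' - x‖ ^ 2) =o[nhds x] fun x' => ‖x' - x‖ := by
    have h3 : Filter.Tendsto (fun x' : X => ‖x' - x‖) (nhds x) (nhds 0) := by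
      have : Continuous fun x' : X => ‖x' - x‖ := by fun_prop
      simpa using this.tendsto x
    have h4 : (fun x' : X => ‖x' - x‖) =o[nhds x] (fun _ => (1 : ℝ)) :=
      (Asymptotics.isLittleO_one_iff ℝ).2 h3
    have := h4.mul_isBigO (Asymptotics.isBigO_refl (fun x' : X => ‖x' - x‖) (nhds x))
    simpa [sq] using this
  exact h2.trans_isBigO (Asymptotics.isBigO_refl _ _).norm_left

lemma inner_midpoint_identity {X : Type*} [NormedAddCommGroup X] [InnerProductSpace ℝ X] {l : ℝ}
    (hl : 0 < l) (a₁ a₂ x₁ x₂ w : X)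
    (hw : w = (1 / 2 : ℝ) • (x₁ + x₂) + (1 / (2 * l)) • (a₂ - a₁)) :
    ⟪a₁, w - x₁⟫ - ⟪a₂, w - x₂⟫ + l / 2 * (‖w - x₁‖ ^ 2 + ‖w - x₂‖ ^ 2) =
      1 / 2 * ⟪a₁ + a₂, x₂ - x₁⟫ + (l ^ 2 * ‖x₂ - x₁‖ ^ 2 - ‖a₂ - a₁‖ ^ 2) / (4 * l) := by
  obtain ⟨d, rfl⟩ : ∃ d, x₂ = x₁ + d := ⟨x₂ - x₁, by abel⟩
  obtain ⟨b, rfl⟩ : ∃ b, a₂ = a₁ + b := ⟨a₂ - a₁, by abel⟩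
  have h1 : w - x₁ = (1 / 2 : ℝ) • d + (1 / (2 * l)) • b := by rw [hw]; module
  have h2 : w - (x₁ + d) = (1 / (2 * l)) • b - (1 / 2 : ℝ) • d := by rw [hw]; module
  rw [h1, h2, add_sub_cancel_left, add_sub_cancel_left, norm_add_sq_real, norm_sub_sq_real]
  simp only [inner_add_left, inner_add_right, inner_sub_right, inner_smul_right, inner_smul_left,
    norm_smul, mul_pow, Real.norm_eq_abs, sq_abs, real_inner_self_eq_norm_sq, RCLike.conj_to_real]
  rw [real_inner_comm d b]
  field_simp
  ring

namespace IsPLGame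

variable {X Y : Type*} [NormedAddCommGroup X] [InnerProductSpace ℝ X]
  [NormedAddCommGroup Y] [InnerProductSpace ℝ Y] {F : X → Y → ℝ} {gx : X → Y → X}
  {gy : X → Y → Y} {l m₁ m₂ : ℝ} {Φ : X → ℝ} {Ψ : Y → ℝ} {c : ℝ}
  (H : IsPLGame F gx gy l m₁ m₂ Φ Ψ c)

lemma swap (H : IsPLGame F gx gy l m₁ m₂ Φ Ψ c) :
    IsPLGame (fun y x => -F x y) (fun y x => -gy x y) (fun y x => -gx x y) l m₂ m₁
      (fun y => -Ψ y) (fun x => -Φ x) (-c) where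
  l_pos := H.l_pos
  m₁_pos := H.m₂_pos
  m₂_pos := H.m₁_pos
  cont := (H.cont.comp continuous_swap).neg
  smooth y x y' x' := by
    have := H.smooth x y x' y'
    rw [← abs_neg, add_comm (‖y' - y‖ ^ 2)]
    convert this using 2
    simp only [inner_neg_left]
    ring
  lip y₁ x₁ y₂ x₂ := by
    have := H.lip x₁ y₁ x₂ y₂
    rw [neg_sub_neg, neg_sub_neg, norm_sub_rev (gy x₂ y₂), norm_sub_rev (gx x₂ y₂), add_comm,
      add_comm (‖y₁ - y₂‖ ^ 2)]
    exact this
  le_max y x := neg_le_neg (H.min_le x y)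
  max_att y := (H.min_att y).imp fun _ h => by rw [h]
  min_le y x := neg_le_neg (H.le_max x y)
  min_att x := (H.max_att x).imp fun _ h => by rw [h]
  val_le y := neg_le_neg (H.le_val y)
  le_val x := neg_le_neg (H.val_le x)
  val_att := H.val_att'.imp fun _ h => by rw [h]
  val_att' := H.val_att.imp fun _ h => by rw [h]
  pl₁ y x := by rw [norm_neg, neg_sub_neg]; exact H.pl₂ x y
  pl₂ y x := by rw [norm_neg, neg_sub_neg]; exact H.pl₁ x y

include H

lemma interpolation (x₁ : X) (y₁ : Y) (x₂ : X) (y₂ : Y) :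
    F x₂ y₂ - F x₁ y₁ ≤ 1 / 2 * ⟪gx x₁ y₁ + gx x₂ y₂, x₂ - x₁⟫ +
      1 / 2 * ⟪gy x₁ y₁ + gy x₂ y₂, y₂ - y₁⟫ +
      (l ^ 2 * (‖x₂ - x₁‖ ^ 2 + ‖y₂ - y₁‖ ^ 2) - ‖gx x₂ y₂ - gx x₁ y₁‖ ^ 2 -
        ‖gy x₂ y₂ - gy x₁ y₁‖ ^ 2) / (4 * l) := by
  obtain ⟨w, hw⟩ : ∃ w, w = (1 / 2 : ℝ) • (x₁ + x₂) + (1 / (2 * l)) • (gx x₂ y₂ - gx x₁ y₁) :=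
    ⟨_, rfl⟩
  obtain ⟨v, hv⟩ : ∃ v, v = (1 / 2 : ℝ) • (y₁ + y₂) + (1 / (2 * l)) • (gy x₂ y₂ - gy x₁ y₁) :=
    ⟨_, rfl⟩
  have e₁ := inner_midpoint_identity H.l_pos _ _ _ _ _ hw
  have e₂ := inner_midpoint_identity H.l_pos _ _ _ _ _ hv
  have s₁ := (abs_le.1 (H.smooth x₁ y₁ w v)).2
  have s₂ := (abs_le.1 (H.smooth x₂ y₂ w v)).1
  have e₃ : (l ^ 2 * (‖x₂ - x₁‖ ^ 2 + ‖y₂ - y₁‖ ^ 2) - ‖gx x₂ y₂ - gx x₁ y₁‖ ^ 2 -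
        ‖gy x₂ y₂ - gy x₁ y₁‖ ^ 2) / (4 * l) =
      (l ^ 2 * ‖x₂ - x₁‖ ^ 2 - ‖gx x₂ y₂ - gx x₁ y₁‖ ^ 2) / (4 * l) +
      (l ^ 2 * ‖y₂ - y₁‖ ^ 2 - ‖gy x₂ y₂ - gy x₁ y₁‖ ^ 2) / (4 * l) := by ring
  rw [e₃]
  linarith

lemma norm_gy_sq_le (x : X) (y : Y) : ‖gy x y‖ ^ 2 ≤ 2 * l * (Φ x - F x y) := by
  have h := (abs_le.1 (H.smooth x y x (y + (1 / l) • gy x y))).1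
  have hl := H.l_pos
  have h' := H.le_max x (y + (1 / l) • gy x y)
  rw [sub_self, add_sub_cancel_left, inner_zero_right, inner_smul_right, norm_smul, norm_zero,
    real_inner_self_eq_norm_sq, mul_pow, Real.norm_eq_abs, sq_abs] at h
  have e : l / 2 * (0 ^ 2 + (1 / l) ^ 2 * ‖gy x y‖ ^ 2) = ‖gy x y‖ ^ 2 / (2 * l) := by
    field_simp; ring
  have e' : 1 / l * ‖gy x y‖ ^ 2 = 2 * (‖gy x y‖ ^ 2 / (2 * l)) := by field_simp
  rw [e, e'] at h
  have : ‖gy x y‖ ^ 2 / (2 * l) ≤ Φ x - F x y := by linarith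
  rw [div_le_iff₀ (by positivity)] at this
  linarith

lemma norm_gx_sq_le (x : X) (y : Y) : ‖gx x y‖ ^ 2 ≤ 2 * l * (F x y - Ψ y) := by
  have := H.swap.norm_gy_sq_le y x
  rw [norm_neg, neg_sub_neg] at this
  exact this

lemma gy_eq_zero {x : X} {y : Y} (h : F x y = Φ x) : gy x y = 0 := by
  have := H.norm_gy_sq_le x y
  rw [h, sub_self, mul_zero] at this
  have := pow_eq_zero_iff two_ne_zero |>.1 (le_antisymm this (sq_nonneg _))
  exact norm_eq_zero.1 this

lemma gx_eq_zero {x : X} {y : Y} (h : F x y = Ψ y) : gx x y = 0 := by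
  have := H.swap.gy_eq_zero (x := y) (y := x) (by rw [h])
  simpa using this

lemma max_lower {x : X} {y : Y} (h : F x y = Φ x) (x' : X) :
    Φ x + ⟪gx x y, x' - x⟫ - l / 2 * ‖x' - x‖ ^ 2 ≤ Φ x' := by
  have h1 := (abs_le.1 (H.smooth x y x' y)).1
  have := H.le_max x' y
  simp only [sub_self, inner_zero_right, norm_zero] at h1
  linarith

lemma max_upper {x : X} {y : Y} (h : F x y = Φ x) (x' : X) :
    Φ x' ≤ Φ x + ⟪gx x y, x' - x⟫ + (l / 2 + l ^ 2 / (2 * m₂)) * ‖x' - x‖ ^ 2 := by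
  have h1 := (abs_le.1 (H.smooth x y x' y)).2
  have h2 := H.lip x' y x y
  have h3 := H.pl₂ x' y
  have hm := H.m₂_pos
  rw [H.gy_eq_zero h, sub_zero, sub_self y] at h2
  simp only [sub_self, inner_zero_right, norm_zero] at h1 h2
  have h4 : Φ x' - F x' y ≤ l ^ 2 * ‖x' - x‖ ^ 2 / (2 * m₂) := by
    rw [le_div_iff₀ (by positivity)]
    nlinarith [sq_nonneg ‖gx x' y - gx x y‖]
  have : l ^ 2 * ‖x' - x‖ ^ 2 / (2 * m₂) = l ^ 2 / (2 * m₂) * ‖x' - x‖ ^ 2 := by ring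
  linarith

lemma hasFDerivAt_max {x : X} {y : Y} (h : F x y = Φ x) :
    HasFDerivAt Φ (innerSL ℝ (gx x y)) x := by
  refine hasFDerivAt_of_abs_le (C := l / 2 + l ^ 2 / (2 * m₂)) fun x' => abs_le.2 ⟨?_, ?_⟩
  · have h1 := H.max_lower h x'
    have hm := H.m₂_pos
    have : 0 ≤ l ^ 2 / (2 * m₂) * ‖x' - x‖ ^ 2 := by positivity
    linarith
  · have h1 := H.max_upper h x'
    linarith

lemma hasFDerivAt_left (x : X) (y : Y) :
    HasFDerivAt (fun x' => F x' y) (innerSL ℝ (gx x y)) x := by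
  refine hasFDerivAt_of_abs_le (C := l / 2) fun x' => ?_
  simpa using H.smooth x y x' y

lemma continuous_max : Continuous Φ := by
  rw [continuous_iff_continuousAt]
  intro x
  obtain ⟨y, hy⟩ := H.max_att x
  exact (H.hasFDerivAt_max hy).continuousAt

lemma continuous_min : Continuous Ψ := by
  exact H.swap.continuous_max.neg.congr fun y => neg_neg _

lemma gx_unique {x : X} {y y' : Y} (h : F x y = Φ x) (h' : F x y' = Φ x) : gx x y = gx x y' := by
  have := (H.hasFDerivAt_max h).unique (H.hasFDerivAt_max h')
  exact ext_inner_right ℝ fun v => by simpa using DFunLike.congr_fun this v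

lemma val_pl {x : X} {y : Y} (h : F x y = Φ x) : 2 * m₁ * (Φ x - c) ≤ ‖gx x y‖ ^ 2 := by
  refine le_trans ?_ (H.pl₁ x y)
  have := H.m₁_pos
  have := H.le_val y
  rw [h]
  gcongr

variable [FiniteDimensional ℝ X] [FiniteDimensional ℝ Y]

omit [FiniteDimensional ℝ Y] in
lemma max_growth (x : X) : m₁ / 2 * Metric.infDist x {x | Φ x = c} ^ 2 ≤ Φ x - c := by
  choose y hy using H.max_att
  refine quadratic_growth (g := fun x => gx x (y x)) (C := l / 2 + l ^ 2 / (2 * m₂)) H.m₁_pos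
    (fun x h => ?_) H.continuous_max H.val_le H.val_att (fun x => H.val_pl (hy x)) x
  simpa using H.max_upper (hy x) (x + h)

omit [FiniteDimensional ℝ Y] in
lemma growth_left (x : X) (y : Y) :
    m₁ / 2 * Metric.infDist x {x | F x y = Ψ y} ^ 2 ≤ F x y - Ψ y := by
  refine quadratic_growth (f := fun x => F x y) (g := fun x => gx x y) (C := l / 2) H.m₁_pos
    (fun x h => ?_) (H.cont.comp (by fun_prop : Continuous fun x : X => (x, y)))
    (fun x => H.min_le x y) (H.min_att y) (fun x => H.pl₁ x y) x
  have := (abs_le.1 (H.smooth x y (x + h) y)).2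
  simp only [add_sub_cancel_left, sub_self, inner_zero_right, norm_zero] at this
  linarith

omit [FiniteDimensional ℝ X] in
lemma growth_right (x : X) (y : Y) :
    m₂ / 2 * Metric.infDist y {y | F x y = Φ x} ^ 2 ≤ Φ x - F x y := by
  have := H.swap.growth_left y x
  simp only [neg_inj] at this
  linarith

end IsPLGame

namespace IsPLGame

variable {X Y : Type*} [NormedAddCommGroup X] [InnerProductSpace ℝ X]
  [NormedAddCommGroup Y] [InnerProductSpace ℝ Y] {F : X → Y → ℝ} {gx : X → Y → X}
  {gy : X → Y → Y} {l m₁ m₂ m : ℝ} {Φ : X → ℝ} {Ψ : Y → ℝ} {c : ℝ}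

section

variable (H : IsPLGame F gx gy l m₁ m₂ Φ Ψ c)

include H

lemma min_eq_of_max_eq {x : X} {y : Y} (hx : Φ x = c) (h : F x y = Φ x) : Ψ y = c := by
  have h0 : innerSL ℝ (gx x y) = 0 := by
    refine IsLocalMin.hasFDerivAt_eq_zero ?_ (H.hasFDerivAt_max h)
    exact Filter.Eventually.of_forall fun x' => by rw [hx]; exact H.val_le x'
  have h1 : gx x y = 0 := ext_inner_right ℝ fun v => by simpa using DFunLike.congr_fun h0 v
  have h2 := H.pl₁ x y
  rw [h1, norm_zero, h, hx] at h2
  have := H.le_val y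
  have := H.m₁_pos
  nlinarith

lemma max_eq_of_min_eq {x : X} {y : Y} (hy : Ψ y = c) (h : F x y = Ψ y) : Φ x = c := by
  have := H.swap.min_eq_of_max_eq (x := y) (y := x) (by rw [hy]) (by rw [h])
  linarith

lemma apply_eq {x : X} {y : Y} (hx : Φ x = c) (hy : Ψ y = c) : F x y = c :=
  le_antisymm (hx ▸ H.le_max x y) (hy ▸ H.min_le x y)

lemma isClosed_argmax (x : X) : IsClosed {y | F x y = Φ x} :=
  isClosed_eq (H.cont.comp (by fun_prop : Continuous fun y : Y => (x, y))) continuous_const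

lemma isClosed_opt_left : IsClosed {x | Φ x = c} := isClosed_eq H.continuous_max continuous_const

lemma isClosed_opt_right : IsClosed {y | Ψ y = c} := isClosed_eq H.continuous_min continuous_const

variable [FiniteDimensional ℝ Y]

lemma exists_nearest_argmax (x : X) (y : Y) :
    ∃ y', F x y' = Φ x ∧ m₂ / 2 * ‖y - y'‖ ^ 2 ≤ Φ x - F x y ∧
      ‖y - y'‖ = Metric.infDist y {y | F x y = Φ x} := by
  obtain ⟨y', h, h'⟩ := (H.isClosed_argmax x).exists_infDist_eq_dist (H.max_att x) y
  rw [dist_eq_norm] at h'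
  exact ⟨y', h, h' ▸ H.growth_right x y, h'.symm⟩

end

lemma infDist_argmax_le [FiniteDimensional ℝ Y] (H : IsPLGame F gx gy l m 1 Φ Ψ c) {Λ : ℝ}
    (hΛ : 0 ≤ Λ) (hΛl : l ^ 2 - 1 ≤ Λ ^ 2) {x₁ : X} {y₁ : Y} (h₁ : F x₁ y₁ = Φ x₁) (x₂ : X) :
    Metric.infDist y₁ {y | F x₂ y = Φ x₂} ≤ Λ * ‖x₂ - x₁‖ := by
  refine le_of_forall_pos_le_add fun ε' hε' => ?_
  obtain ⟨ε, hε, rfl⟩ : ∃ ε : ℝ, 0 < ε ∧ ε' = 2 * ε := ⟨ε' / 2, by positivity, by ring⟩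
  set h := x₂ - x₁ with hh
  have hy : ∀ t : ℝ, ∃ y, F (x₁ + t • h) y = Φ (x₁ + t • h) ∧
      1 / 2 * ‖y₁ - y‖ ^ 2 ≤ Φ (x₁ + t • h) - F (x₁ + t • h) y₁ := fun t =>
    (H.exists_nearest_argmax (x₁ + t • h) y₁).imp fun y hy => ⟨hy.1, hy.2.1⟩
  choose y hyM hyd using hy
  set φ : ℝ → ℝ := fun t => Φ (x₁ + t • h) - F (x₁ + t • h) y₁ with hφ
  have hφ0 : ∀ t, 0 ≤ φ t := fun t => sub_nonneg.2 (H.le_max _ _)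
  have hline : ∀ t : ℝ, HasDerivAt (fun t : ℝ => x₁ + t • h) h t := fun t => by
    simpa using ((hasDerivAt_id t).smul_const h).const_add x₁
  have hder : ∀ t, HasDerivAt φ (⟪gx (x₁ + t • h) (y t), h⟫ - ⟪gx (x₁ + t • h) y₁, h⟫) t := by
    intro t
    have e1 := (H.hasFDerivAt_max (hyM t)).comp_hasDerivAt t (hline t)
    have e2 := (H.hasFDerivAt_left (x₁ + t • h) y₁).comp_hasDerivAt t (hline t)
    exact e1.sub e2
  have hbd : ∀ t s, 0 ≤ s → φ t = 1 / 2 * s ^ 2 →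
      ⟪gx (x₁ + t • h) (y t), h⟫ - ⟪gx (x₁ + t • h) y₁, h⟫ ≤ Λ * s * ‖h‖ := by
    intro t s hs hts
    rw [← inner_sub_left]
    refine (real_inner_le_norm _ _).trans (mul_le_mul_of_nonneg_right ?_ (norm_nonneg _))
    have e1 := H.lip (x₁ + t • h) (y t) (x₁ + t • h) y₁
    have e2 := H.pl₂ (x₁ + t • h) y₁
    have e3 := hyd t
    change 2 * 1 * φ t ≤ _ at e2
    change _ ≤ φ t at e3
    rw [H.gy_eq_zero (hyM t), zero_sub, norm_neg, sub_self, norm_zero, norm_sub_rev (y t)] at e1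
    rw [hts] at e2 e3
    refine le_of_sq_le_sq ?_ (by positivity)
    have e4 : l ^ 2 * ‖y₁ - y t‖ ^ 2 ≤ l ^ 2 * s ^ 2 := by
      gcongr ?_ * ?_
      linarith
    nlinarith [mul_nonneg (sub_nonneg.2 hΛl) (sq_nonneg s)]
  have hcmp : φ 1 ≤ 1 / 2 * ((Λ * ‖h‖ + ε) * 1 + ε) ^ 2 := by
    refine image_le_of_deriv_right_lt_deriv_boundary (a := 0) (b := 1)
      (B := fun t => 1 / 2 * ((Λ * ‖h‖ + ε) * t + ε) ^ 2)
      (B' := fun t => ((Λ * ‖h‖ + ε) * t + ε) * (Λ * ‖h‖ + ε))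
      (fun t _ => (hder t).continuousAt.continuousWithinAt)
      (fun t _ => (hder t).hasDerivWithinAt) ?_ ?_ ?_ ⟨zero_le_one, le_rfl⟩
    · have : φ 0 = 0 := by simp [hφ, h₁]
      rw [this]; positivity
    · intro t
      have := ((((hasDerivAt_id t).const_mul (Λ * ‖h‖ + ε)).add_const ε).pow 2).const_mul (1 / 2)
      refine this.congr_deriv ?_
      push_cast
      simp only [id]
      ring
    · intro t ht hts
      have ht0 := ht.1
      have hs : 0 < (Λ * ‖h‖ + ε) * t + ε := by positivity
      refine (hbd t _ hs.le hts).trans_lt ?_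
      nlinarith
  have hg := H.growth_right x₂ y₁
  have hx : x₁ + (1 : ℝ) • h = x₂ := by rw [hh]; module
  have hφ1 : φ 1 = Φ x₂ - F x₂ y₁ := by simp only [hφ, hx]
  rw [← hφ1] at hg
  refine le_of_sq_le_sq ?_ (by positivity)
  calc _ ≤ 2 * φ 1 := by linarith
    _ ≤ (Λ * ‖h‖ + 2 * ε) ^ 2 := by
      have : (Λ * ‖h‖ + ε) * 1 + ε = Λ * ‖h‖ + 2 * ε := by ring
      rw [this] at hcmp
      linarith

end IsPLGame

lemma hasDerivAt_ups (k : ℝ) : HasDerivAt ups (2 * dups k) k := by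
  have h1 : HasDerivAt (fun k : ℝ => 27 / 32 * k ^ 4 + 27 / 16 * k ^ 5)
      (27 / 8 * k ^ 3 + 135 / 16 * k ^ 4) k := by
    refine (((hasDerivAt_pow 4 k).const_mul (27 / 32)).add
      ((hasDerivAt_pow 5 k).const_mul (27 / 16))).congr_deriv ?_
    push_cast; ring
  have h2 : HasDerivAt (fun k : ℝ => 2 * k ^ 2 - 1 / 2) (4 * k) k := by
    refine (((hasDerivAt_pow 2 k).const_mul 2).sub_const (1 / 2)).congr_deriv ?_
    push_cast; ring
  rcases lt_trichotomy k (2 / 3) with h | h | h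
  · refine (h1.congr_of_eventuallyEq ?_).congr_deriv ?_
    · filter_upwards [eventually_lt_nhds h] with y hy
      simp [ups, hy.le]
    · simp only [dups, h.le, if_true]; ring
  · subst h
    have a1 : HasDerivWithinAt ups (2 * dups (2 / 3)) (Set.Iic (2 / 3)) (2 / 3) := by
      refine ((h1.congr_deriv ?_).hasDerivWithinAt (s := Set.Iic (2 / 3))).congr
        (fun y hy => ?_) ?_
      · norm_num [dups]
      · exact if_pos hy
      · exact if_pos le_rfl
    have a2 : HasDerivWithinAt ups (2 * dups (2 / 3)) (Set.Ici (2 / 3)) (2 / 3) := by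
      refine ((h2.congr_deriv ?_).hasDerivWithinAt (s := Set.Ici (2 / 3))).congr
        (fun y hy => ?_) ?_
      · norm_num [dups]
      · rcases (show (2 / 3 : ℝ) ≤ y from hy).eq_or_lt with rfl | hy
        · norm_num [ups]
        · exact if_neg hy.not_ge
      · norm_num [ups]
    have := a1.union a2
    rwa [Set.Iic_union_Ici, hasDerivWithinAt_univ] at this
  · refine (h2.congr_of_eventuallyEq ?_).congr_deriv ?_
    · filter_upwards [eventually_gt_nhds h] with y hy
      simp [ups, hy.not_ge]
    · simp only [dups, h.not_ge, if_false]; ring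

lemma continuous_ups : Continuous ups :=
  continuous_iff_continuousAt.2 fun k => (hasDerivAt_ups k).continuousAt

lemma ups_zero : ups 0 = 0 := by norm_num [ups]

lemma ups_mono {a b : ℝ} (ha : 0 ≤ a) (hab : a ≤ b) : ups a ≤ ups b := by
  refine monotoneOn_of_deriv_nonneg (convex_Ici 0) continuous_ups.continuousOn
    (fun k _ => (hasDerivAt_ups k).differentiableAt.differentiableWithinAt) (fun k hk => ?_)
    (Set.mem_Ici.2 ha) (Set.mem_Ici.2 (ha.trans hab)) hab
  rw [interior_Ici] at hk
  rw [(hasDerivAt_ups k).deriv]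
  have := dups_nonneg (le_of_lt hk)
  positivity

lemma ups_lower {k : ℝ} (hk : 0 ≤ k) : 2 * k ^ 2 - 1 / 2 ≤ ups k := by
  unfold ups
  split_ifs with h
  · have : 27 / 32 * k ^ 4 + 27 / 16 * k ^ 5 - (2 * k ^ 2 - 1 / 2) =
        (k - 2 / 3) ^ 2 * (27 / 16 * k ^ 3 + 99 / 32 * k ^ 2 + 27 / 8 * k + 9 / 8) := by ring
    rw [← sub_nonneg, this]
    positivity
  · exact le_rfl

lemma ups_upper {k : ℝ} (hk : 0 ≤ k) (hk1 : k ≤ 1) : ups k ≤ 9 / 4 * k ^ 3 := by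
  unfold ups
  split_ifs with h
  · have h2 : k ^ 2 ≤ 2 / 3 * k := by nlinarith
    have : 27 / 32 * k ^ 4 + 27 / 16 * k ^ 5 = k ^ 3 * (27 / 32 * k + 27 / 16 * k ^ 2) := by ring
    rw [this, mul_comm]
    gcongr
    linarith
  · push Not at h
    nlinarith [mul_nonneg (sub_nonneg.2 h.le) (sub_nonneg.2 hk1),
      pow_pos (lt_trans (by norm_num) h) 2]

lemma mul_dups_sub_le {k : ℝ} (hk : 0 ≤ k) : k * dups k - ups k ≤ 1 / 2 := by
  unfold ups dups
  split_ifs with h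
  · have h4 : k ^ 4 ≤ (2 / 3) ^ 4 := by gcongr
    have h5 : k ^ 5 ≤ (2 / 3) ^ 5 := by gcongr
    linarith
  · linarith

lemma ups_scale_mono {K a b : ℝ} (hK : 0 ≤ K) (ha : 0 < a) (hab : a ≤ b) :
    a ^ 2 / 2 + a ^ 2 * ups (K / a) ≤ b ^ 2 / 2 + b ^ 2 * ups (K / b) := by
  have hd : ∀ x : ℝ, 0 < x → HasDerivAt (fun x => x ^ 2 / 2 + x ^ 2 * ups (K / x))
      (x * (1 + 2 * ups (K / x) - 2 * (K / x * dups (K / x)))) x := by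
    intro x hx
    have h1 : HasDerivAt (fun x => K / x) (-K / x ^ 2) x := by
      refine ((hasDerivAt_const x K).div (hasDerivAt_id x) hx.ne').congr_deriv ?_
      simp
    have h2 := (hasDerivAt_ups (K / x)).comp x h1
    refine (((hasDerivAt_pow 2 x).div_const 2).add ((hasDerivAt_pow 2 x).mul h2)).congr_deriv ?_
    simp only [Function.comp]
    field_simp
    ring
  refine monotoneOn_of_deriv_nonneg (convex_Ioi 0)
    (fun x hx => (hd x hx).continuousAt.continuousWithinAt)
    (fun x hx => (hd x (interior_subset hx)).differentiableAt.differentiableWithinAt)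
    (fun x hx => ?_) ha (ha.trans_le hab) hab
  have hx' : 0 < x := interior_subset hx
  rw [(hd x hx').deriv]
  have := mul_dups_sub_le (k := K / x) (by positivity)
  refine mul_nonneg hx'.le (by linarith)

/-- Monotonicity of the distance comparison function in both distances. -/
lemma comparison_mono {β l a b κ κ' : ℝ} (hβ : 0 ≤ β) (hβ2 : β ≤ 2) (hl : 0 < l) (ha : 0 < a)
    (hab : a ≤ b) (hκ : 0 ≤ κ) (hκκ' : κ ≤ κ') :
    a ^ 2 + β * a ^ 2 * ups (κ / (l * a)) ≤ b ^ 2 + β * b ^ 2 * ups (κ' / (l * b)) := by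
  have hb := ha.trans_le hab
  have h1 := ups_scale_mono (K := κ / l) (by positivity) ha hab
  have h2 : ups (κ / l / b) ≤ ups (κ' / l / b) := ups_mono (by positivity) (by gcongr)
  rw [div_div, div_div] at *
  have h3 : a ^ 2 ≤ b ^ 2 := by gcongr
  have h4 := mul_le_mul_of_nonneg_left h2 (mul_nonneg hβ (sq_nonneg b))
  have h5 := mul_le_mul_of_nonneg_left h1 hβ
  nlinarith

lemma hasDerivAt_comparison {β l D κ g θ : ℝ} (hl : 0 < l) (hD : 0 < D) :
    HasDerivAt (fun t : ℝ => (D - t * g) ^ 2 +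
      β * (D - t * g) ^ 2 * ups ((κ - l * θ * (t * g)) / (l * (D - t * g))))
      (-(2 * D * g * (1 + β * (ups (κ / (l * D)) +
        dups (κ / (l * D)) * (θ - κ / (l * D)))))) 0 := by
  have h1 : HasDerivAt (fun t : ℝ => D - t * g) (-g) 0 := by
    simpa using ((hasDerivAt_id (0 : ℝ)).mul_const g).const_sub D
  have h2 : HasDerivAt (fun t : ℝ => κ - l * θ * (t * g)) (-(l * θ * g)) 0 := by
    simpa using (((hasDerivAt_id (0 : ℝ)).mul_const g).const_mul (l * θ)).const_sub κ
  have h3 := h2.div (h1.const_mul l) (by rw [zero_mul, sub_zero]; positivity)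
  have h4 := (hasDerivAt_ups ((κ - l * θ * (0 * g)) / (l * (D - 0 * g)))).comp (0 : ℝ) h3
  refine ((h1.pow 2).add (((h1.pow 2).const_mul β).mul h4)).congr_deriv ?_
  simp only [Function.comp, zero_mul, mul_zero, sub_zero, Pi.div_apply, Pi.pow_apply]
  field_simp
  ring

namespace IsPLGame

variable {X Y : Type*} [NormedAddCommGroup X] [InnerProductSpace ℝ X] [FiniteDimensional ℝ X]
  [NormedAddCommGroup Y] [InnerProductSpace ℝ Y] [FiniteDimensional ℝ Y]
  {F : X → Y → ℝ} {gx : X → Y → X}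
  {gy : X → Y → Y} {l m : ℝ} {Φ : X → ℝ} {Ψ : Y → ℝ} {c : ℝ}
  (H : IsPLGame F gx gy l m 1 Φ Ψ c)

include H

omit [FiniteDimensional ℝ Y] in
lemma exists_nearest_left (x : X) :
    ∃ xs, Φ xs = c ∧ ‖x - xs‖ = Metric.infDist x {x | Φ x = c} := by
  obtain ⟨xs, h, h'⟩ := H.isClosed_opt_left.exists_infDist_eq_dist H.val_att x
  exact ⟨xs, h, by rw [h', dist_eq_norm]⟩

omit [FiniteDimensional ℝ X] in
lemma exists_nearest_right (y : Y) :
    ∃ ys, Ψ ys = c ∧ ‖y - ys‖ = Metric.infDist y {y | Ψ y = c} := by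
  obtain ⟨ys, h, h'⟩ := H.isClosed_opt_right.exists_infDist_eq_dist H.val_att' y
  exact ⟨ys, h, by rw [h', dist_eq_norm]⟩

omit [FiniteDimensional ℝ X] [FiniteDimensional ℝ Y] in
lemma infDist_opt_right_le {xs : X} (hs : Φ xs = c) (y : Y) :
    Metric.infDist y {y | Ψ y = c} ≤ Metric.infDist y {y | F xs y = Φ xs} :=
  Metric.infDist_le_infDist_of_subset (fun _ h => H.min_eq_of_max_eq hs h) (H.max_att xs)

omit [FiniteDimensional ℝ X] [FiniteDimensional ℝ Y] in
lemma infDist_opt_left_le {ys : Y} (hs : Ψ ys = c) (x : X) :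
    Metric.infDist x {x | Φ x = c} ≤ Metric.infDist x {x | F x ys = Ψ ys} :=
  Metric.infDist_le_infDist_of_subset (fun _ h => H.max_eq_of_min_eq hs h) (H.min_att ys)

lemma infDist_right_le {Λ : ℝ} (hΛ : 0 ≤ Λ) (hΛl : l ^ 2 - 1 ≤ Λ ^ 2) {x : X} {y : Y}
    (h : F x y = Φ x) :
    Metric.infDist y {y | Ψ y = c} ≤ Λ * Metric.infDist x {x | Φ x = c} := by
  obtain ⟨xs, hs, hd⟩ := H.exists_nearest_left x
  rw [← hd, norm_sub_rev]
  exact (H.infDist_opt_right_le hs y).trans (H.infDist_argmax_le hΛ hΛl h xs)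

omit [FiniteDimensional ℝ Y] in
lemma le_of_infDist_pos {x : X} (hx : 0 < Metric.infDist x {x | Φ x = c}) : m ≤ l := by
  obtain ⟨xs, hs, hd⟩ := H.exists_nearest_left x
  obtain ⟨ys, hys⟩ := H.val_att'
  have hF := H.apply_eq hs hys
  have h1 := H.growth_left x ys
  have h2 := H.infDist_opt_left_le hys x
  have h3 := (abs_le.1 (H.smooth xs ys x ys)).2
  rw [H.gx_eq_zero (hF.trans hys.symm), H.gy_eq_zero (hF.trans hs.symm), hd, hF] at h3
  simp only [inner_zero_left, sub_self, norm_zero] at h3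
  rw [hys] at h1
  have hm := H.m₁_pos
  have h4 : m / 2 * Metric.infDist x {x | Φ x = c} ^ 2 ≤
      m / 2 * Metric.infDist x {x | F x ys = c} ^ 2 := by
    rw [hys] at h2
    have := hx.le
    gcongr
  have h5 : m * Metric.infDist x {x | Φ x = c} ^ 2 ≤ l * Metric.infDist x {x | Φ x = c} ^ 2 := by
    linarith
  exact le_of_mul_le_mul_right h5 (by positivity)

lemma certE_nonneg_of_point {x : X} {y : Y} (h : F x y = Φ x) {D μ k W r w σ ω : ℝ}
    (hD : Metric.infDist x {x | Φ x = c} = D) (hD0 : 0 < D) (hμ : m = μ * l) (hk0 : 0 ≤ k)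
    (hk : Metric.infDist y {y | Ψ y = c} = l * D * k) (hW : Φ x - c = m / 2 * D ^ 2 * W)
    (hr : ‖gx x y‖ ≤ m * D * (1 + r)) (hw : 1 + w ≤ W) (hw' : W ≤ 1 + w + k ^ 2 / 8192)
    (hσ : 0 ≤ σ) (hσ1 : σ < 1) (hω : ω = 0 ∨ ω = 1)
    (hc : 0 ≤ (1 - σ) * (1 - μ * σ) - ω * μ * σ * (1 + σ)) :
    0 ≤ certE l μ (k ^ 2) w r σ ω := by
  have hl := H.l_pos
  have hm := H.m₁_pos
  have hμ0 : 0 < μ := by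
    rw [hμ] at hm
    exact pos_of_mul_pos_left hm hl.le
  obtain ⟨xs, hs, hxs⟩ := H.exists_nearest_left x
  obtain ⟨ys, hys⟩ := H.val_att'
  rw [hD] at hxs
  have hlD : 0 < l * D := by positivity
  obtain ⟨A, hA⟩ : ∃ A, gx x y = (l * D) • A :=
    ⟨(l * D)⁻¹ • gx x y, (smul_inv_smul₀ hlD.ne' _).symm⟩
  obtain ⟨C, hC⟩ : ∃ C, gx xs y = (l * D) • C :=
    ⟨(l * D)⁻¹ • gx xs y, (smul_inv_smul₀ hlD.ne' _).symm⟩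
  obtain ⟨v, hv⟩ : ∃ v, x - xs = D • v := ⟨D⁻¹ • (x - xs), (smul_inv_smul₀ hD0.ne' _).symm⟩
  have hv1 : ‖v‖ = 1 := by
    rw [hv, norm_smul, Real.norm_of_nonneg hD0.le] at hxs
    exact mul_left_cancel₀ hD0.ne' (by rw [hxs, mul_one])
  have he : (l * D * k) ^ 2 / 2 ≤ c - F xs y := by
    have h1 := H.growth_right xs y
    have h2 := H.infDist_opt_right_le hs y
    rw [hk] at h2
    rw [hs] at h1 h2
    have : (l * D * k) ^ 2 ≤ Metric.infDist y {y | F xs y = c} ^ 2 := by gcongr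
    linarith
  have hnA : ‖gx x y‖ = l * D * ‖A‖ := by rw [hA, norm_smul, Real.norm_of_nonneg hlD.le]
  have hnC : ‖gx xs y‖ = l * D * ‖C‖ := by rw [hC, norm_smul, Real.norm_of_nonneg hlD.le]
  have hD2 : 0 < l ^ 2 * D ^ 2 := by positivity
  refine certE_nonneg (A := A) (C := C) hv1 hμ0 hl ?_ ?_ ?_ ?_ hw hw' hσ hσ1 hω hc
  · have h1 := H.pl₁ x y
    have h2 := H.norm_gx_sq_le xs y
    rw [hnA, h] at h1
    rw [hnC] at h2
    have h3 := mul_le_mul_of_nonneg_left h2 hμ0.le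
    have h4 := mul_le_mul_of_nonneg_left he hm.le
    refine le_of_mul_le_mul_left ?_ hD2
    subst hμ
    linear_combination h1 + h3 + 2 * h4 - 2 * (μ * l) * hW
  · have h1 := H.interpolation xs y x y
    have h2 := H.pl₂ xs y
    have e1 : ‖gx x y - gx xs y‖ ^ 2 = l ^ 2 * D ^ 2 * ‖A - C‖ ^ 2 := by
      rw [hA, hC, ← smul_sub, norm_smul, Real.norm_of_nonneg hlD.le]; ring
    have e2 : ⟪gx xs y + gx x y, x - xs⟫ = l * D ^ 2 * ⟪A + C, v⟫ := by
      rw [hA, hC, ← smul_add, hv, inner_smul_left, inner_smul_right, add_comm]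
      simp; ring
    rw [e1, e2, hxs, sub_self, inner_zero_right, norm_zero, H.gy_eq_zero h, zero_sub, norm_neg, h]
      at h1
    rw [hs] at h2
    have h3 := mul_le_mul_of_nonneg_left h1 (by positivity : 0 ≤ 4 * l)
    rw [mul_add, mul_div_cancel₀ _ (by positivity : 4 * l ≠ 0)] at h3
    have h4 := mul_le_mul_of_nonneg_left he (by positivity : 0 ≤ 4 * l + 2)
    refine le_of_mul_le_mul_left ?_ hD2
    subst hμ
    linear_combination h3 + h4 + h2 - 4 * l * hW
  · obtain ⟨y₀, hy₀, hd, -⟩ := H.exists_nearest_argmax x ys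
    have hF := H.apply_eq hs hys
    have h1 := H.interpolation x y₀ xs ys
    have h2 := H.growth_left x ys
    have h3 := H.infDist_opt_left_le hys x
    rw [hD] at h3
    have e2 : ⟪gx x y₀ + 0, xs - x⟫ = -(l * D ^ 2 * ⟪A, v⟫) := by
      rw [add_zero, H.gx_unique hy₀ h, hA, ← neg_sub, hv, inner_neg_right, inner_smul_left,
        inner_smul_right]
      simp; ring
    rw [H.gx_eq_zero (hF.trans hys.symm), H.gy_eq_zero (hF.trans hs.symm), e2, hF, hy₀,
      norm_sub_rev xs, hxs, H.gy_eq_zero hy₀, zero_sub, norm_neg, H.gx_unique hy₀ h, hnA, add_zero,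
      inner_zero_left, sub_self, norm_zero] at h1
    have h5 : m / 2 * D ^ 2 ≤ m / 2 * Metric.infDist x {x | F x ys = Ψ ys} ^ 2 := by gcongr
    have h6 := mul_le_mul_of_nonneg_left h1 (by positivity : 0 ≤ 4 * l)
    rw [mul_add, mul_div_cancel₀ _ (by positivity : 4 * l ≠ 0)] at h6
    have h7 : ‖ys - y₀‖ ^ 2 ≤ 2 * (Φ x - c) - m * D ^ 2 := by rw [hys] at h2 h5; linarith
    have h8 := mul_le_mul_of_nonneg_left h7 (sq_nonneg l)
    refine le_of_mul_le_mul_left ?_ hD2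
    subst hμ
    linear_combination h6 + h8 + (2 * l ^ 2 + 4 * l) * hW
  · rw [hnA] at hr
    refine le_of_mul_le_mul_left ?_ hlD
    rw [hμ] at hr
    linarith

end IsPLGame

namespace IsPLGame

variable {X Y : Type*} [NormedAddCommGroup X] [InnerProductSpace ℝ X] [FiniteDimensional ℝ X]
  [NormedAddCommGroup Y] [InnerProductSpace ℝ Y] [FiniteDimensional ℝ Y]
  {F : X → Y → ℝ} {gx : X → Y → X}
  {gy : X → Y → Y} {l m : ℝ} {Φ : X → ℝ} {Ψ : Y → ℝ} {c : ℝ}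

/-- The refined quadratic growth inequality with coefficient `β` along the graph of the argmax. -/
def Growth (F : X → Y → ℝ) (Φ : X → ℝ) (Ψ : Y → ℝ) (c l m β : ℝ) : Prop :=
  ∀ x y, F x y = Φ x → Metric.infDist x {x | Φ x = c} ^ 2 +
    β * Metric.infDist x {x | Φ x = c} ^ 2 *
      ups (Metric.infDist y {y | Ψ y = c} / (l * Metric.infDist x {x | Φ x = c})) ≤
    2 / m * (Φ x - c)

omit [FiniteDimensional ℝ Y] in
lemma growth_zero (H : IsPLGame F gx gy l m 1 Φ Ψ c) : Growth F Φ Ψ c l m 0 := by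
  intro x y _
  have h := H.max_growth x
  have hm := H.m₁_pos
  rw [zero_mul, zero_mul, add_zero, div_mul_eq_mul_div, le_div_iff₀ hm]
  linarith

/-- Penalised minimality of the growth gap bounds the gradient. -/
lemma norm_gx_le_of_min (H : IsPLGame F gx gy l m 1 Φ Ψ c) {θ β s r : ℝ} (hθ : 0 ≤ θ)
    (hθl : l ^ 2 - 1 ≤ (l * θ) ^ 2) (hβ : 0 ≤ β) (hβ2 : β ≤ 2) (hs : 0 ≤ s) (hr : 0 < r)
    {x : X} {y : Y} (h : F x y = Φ x)
    (hD : 0 < Metric.infDist x {x | Φ x = c}) (hκ : 0 < Metric.infDist y {y | Ψ y = c})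
    (hmin : ∀ x' y', F x' y' = Φ x' → ‖x' - x‖ < r → ‖y' - y‖ < r →
      2 / m * (Φ x - c) - (Metric.infDist x {x | Φ x = c} ^ 2 +
        β * Metric.infDist x {x | Φ x = c} ^ 2 *
        ups (Metric.infDist y {y | Ψ y = c} / (l * Metric.infDist x {x | Φ x = c}))) ≤
      2 / m * (Φ x' - c) - (Metric.infDist x' {x | Φ x = c} ^ 2 +
        β * Metric.infDist x' {x | Φ x = c} ^ 2 *
        ups (Metric.infDist y' {y | Ψ y = c} / (l * Metric.infDist x' {x | Φ x = c}))) +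
        s * (‖x' - x‖ + ‖y' - y‖)) :
    ‖gx x y‖ ≤ m * (Metric.infDist x {x | Φ x = c} *
      (1 + β * (ups (Metric.infDist y {y | Ψ y = c} / (l * Metric.infDist x {x | Φ x = c})) +
        dups (Metric.infDist y {y | Ψ y = c} / (l * Metric.infDist x {x | Φ x = c})) *
        (θ - Metric.infDist y {y | Ψ y = c} / (l * Metric.infDist x {x | Φ x = c})))) +
      s * (1 + l * θ) / 2) := by
  have hl := H.l_pos
  have hm := H.m₁_pos
  set D := Metric.infDist x {x | Φ x = c} with hDdef
  set κ := Metric.infDist y {y | Ψ y = c} with hκdef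
  set g := ‖gx x y‖ with hg
  have hlθ : 0 ≤ l * θ := by positivity
  have hgpos : 0 < g := by
    have h1 := H.val_pl h
    have h2 := H.max_growth x
    have h3 : 0 < m / 2 * D ^ 2 := by positivity
    have h4 : 0 < 2 * m * (Φ x - c) := mul_pos (by positivity) (by linarith)
    refine (norm_nonneg _).lt_of_ne fun h0 => ?_
    rw [← h0] at h1
    linarith
  set C := l / 2 + l ^ 2 / (2 * 1) with hC
  set u : ℝ → ℝ := fun t => (D - t * g) ^ 2 +
      β * (D - t * g) ^ 2 * ups ((κ - l * θ * (t * g)) / (l * (D - t * g))) with hu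
  have hu' := hasDerivAt_comparison (β := β) (κ := κ) (g := g) (θ := θ) hl hD
  set R := 1 + β * (ups (κ / (l * D)) + dups (κ / (l * D)) * (θ - κ / (l * D))) with hR
  change HasDerivAt u _ 0 at hu'
  have hp : HasDerivAt (fun t : ℝ => 2 / m * (t * g ^ 2 - C * g ^ 2 * t ^ 2) + u t -
      s * (1 + l * θ) * g * t) (2 / m * g ^ 2 + -(2 * D * g * R) - s * (1 + l * θ) * g) 0 := by
    have h1 := ((hasDerivAt_id (0 : ℝ)).mul_const (g ^ 2)).sub
      ((hasDerivAt_pow 2 (0 : ℝ)).const_mul (C * g ^ 2))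
    have h2 := ((h1.const_mul (2 / m)).add hu').sub
      ((hasDerivAt_id (0 : ℝ)).const_mul (s * (1 + l * θ) * g))
    refine h2.congr_deriv ?_
    simp
  have hslope := hp.tendsto_slope_zero_right
  have hle : 2 / m * g ^ 2 + -(2 * D * g * R) - s * (1 + l * θ) * g ≤ 0 := by
    refine le_of_tendsto hslope ?_
    have e1 : ∀ᶠ t : ℝ in nhdsWithin 0 (Set.Ioi 0), t * g < D := by
      refine Filter.Eventually.filter_mono nhdsWithin_le_nhds ?_
      exact ContinuousAt.eventually_lt (by fun_prop) (by fun_prop) (by simpa using hD)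
    have e2 : ∀ᶠ t : ℝ in nhdsWithin 0 (Set.Ioi 0), l * θ * (t * g) < κ := by
      refine Filter.Eventually.filter_mono nhdsWithin_le_nhds ?_
      exact ContinuousAt.eventually_lt (by fun_prop) (by fun_prop) (by simpa using hκ)
    have e3 : ∀ᶠ t : ℝ in nhdsWithin 0 (Set.Ioi 0), t * g < r := by
      refine Filter.Eventually.filter_mono nhdsWithin_le_nhds ?_
      exact ContinuousAt.eventually_lt (by fun_prop) (by fun_prop) (by simpa using hr)
    have e4 : ∀ᶠ t : ℝ in nhdsWithin 0 (Set.Ioi 0), l * θ * (t * g) < r := by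
      refine Filter.Eventually.filter_mono nhdsWithin_le_nhds ?_
      exact ContinuousAt.eventually_lt (by fun_prop) (by fun_prop) (by simpa using hr)
    filter_upwards [e1, e2, e3, e4, self_mem_nhdsWithin] with t h1 h2 h3 h4 ht
    have ht0 : (0 : ℝ) < t := ht
    refine mul_nonpos_of_nonneg_of_nonpos (inv_nonneg.2 ht0.le) ?_
    set x' := x - t • gx x y with hx'
    have hxx : x' - x = -(t • gx x y) := by rw [hx']; abel
    have hxn : ‖x' - x‖ = t * g := by
      rw [hxx, norm_neg, norm_smul, Real.norm_of_nonneg ht0.le]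
    obtain ⟨y', hy', -, hyd⟩ := H.exists_nearest_argmax x' y
    have hyn : ‖y' - y‖ ≤ l * θ * (t * g) := by
      rw [norm_sub_rev, hyd, ← hxn]
      exact H.infDist_argmax_le hlθ hθl h x'
    have hm1 := hmin x' y' hy' (by rwa [hxn]) (hyn.trans_lt h4)
    have hup := H.max_upper h x'
    rw [hxn, hxx, inner_neg_right, inner_smul_right, real_inner_self_eq_norm_sq, ← hg, ← hC] at hup
    have hD' : D - t * g ≤ Metric.infDist x' {x | Φ x = c} := by
      have := Metric.infDist_le_infDist_add_dist (s := {x | Φ x = c}) (x := x) (y := x')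
      rw [dist_comm, dist_eq_norm, hxn] at this
      linarith
    have hκ' : κ - l * θ * (t * g) ≤ Metric.infDist y' {y | Ψ y = c} := by
      have := Metric.infDist_le_infDist_add_dist (s := {y | Ψ y = c}) (x := y) (y := y')
      rw [dist_comm, dist_eq_norm] at this
      linarith
    have hcm := comparison_mono hβ hβ2 hl (sub_pos.2 h1) hD' (sub_nonneg.2 h2.le) hκ'
    change u t ≤ _ at hcm
    have hu0 : u 0 = D ^ 2 + β * D ^ 2 * ups (κ / (l * D)) := by simp [hu]
    rw [← hu0] at hm1
    have h5 := mul_le_mul_of_nonneg_left hup (by positivity : 0 ≤ 2 / m)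
    have h6 : s * (‖x' - x‖ + ‖y' - y‖) ≤ s * (t * g + l * θ * (t * g)) := by
      rw [hxn]; gcongr
    simp only [zero_add, zero_mul, mul_zero, ne_eq, OfNat.ofNat_ne_zero, not_false_eq_true, zero_pow,
      sub_zero]
    linarith
  have h7 : g * (2 / m * g) ≤ g * (2 * D * R + s * (1 + l * θ)) := by linarith
  have h8 := le_of_mul_le_mul_left h7 hgpos
  rw [div_mul_eq_mul_div, div_le_iff₀ hm] at h8
  linarith

end IsPLGame

/-- Minimising a function with a norm penalty over a closed set near a point where it is small. -/
lemma exists_penalised_min {X Y : Type*} [NormedAddCommGroup X] [InnerProductSpace ℝ X]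
    [FiniteDimensional ℝ X] [NormedAddCommGroup Y] [InnerProductSpace ℝ Y] [FiniteDimensional ℝ Y]
    {S : Set (X × Y)} (hS : IsClosed S) {J : X → Y → ℝ} {x₀ : X} {y₀ : Y} {s T : ℝ}
    (h₀ : (x₀, y₀) ∈ S) (hs : 0 < s) (hT : 0 < T) (hJ : ∀ x y, (x, y) ∈ S → 0 ≤ J x y)
    (hJT : J x₀ y₀ < s * T)
    (hc : ContinuousOn (fun p : X × Y => J p.1 p.2)
      (S ∩ Metric.closedBall x₀ T ×ˢ Metric.closedBall y₀ T)) :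
    ∃ x y, (x, y) ∈ S ∧ ‖x - x₀‖ + ‖y - y₀‖ < T ∧ J x y ≤ J x₀ y₀ ∧
      ∃ r, 0 < r ∧ ∀ x' y', (x', y') ∈ S → ‖x' - x‖ < r → ‖y' - y‖ < r →
        J x y ≤ J x' y' + s * (‖x' - x‖ + ‖y' - y‖) := by
  have hK : IsCompact (S ∩ Metric.closedBall x₀ T ×ˢ Metric.closedBall y₀ T) :=
    ((isCompact_closedBall x₀ T).prod (isCompact_closedBall y₀ T)).inter_left hS
  have hcont : ContinuousOn (fun p : X × Y => J p.1 p.2 + s * (‖p.1 - x₀‖ + ‖p.2 - y₀‖))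
      (S ∩ Metric.closedBall x₀ T ×ˢ Metric.closedBall y₀ T) :=
    hc.add (by fun_prop : Continuous fun p : X × Y => s * (‖p.1 - x₀‖ + ‖p.2 - y₀‖)).continuousOn
  have hmem : ((x₀, y₀) : X × Y) ∈ S ∩ Metric.closedBall x₀ T ×ˢ Metric.closedBall y₀ T :=
    ⟨h₀, Metric.mem_closedBall_self hT.le, Metric.mem_closedBall_self hT.le⟩
  obtain ⟨⟨x, y⟩, ⟨hxyS, -⟩, hmin⟩ := hK.exists_isMinOn ⟨_, hmem⟩ hcont
  have hmin0 : J x y + s * (‖x - x₀‖ + ‖y - y₀‖) ≤ J x₀ y₀ := by simpa using hmin hmem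
  have hx0 := norm_nonneg (x - x₀)
  have hy0 := norm_nonneg (y - y₀)
  have hnear : ‖x - x₀‖ + ‖y - y₀‖ < T := by
    have := hJ x y hxyS
    exact lt_of_mul_lt_mul_left (by linarith) hs.le
  have hpen : 0 ≤ s * (‖x - x₀‖ + ‖y - y₀‖) := by positivity
  refine ⟨x, y, hxyS, hnear, by linarith, T - (‖x - x₀‖ + ‖y - y₀‖), by linarith,
    fun x' y' h' hx' hy' => ?_⟩
  have hxx : ‖x' - x₀‖ ≤ ‖x' - x‖ + ‖x - x₀‖ := norm_sub_le_norm_sub_add_norm_sub _ _ _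
  have hyy : ‖y' - y₀‖ ≤ ‖y' - y‖ + ‖y - y₀‖ := norm_sub_le_norm_sub_add_norm_sub _ _ _
  have hmem' : ((x', y') : X × Y) ∈ S ∩ Metric.closedBall x₀ T ×ˢ Metric.closedBall y₀ T := by
    refine ⟨h', ?_, ?_⟩
    · rw [Metric.mem_closedBall, dist_eq_norm]
      linarith
    · rw [Metric.mem_closedBall, dist_eq_norm]
      linarith
  have h1 : J x y + s * (‖x - x₀‖ + ‖y - y₀‖) ≤ J x' y' + s * (‖x' - x₀‖ + ‖y' - y₀‖) := hmin hmem'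
  have h2 : s * (‖x' - x₀‖ + ‖y' - y₀‖) ≤
      s * (‖x' - x‖ + ‖x - x₀‖ + (‖y' - y‖ + ‖y - y₀‖)) := by gcongr
  linarith

namespace IsPLGame

variable {X Y : Type*} [NormedAddCommGroup X] [InnerProductSpace ℝ X] [FiniteDimensional ℝ X]
  [NormedAddCommGroup Y] [InnerProductSpace ℝ Y] [FiniteDimensional ℝ Y]
  {F : X → Y → ℝ} {gx : X → Y → X}
  {gy : X → Y → Y} {l m : ℝ} {Φ : X → ℝ} {Ψ : Y → ℝ} {c : ℝ}

/-- Two admissible radii satisfy the certificate, so a penalised minimiser cannot be nearly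
tight. -/
lemma false_of_nearly_tight (H : IsPLGame F gx gy l m 1 Φ Ψ c) {θ β s : ℝ} (hl : 1 < l)
    (hθ0 : 0 < θ) (hθ : θ ^ 2 = 1 - 1 / l ^ 2) (hβ0 : 0 ≤ β) (hβ : β ≤ 2 * l ^ 2 / (l ^ 2 + 2))
    {x : X} {y : Y} (h : F x y = Φ x) {D k : ℝ}
    (hD : Metric.infDist x {x | Φ x = c} = D) (hD0 : 0 < D) (hk0 : 0 < k)
    (hk : Metric.infDist y {y | Ψ y = c} = l * D * k)
    (hlow : D ^ 2 + β * D ^ 2 * ups k ≤ 2 / m * (Φ x - c))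
    (hup : 2 / m * (Φ x - c) - (D ^ 2 + β * D ^ 2 * ups k) ≤ k ^ 2 * D ^ 2 / 8192)
    (hg : ‖gx x y‖ ≤ m * (D * (1 + β * (ups k + dups k * (θ - k))) + s))
    (hs : s ≤ D * k ^ 2 / 8192) : False := by
  have hm := H.m₁_pos
  have hl0 := H.l_pos
  have hθl : l ^ 2 - 1 ≤ (l * θ) ^ 2 := by
    rw [mul_pow, hθ]
    field_simp
    exact le_rfl
  have hkθ : k ≤ θ := by
    have := H.infDist_right_le (by positivity) hθl h
    rw [hk, hD] at this
    exact le_of_mul_le_mul_left (by linarith) (by positivity : 0 < l * D)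
  have hml := H.le_of_infDist_pos (hD ▸ hD0)
  have hμ : m = m / l * l := by field_simp
  obtain ⟨σ, ω, hσ, hσ1, hω, hc, hE⟩ := certHolds hl (by positivity : 0 < m / l)
    ((div_le_one hl0).2 hml) hk0 hkθ hθ hβ0 hβ
  refine hE.not_ge (H.certE_nonneg_of_point (W := 2 * (Φ x - c) / (m * D ^ 2)) h hD hD0 hμ hk0.le hk
    ?_ ?_ ?_ ?_ hσ hσ1 hω hc)
  · field_simp
  · refine hg.trans ?_
    rw [mul_assoc]
    refine mul_le_mul_of_nonneg_left ?_ hm.le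
    linarith
  · rw [le_div_iff₀ (by positivity)]
    rw [div_mul_eq_mul_div, le_div_iff₀ hm] at hlow
    linarith
  · rw [div_le_iff₀ (by positivity)]
    have := mul_le_mul_of_nonneg_left hup hm.le
    have e : m * (2 / m * (Φ x - c) - (D ^ 2 + β * D ^ 2 * ups k)) =
      2 * (Φ x - c) - m * (D ^ 2 + β * D ^ 2 * ups k) := by field_simp
    rw [e] at this
    linarith

set_option maxHeartbeats 800000 in
lemma growth_step (H : IsPLGame F gx gy l m 1 Φ Ψ c) {θ β β' : ℝ} (hl : 1 < l)
    (hθ0 : 0 < θ) (hθ : θ ^ 2 = 1 - 1 / l ^ 2) (hβ0 : 0 ≤ β) (hβ : β ≤ 2 * l ^ 2 / (l ^ 2 + 2))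
    (hβ' : β' ≤ β + 1 / (114688 * (1 + l * θ) ^ 2)) (hG : Growth F Φ Ψ c l m β) :
    Growth F Φ Ψ c l m β' := by
  intro x₀ y₀ h₀
  by_contra! hlt
  have hl0 := H.l_pos
  have hm := H.m₁_pos
  have hθl : l ^ 2 - 1 ≤ (l * θ) ^ 2 := by
    rw [mul_pow, hθ]
    field_simp
    exact le_rfl
  have hθ1 : θ ≤ 1 := by
    have : 0 < 1 / l ^ 2 := by positivity
    nlinarith
  have hβ2 : β ≤ 2 := by
    refine hβ.trans ?_
    rw [div_le_iff₀ (by positivity)]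
    linarith
  set dX : X → ℝ := fun x => Metric.infDist x {x | Φ x = c} with hdX
  set dY : Y → ℝ := fun y => Metric.infDist y {y | Ψ y = c} with hdY
  have hdXc : Continuous dX := Metric.continuous_infDist_pt _
  have hdYc : Continuous dY := Metric.continuous_infDist_pt _
  have hdX1 : ∀ x x', |dX x - dX x'| ≤ ‖x - x'‖ := fun x x' => by
    simpa [dist_eq_norm] using (Metric.lipschitz_infDist_pt {x | Φ x = c}).dist_le_mul x x'
  have hdY1 : ∀ y y', |dY y - dY y'| ≤ ‖y - y'‖ := fun y y' => by
    simpa [dist_eq_norm] using (Metric.lipschitz_infDist_pt {y | Ψ y = c}).dist_le_mul y y'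
  set J : X → Y → ℝ := fun x y => 2 / m * (Φ x - c) -
    (dX x ^ 2 + β * dX x ^ 2 * ups (dY y / (l * dX x))) with hJ
  have hJ0 : ∀ x y, F x y = Φ x → 0 ≤ J x y := fun x y h => sub_nonneg.2 (hG x y h)
  set η := 1 / (114688 * (1 + l * θ) ^ 2) with hη
  have hη0 : 0 < η := by positivity
  set D₀ := dX x₀ with hD₀
  set κ₀ := dY y₀ with hκ₀
  have hD₀0 : 0 ≤ D₀ := Metric.infDist_nonneg
  have hκ₀0 : 0 ≤ κ₀ := Metric.infDist_nonneg
  set k₀ := κ₀ / (l * D₀) with hk₀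
  have hk₀0 : 0 ≤ k₀ := by positivity
  have hu0 := ups_nonneg hk₀0
  change 2 / m * (Φ x₀ - c) < D₀ ^ 2 + β' * D₀ ^ 2 * ups k₀ at hlt
  have hJlt : J x₀ y₀ < η * (D₀ ^ 2 * ups k₀) := by
    have h1 : (β' - β) * (D₀ ^ 2 * ups k₀) ≤ η * (D₀ ^ 2 * ups k₀) :=
      mul_le_mul_of_nonneg_right (by linarith) (by positivity)
    change 2 / m * (Φ x₀ - c) - (D₀ ^ 2 + β * D₀ ^ 2 * ups k₀) < _
    linarith
  have hprod : 0 < D₀ ^ 2 * ups k₀ :=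
    pos_of_mul_pos_right ((hJ0 x₀ y₀ h₀).trans_lt hJlt) hη0.le
  have hD₀p : 0 < D₀ := hD₀0.lt_of_ne fun h0 => by rw [← h0] at hprod; simp at hprod
  have hk₀p : 0 < k₀ := hk₀0.lt_of_ne fun h0 => by rw [← h0, ups_zero] at hprod; simp at hprod
  have hκk₀ : κ₀ = l * D₀ * k₀ := by rw [hk₀]; field_simp
  have hκ₀p : 0 < κ₀ := by rw [hκk₀]; positivity
  have hκD : κ₀ ≤ l * θ * D₀ := H.infDist_right_le (by positivity) hθl h₀
  have hk₀1 : k₀ ≤ 1 := by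
    refine le_trans ?_ hθ1
    rw [hκk₀] at hκD
    exact le_of_mul_le_mul_left (by linarith) (by positivity : 0 < l * D₀)
  have hu3 := ups_upper hk₀0 hk₀1
  set T := κ₀ / (2 * (1 + l * θ)) with hT
  have hT0 : 0 < T := by positivity
  have hlθ : 0 < l * θ := by positivity
  have hTD : T ≤ D₀ / 2 := by
    rw [hT, div_le_iff₀ (by positivity)]
    linarith
  have hTκ : T ≤ κ₀ / 2 := by
    rw [hT]
    gcongr
    linarith
  set s := η * (D₀ ^ 2 * ups k₀) / T with hs
  have hs0 : 0 < s := by positivity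
  have hsT : s * T = η * (D₀ ^ 2 * ups k₀) := by rw [hs]; field_simp
  have hDK : ∀ x, ‖x - x₀‖ ≤ T → D₀ / 2 ≤ dX x ∧ dX x ≤ 3 / 2 * D₀ := fun x hx => by
    have := abs_le.1 (hdX1 x x₀)
    constructor <;> linarith
  have hSc : IsClosed {p : X × Y | F p.1 p.2 = Φ p.1} :=
    isClosed_eq H.cont (H.continuous_max.comp continuous_fst)
  have hcont : ContinuousOn (fun p : X × Y => J p.1 p.2)
      ({p : X × Y | F p.1 p.2 = Φ p.1} ∩ Metric.closedBall x₀ T ×ˢ Metric.closedBall y₀ T) := by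
    have c1 : Continuous fun p : X × Y => dX p.1 := hdXc.comp continuous_fst
    have c2 : Continuous fun p : X × Y => dY p.2 := hdYc.comp continuous_snd
    have c3 : Continuous fun p : X × Y => Φ p.1 := H.continuous_max.comp continuous_fst
    have c4 : ContinuousOn (fun p : X × Y => dY p.2 / (l * dX p.1))
        ({p : X × Y | F p.1 p.2 = Φ p.1} ∩ Metric.closedBall x₀ T ×ˢ Metric.closedBall y₀ T) := by
      refine c2.continuousOn.div (continuous_const.mul c1).continuousOn fun p hp => ?_
      have := (hDK p.1 (by simpa [dist_eq_norm] using hp.2.1)).1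
      have : 0 < dX p.1 := by linarith
      positivity
    have c5 := continuous_ups.comp_continuousOn c4
    exact (continuous_const.mul (c3.sub continuous_const)).continuousOn.sub
      ((c1.pow 2).continuousOn.add ((continuous_const.mul (c1.pow 2)).continuousOn.mul c5))
  obtain ⟨x, y, hxyF, hnear, hJxy0, r, hr, hmin⟩ := exists_penalised_min hSc h₀ hs0 hT0 hJ0
    (by rw [hsT]; exact hJlt) hcont
  have hx0 := norm_nonneg (x - x₀)
  have hy0 := norm_nonneg (y - y₀)
  obtain ⟨hD1, hD2⟩ := hDK x (by linarith)
  have hκ1 : κ₀ / 2 ≤ dY y := by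
    have := abs_le.1 (hdY1 y y₀)
    linarith
  have hDp : 0 < dX x := by linarith
  have hκp : 0 < dY y := by linarith
  have hg := H.norm_gx_le_of_min (s := s) (β := β) hθ0.le hθl hβ0 hβ2 hs0.le hr hxyF hDp hκp hmin
  set D := dX x with hD
  change ‖gx x y‖ ≤ m * (D * (1 + β * (ups (dY y / (l * D)) + dups (dY y / (l * D)) *
    (θ - dY y / (l * D)))) + s * (1 + l * θ) / 2) at hg
  have hJxy : J x y = 2 / m * (Φ x - c) - (D ^ 2 + β * D ^ 2 * ups (dY y / (l * D))) := rfl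
  set k := dY y / (l * D) with hk
  have hκk : dY y = l * D * k := by rw [hk]; field_simp
  have hk0 : 0 < k := by positivity
  have hkD : D₀ * k₀ / 2 ≤ D * k := by
    rw [hκk, hκk₀] at hκ1
    exact le_of_mul_le_mul_left (by linarith) hl0
  have hkD2 : (D₀ * k₀ / 2) ^ 2 ≤ (D * k) ^ 2 := by gcongr
  have hup0 : D₀ ^ 2 * ups k₀ ≤ 9 / 4 * (D₀ ^ 2 * k₀ ^ 3) := by
    have := mul_le_mul_of_nonneg_left hu3 (sq_nonneg D₀)
    linarith
  have hlow := hJ0 x y hxyF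
  rw [hJxy] at hlow
  refine H.false_of_nearly_tight hl hθ0 hθ hβ0 hβ hxyF (D := D) rfl hDp hk0 hκk (by linarith) ?_
    hg ?_
  · rw [← hJxy]
    have h1 : J x y ≤ η * (D₀ ^ 2 * ups k₀) := hJxy0.trans hJlt.le
    have h2 : η ≤ 1 / 114688 := by
      rw [hη]
      refine one_div_le_one_div_of_le (by norm_num) ?_
      nlinarith
    have h3 : k₀ ^ 3 ≤ k₀ ^ 2 := pow_le_pow_of_le_one hk₀0 hk₀1 (by norm_num)
    have h4 : D₀ ^ 2 * k₀ ^ 3 ≤ D₀ ^ 2 * k₀ ^ 2 := by gcongr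
    have h5 : η * (D₀ ^ 2 * ups k₀) ≤ 1 / 114688 * (D₀ ^ 2 * ups k₀) := by gcongr
    linarith [sq_nonneg (D₀ * k₀)]
  · have h1 : s * (1 + l * θ) / 2 = D₀ ^ 2 * ups k₀ / (114688 * κ₀) := by
      rw [hs, hη, hT]
      field_simp
    have h2 : D₀ ^ 2 * ups k₀ / (114688 * κ₀) ≤ 9 / 458752 * (D₀ * k₀ ^ 2) := by
      rw [div_le_iff₀ (by positivity), hκk₀]
      have : D₀ ^ 2 * k₀ ^ 3 * 1 ≤ D₀ ^ 2 * k₀ ^ 3 * l := by gcongr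
      linarith
    rw [h1]
    refine h2.trans ?_
    refine le_of_mul_le_mul_left ?_ hDp
    have h3 : D * (D₀ * k₀ ^ 2) ≤ 3 / 2 * D₀ * (D₀ * k₀ ^ 2) := by gcongr
    linarith [sq_nonneg (D₀ * k₀)]

lemma growth_max (H : IsPLGame F gx gy l m 1 Φ Ψ c) (hl : 1 < l) :
    Growth F Φ Ψ c l m (2 * l ^ 2 / (l ^ 2 + 2)) := by
  have hl0 := H.l_pos
  have h1 : 0 < 1 - 1 / l ^ 2 := by
    rw [sub_pos, div_lt_one (by positivity)]
    nlinarith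
  have hθ0 := Real.sqrt_pos.2 h1
  have hθ := Real.sq_sqrt h1.le
  generalize √(1 - 1 / l ^ 2) = θ at hθ0 hθ
  set η := 1 / (114688 * (1 + l * θ) ^ 2) with hη
  have hη0 : 0 < η := by positivity
  set B := 2 * l ^ 2 / (l ^ 2 + 2) with hB
  have hB0 : 0 ≤ B := by positivity
  have key : ∀ n : ℕ, Growth F Φ Ψ c l m (min (n * η) B) := by
    intro n
    induction n with
    | zero => simpa [hB0] using H.growth_zero
    | succ n ih =>
      refine H.growth_step hl hθ0 hθ (by positivity) (min_le_right _ _) ?_ ih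
      push_cast
      rcases le_total (n * η) B with h | h
      · rw [min_eq_left h]
        exact (min_le_left _ _).trans (by linarith)
      · rw [min_eq_right h]
        exact (min_le_right _ _).trans (by linarith)
  obtain ⟨n, hn⟩ := exists_nat_ge (B / η)
  have := key n
  rwa [min_eq_right ((div_le_iff₀ hη0).1 hn)] at this

end IsPLGame

namespace IsPLGame

variable {X Y : Type*} [NormedAddCommGroup X] [InnerProductSpace ℝ X]
  [NormedAddCommGroup Y] [InnerProductSpace ℝ Y] [FiniteDimensional ℝ X] [FiniteDimensional ℝ Y]
  {F : X → Y → ℝ} {gx : X → Y → X} {gy : X → Y → Y} {l m : ℝ} {Φ : X → ℝ} {Ψ : Y → ℝ} {c : ℝ}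

lemma infDist_sq_add_le (H : IsPLGame F gx gy l m 1 Φ Ψ c) {x : X} {y : Y} (h : F x y = Φ x) :
    Metric.infDist x {x | Φ x = c} ^ 2 + 2 * Metric.infDist y {y | Ψ y = c} ^ 2 ≤
      (2 + l ^ 2) / m * (Φ x - c) := by
  have hl0 := H.l_pos
  have hm := H.m₁_pos
  have hgr := H.max_growth x
  have hδ : 0 ≤ Φ x - c := sub_nonneg.2 (H.val_le x)
  have hD0 : 0 ≤ Metric.infDist x {x | Φ x = c} := Metric.infDist_nonneg
  have hκ0 : 0 ≤ Metric.infDist y {y | Ψ y = c} := Metric.infDist_nonneg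
  have hD := H.infDist_right_le (Λ := 0) le_rfl (x := x) (y := y) (h := h)
  have hDl := H.infDist_right_le (Λ := l) hl0.le (by linarith) h
  have hG := fun hl => H.growth_max hl x y h
  generalize Metric.infDist x {x | Φ x = c} = D at *
  generalize Metric.infDist y {y | Ψ y = c} = κ at *
  have hsplit : (2 + l ^ 2) / m * (Φ x - c) = (2 + l ^ 2) / 2 * (2 / m * (Φ x - c)) := by
    field_simp
  have hbase : D ^ 2 ≤ 2 / m * (Φ x - c) := by
    rw [div_mul_eq_mul_div, le_div_iff₀ hm]
    linarith
  have hr : 0 ≤ 2 / m * (Φ x - c) := by positivity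
  rw [hsplit]
  generalize 2 / m * (Φ x - c) = r at *
  rcases le_or_gt l 1 with hl | hl
  · have hκ : κ = 0 := le_antisymm (by simpa using hD (by nlinarith)) hκ0
    rw [hκ]
    nlinarith [mul_nonneg (sq_nonneg l) hr]
  · rcases hD0.eq_or_lt with hD0 | hD0
    · have hκ : κ = 0 := le_antisymm (by simpa [← hD0] using hDl) hκ0
      rw [hκ, ← hD0]
      nlinarith [mul_nonneg (sq_nonneg l) hr]
    · have h1 := hG hl
      have h2 := mul_le_mul_of_nonneg_left (ups_lower (k := κ / (l * D)) (by positivity))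
        (by positivity : 0 ≤ 2 * l ^ 2 / (l ^ 2 + 2) * D ^ 2)
      have h3 : D ^ 2 + 2 * l ^ 2 / (l ^ 2 + 2) * D ^ 2 * (2 * (κ / (l * D)) ^ 2 - 1 / 2) =
          2 / (2 + l ^ 2) * (D ^ 2 + 2 * κ ^ 2) := by
        field_simp
        ring
      have h4 : 2 / (2 + l ^ 2) * (D ^ 2 + 2 * κ ^ 2) ≤ r := by linarith
      rw [div_mul_eq_mul_div, div_le_iff₀ (by positivity)] at h4
      linarith

lemma exists_saddle_near (H : IsPLGame F gx gy l m 1 Φ Ψ c) (x : X) (y : Y) :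
    ∃ xs ys, Φ xs = c ∧ Ψ ys = c ∧ ‖x - xs‖ ^ 2 + ‖y - ys‖ ^ 2 ≤
      (2 + l ^ 2) / m * (Φ x - c) + 4 * (Φ x - F x y) := by
  obtain ⟨y', h, hd, -⟩ := H.exists_nearest_argmax x y
  obtain ⟨xs, hxs, hx⟩ := H.exists_nearest_left x
  obtain ⟨ys, hys, hy⟩ := H.exists_nearest_right y'
  have hk := H.infDist_sq_add_le h
  refine ⟨xs, ys, hxs, hys, ?_⟩
  rw [← hx, ← hy] at hk
  have htri : ‖y - ys‖ ≤ ‖y - y'‖ + ‖y' - ys‖ := norm_sub_le_norm_sub_add_norm_sub _ _ _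
  nlinarith [norm_nonneg (y - ys), sq_nonneg (‖y - y'‖ - ‖y' - ys‖),
    pow_le_pow_left₀ (norm_nonneg (y - ys)) htri 2]

end IsPLGame

section Smoothness

variable {X Y : Type*} [NormedAddCommGroup X] [InnerProductSpace ℝ X] [CompleteSpace X]
  [NormedAddCommGroup Y] [InnerProductSpace ℝ Y] [CompleteSpace Y] {F : X → Y → ℝ}

lemma fderiv_uncurry_apply (hF : Differentiable ℝ fun p : X × Y => F p.1 p.2) (x : X) (y : Y)
    (u : X) (v : Y) : fderiv ℝ (fun p : X × Y => F p.1 p.2) (x, y) (u, v) =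
      ⟪gradient (fun x' => F x' y) x, u⟫ + ⟪gradient (fun y' => F x y') y, v⟫ := by
  have hp := (hF (x, y)).hasFDerivAt
  have h1 : HasFDerivAt (fun x' => F x' y) _ x :=
    hp.comp (f := fun x' : X => (x', y)) x (hasFDerivAt_prodMk_left x y)
  have h2 : HasFDerivAt (fun y' => F x y') _ y :=
    hp.comp (f := fun y' : Y => (x, y')) y (hasFDerivAt_prodMk_right x y)
  rw [gradient, gradient, InnerProductSpace.toDual_symm_apply, InnerProductSpace.toDual_symm_apply,
    h1.fderiv, h2.fderiv]
  simp [← map_add]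

lemma abs_sub_gradient_le {l : ℝ} (hl : 0 ≤ l) (hF : Differentiable ℝ fun p : X × Y => F p.1 p.2)
    (hlip : ∀ x₁ y₁ x₂ y₂,
      ‖gradient (fun x' => F x' y₁) x₁ - gradient (fun x' => F x' y₂) x₂‖ ^ 2 +
          ‖gradient (fun y' => F x₁ y') y₁ - gradient (fun y' => F x₂ y') y₂‖ ^ 2
        ≤ l ^ 2 * (‖x₁ - x₂‖ ^ 2 + ‖y₁ - y₂‖ ^ 2)) (x : X) (y : Y) (x' : X) (y' : Y) :
    |F x' y' - F x y - ⟪gradient (fun x' => F x' y) x, x' - x⟫ -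
      ⟪gradient (fun y' => F x y') y, y' - y⟫| ≤ l / 2 * (‖x' - x‖ ^ 2 + ‖y' - y‖ ^ 2) := by
  obtain ⟨u, rfl⟩ : ∃ u, x' = x + u := ⟨x' - x, by abel⟩
  obtain ⟨v, rfl⟩ : ∃ v, y' = y + v := ⟨y' - y, by abel⟩
  simp only [add_sub_cancel_left]
  have hline : ∀ t : ℝ, HasDerivAt (fun t : ℝ => (x + t • u, y + t • v)) (u, v) t := fun t =>
    HasDerivAt.prodMk (by simpa using ((hasDerivAt_id t).smul_const u).const_add x)
      (by simpa using ((hasDerivAt_id t).smul_const v).const_add y)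
  have hder : ∀ t : ℝ, HasDerivAt (fun t : ℝ => F (x + t • u) (y + t • v))
      (⟪gradient (fun x' => F x' (y + t • v)) (x + t • u), u⟫ +
        ⟪gradient (fun y' => F (x + t • u) y') (y + t • v), v⟫) t := fun t => by
    rw [← fderiv_uncurry_apply hF]
    exact (hF (x + t • u, y + t • v)).hasFDerivAt.comp_hasDerivAt t (hline t)
  set A := gradient (fun x' => F x' y) x
  set B := gradient (fun y' => F x y') y
  have hder' : ∀ t : ℝ, HasDerivAt
      (fun t : ℝ => F (x + t • u) (y + t • v) - F x y - t * (⟪A, u⟫ + ⟪B, v⟫)) _ t := fun t =>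
    ((hder t).sub_const (F x y)).sub ((hasDerivAt_id t).mul_const (⟪A, u⟫ + ⟪B, v⟫))
  have hB : ∀ t : ℝ, HasDerivAt (fun t : ℝ => l / 2 * (‖u‖ ^ 2 + ‖v‖ ^ 2) * t ^ 2)
      (l * t * (‖u‖ ^ 2 + ‖v‖ ^ 2)) t := fun t => by
    refine ((hasDerivAt_pow 2 t).const_mul (l / 2 * (‖u‖ ^ 2 + ‖v‖ ^ 2))).congr_deriv ?_
    norm_num
    ring
  have key := image_norm_le_of_norm_deriv_right_le_deriv_boundary (a := 0) (b := 1)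
    (fun t _ => (hder' t).continuousAt.continuousWithinAt) (fun t _ => (hder' t).hasDerivWithinAt)
    (by simp) hB (fun t ht => ?_) (Set.right_mem_Icc.2 zero_le_one)
  · simpa [sub_sub, add_assoc] using key
  · have h := hlip (x + t • u) (y + t • v) x y
    rw [Real.norm_eq_abs, one_mul, add_sub_add_comm, ← inner_sub_left, ← inner_sub_left]
    simp only [add_sub_cancel_left, norm_smul, mul_pow, Real.norm_eq_abs, sq_abs] at h
    refine (abs_add_le _ _).trans ((add_le_add (abs_real_inner_le_norm _ _)
      (abs_real_inner_le_norm _ _)).trans ?_)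
    have ht := ht.1
    refine abs_le_of_sq_le_sq' ?_ (by positivity) |>.2
    generalize ‖gradient (fun x' => F x' (y + t • v)) (x + t • u) - A‖ = a at *
    generalize ‖gradient (fun y' => F (x + t • u) y') (y + t • v) - B‖ = b at *
    nlinarith [sq_nonneg (a * ‖v‖ - b * ‖u‖),
      mul_le_mul_of_nonneg_right h (by positivity : 0 ≤ ‖u‖ ^ 2 + ‖v‖ ^ 2)]

end Smoothness

lemma IsPLGame.div {X Y : Type*} [NormedAddCommGroup X] [InnerProductSpace ℝ X]
    [NormedAddCommGroup Y] [InnerProductSpace ℝ Y] {F : X → Y → ℝ} {gx : X → Y → X}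
    {gy : X → Y → Y} {l m₁ m₂ : ℝ} {Φ : X → ℝ} {Ψ : Y → ℝ} {c a : ℝ} (ha : 0 < a)
    (H : IsPLGame F gx gy l m₁ m₂ Φ Ψ c) :
    IsPLGame (fun x y => F x y / a) (fun x y => a⁻¹ • gx x y) (fun x y => a⁻¹ • gy x y)
      (l / a) (m₁ / a) (m₂ / a) (fun x => Φ x / a) (fun y => Ψ y / a) (c / a) where
  l_pos := div_pos H.l_pos ha
  m₁_pos := div_pos H.m₁_pos ha
  m₂_pos := div_pos H.m₂_pos ha
  cont := H.cont.div_const a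
  smooth x y x' y' := by
    have h := div_le_div_of_nonneg_right (H.smooth x y x' y') ha.le
    rw [← abs_of_pos ha, ← abs_div, abs_of_pos ha] at h
    simp only [inner_smul_left, RCLike.conj_to_real]
    refine Eq.trans_le (congrArg abs ?_) (h.trans_eq ?_) <;> ring
  lip x₁ y₁ x₂ y₂ := by
    have h := mul_le_mul_of_nonneg_left (H.lip x₁ y₁ x₂ y₂) (sq_nonneg a⁻¹)
    rw [← smul_sub, ← smul_sub, norm_smul, norm_smul, mul_pow, mul_pow, Real.norm_eq_abs, sq_abs,
      ← mul_add]
    exact h.trans_eq (by ring)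
  le_max x y := div_le_div_of_nonneg_right (H.le_max x y) ha.le
  max_att x := (H.max_att x).imp fun _ h => congrArg (· / a) h
  min_le x y := div_le_div_of_nonneg_right (H.min_le x y) ha.le
  min_att y := (H.min_att y).imp fun _ h => congrArg (· / a) h
  val_le x := div_le_div_of_nonneg_right (H.val_le x) ha.le
  le_val y := div_le_div_of_nonneg_right (H.le_val y) ha.le
  val_att := H.val_att.imp fun _ h => congrArg (· / a) h
  val_att' := H.val_att'.imp fun _ h => congrArg (· / a) h
  pl₁ x y := by
    have h := mul_le_mul_of_nonneg_left (H.pl₁ x y) (sq_nonneg a⁻¹)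
    rw [norm_smul, mul_pow, Real.norm_eq_abs, sq_abs]
    refine Eq.trans_le ?_ h
    ring
  pl₂ x y := by
    have h := mul_le_mul_of_nonneg_left (H.pl₂ x y) (sq_nonneg a⁻¹)
    rw [norm_smul, mul_pow, Real.norm_eq_abs, sq_abs]
    refine Eq.trans_le ?_ h
    ring

/-- Distance to the saddle-point set bounded by the Lyapunov function: for an `l`-smooth
two-sided PL function `F` with nonempty saddle set `Z*`,
`dist(z, Z*)² ≤ max{(2/μ₁)(l²/(2μ₂²) + 1), 4/(λμ₂)}·V_λ(z)` for every `z` and `λ > 0`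
(the squared distance is expressed as the infimum of `‖x − x*‖² + ‖y − y*‖²` over
saddle points `(x*, y*)`, i.e. the squared Euclidean product distance). -/
theorem stmt_17
    {E G : Type*} [NormedAddCommGroup E] [InnerProductSpace ℝ E] [FiniteDimensional ℝ E]
    [NormedAddCommGroup G] [InnerProductSpace ℝ G] [FiniteDimensional ℝ G]
    (F : E → G → ℝ) (l μ₁ μ₂ : ℝ) (hl : 0 < l) (hμ₁ : 0 < μ₁) (hμ₂ : 0 < μ₂)
    (hdiff : Differentiable ℝ (fun p : E × G => F p.1 p.2))
    (hlip : ∀ (x₁ : E) (y₁ : G) (x₂ : E) (y₂ : G),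
      ‖gradient (fun x' => F x' y₁) x₁ - gradient (fun x' => F x' y₂) x₂‖ ^ 2 +
          ‖gradient (fun y' => F x₁ y') y₁ - gradient (fun y' => F x₂ y') y₂‖ ^ 2
        ≤ l ^ 2 * (‖x₁ - x₂‖ ^ 2 + ‖y₁ - y₂‖ ^ 2))
    (Φ : E → ℝ) (hΦub : ∀ x y, F x y ≤ Φ x) (hΦatt : ∀ x, ∃ y, F x y = Φ x)
    (Ψ : G → ℝ) (hΨlb : ∀ x y, Ψ y ≤ F x y) (hΨatt : ∀ y, ∃ x, F x y = Ψ y)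
    (Φs : ℝ) (hΦslb : ∀ x, Φs ≤ Φ x) (hΦsatt : ∃ x, Φ x = Φs)
    (hPL1 : ∀ x y, ‖gradient (fun x' => F x' y) x‖ ^ 2 ≥ 2 * μ₁ * (F x y - Ψ y))
    (hPL2 : ∀ x y, ‖gradient (fun y' => F x y') y‖ ^ 2 ≥ 2 * μ₂ * (Φ x - F x y))
    (hsaddle : ∃ (xs : E) (ys : G), ∀ (x : E) (y : G), F xs y ≤ F xs ys ∧ F xs ys ≤ F x ys) :
    ∀ (x : E) (y : G) (lam : ℝ), 0 < lam →
      sInf {r : ℝ | ∃ (xs : E) (ys : G),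
          (∀ (x' : E) (y' : G), F xs y' ≤ F xs ys ∧ F xs ys ≤ F x' ys) ∧
          r = ‖x - xs‖ ^ 2 + ‖y - ys‖ ^ 2}
        ≤ max ((2 / μ₁) * (l ^ 2 / (2 * μ₂ ^ 2) + 1)) (4 / (lam * μ₂)) *
            ((Φ x - Φs) + lam * (Φ x - F x y)) := by
  intro x y lam hlam
  have H : IsPLGame F (fun x y => gradient (fun x' => F x' y) x)
      (fun x y => gradient (fun y' => F x y') y) l μ₁ μ₂ Φ Ψ Φs := by
    obtain ⟨xs, ys, hs⟩ := hsaddle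
    have hΦ : Φ xs = F xs ys := by
      obtain ⟨y', hy'⟩ := hΦatt xs
      exact le_antisymm (hy' ▸ (hs xs y').1) (hΦub xs ys)
    have hΨ : Ψ ys = F xs ys := by
      obtain ⟨x', hx'⟩ := hΨatt ys
      exact le_antisymm (hΨlb xs ys) (hx' ▸ (hs x' ys).2)
    have hc : Φs = F xs ys := by
      obtain ⟨x', hx'⟩ := hΦsatt
      exact le_antisymm (hΦ ▸ hΦslb xs) (hx' ▸ (hs x' ys).2.trans (hΦub x' ys))
    exact
      { l_pos := hl
        m₁_pos := hμ₁
        m₂_pos := hμ₂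
        cont := hdiff.continuous
        smooth := abs_sub_gradient_le hl.le hdiff hlip
        lip := hlip
        le_max := hΦub
        max_att := hΦatt
        min_le := hΨlb
        min_att := hΨatt
        val_le := hΦslb
        le_val := fun y => (hΨlb xs y).trans (hc ▸ (hs xs y).1)
        val_att := hΦsatt
        val_att' := ⟨ys, hΨ.trans hc.symm⟩
        pl₁ := hPL1
        pl₂ := hPL2 }
  have H' := H.div hμ₂
  rw [div_self hμ₂.ne'] at H'
  obtain ⟨xs, ys, hxs, hys, hd⟩ := H'.exists_saddle_near x y
  rw [div_left_inj' hμ₂.ne'] at hxs hys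
  have hF := H.apply_eq hxs hys
  refine le_trans (csInf_le ⟨0, ?_⟩ ⟨xs, ys, fun x' y' => ⟨?_, ?_⟩, rfl⟩) ?_
  · rintro r ⟨xs, ys, -, rfl⟩
    positivity
  · rw [hF, ← hxs]
    exact hΦub xs y'
  · rw [hF, ← hys]
    exact hΨlb x' ys
  · have hδ : 0 ≤ Φ x - Φs := sub_nonneg.2 (hΦslb x)
    have hη : 0 ≤ lam * (Φ x - F x y) := mul_nonneg hlam.le (sub_nonneg.2 (hΦub x y))
    rw [mul_add]
    refine hd.trans (le_trans (le_of_eq ?_) (add_le_add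
      (mul_le_mul_of_nonneg_right (le_max_left _ _) hδ)
      (mul_le_mul_of_nonneg_right (le_max_right _ _) hη)))
    field_simp
    ring
end
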